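/- Let q ≡ 1 (mod 6) be a fixed prime power. As g → ∞, (1/|𝔥(3g)|) ∑_{χ∈𝔥(3g)} L(1/3, χ) is asymptotic to C_q·g, where C_q = ∏_P (1 − (|P|(|P|+1))^{−1}), the product running over monic irreducibles P. -/

import Mathlib

open Polynomial Finset Filter
open scoped Classical

noncomputable section

/-- The monic polynomial `X^n + ∑_{i<n} c i · X^i`; as `c` ranges over `Fin n → Fq`
this parametrizes the monic polynomials of degree `n` over `Fq`. -/
def monicOf {Fq : Type} [Field Fq] (n : ℕ) (c : Fin n → Fq) : Polynomial Fq :=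
  X ^ n + ∑ i : Fin n, C (c i) * X ^ (i : ℕ)

/-- Sum of `φ` over the monic polynomials of degree `n` in `Fq[T]`. -/
def sumMonic {Fq : Type} [Field Fq] [Fintype Fq] (n : ℕ) (φ : Polynomial Fq → ℂ) : ℂ :=
  ∑ c : Fin n → Fq, φ (monicOf n c)

/-- Sum of `φ` over the squarefree monic polynomials of degree `n` in `Fq[T]`. -/
def sumSqfree {Fq : Type} [Field Fq] [Fintype Fq] (n : ℕ) (φ : Polynomial Fq → ℂ) : ℂ :=
  ∑ c : Fin n → Fq, if Squarefree (monicOf n c) then φ (monicOf n c) else 0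

/-- `L(s,χ) = ∑_{F monic} χ(F)|F|^{-s}`, grouped by degree.  For the characters in this
paper the coefficient sums vanish in large degree, so this is a finite sum giving the
analytic continuation of the Dirichlet series. -/
def Lval {Fq : Type} [Field Fq] [Fintype Fq] (q : ℕ) (s : ℝ) (χ : Polynomial Fq → ℂ) : ℂ :=
  ∑' n : ℕ, sumMonic n χ * ((q : ℝ) ^ (-s * (n : ℝ)) : ℝ)

/-- `𝓛(u,χ) = ∑_{F monic} χ(F) u^{deg F}`, grouped by degree. -/
def Lu {Fq : Type} [Field Fq] [Fintype Fq] (u : ℂ) (χ : Polynomial Fq → ℂ) : ℂ :=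
  ∑' n : ℕ, sumMonic n χ * u ^ n

/-- `chi` is the family of cubic residue symbols `chi F = χ_F` on `Fq[T]` determined by the
isomorphism `Ω` from the cube roots of unity of `Fq^*` to `μ₃ ⊂ ℂ^*`. -/
structure IsCubicSymbol (q : ℕ) {Fq : Type} [Field Fq] [Fintype Fq]
    (Ω : Fq → ℂ) (chi : Polynomial Fq → Polynomial Fq → ℂ) : Prop where
  omega_mul : ∀ a b : Fq, a ^ 3 = 1 → b ^ 3 = 1 → Ω (a * b) = Ω a * Ω b
  omega_cube : ∀ a : Fq, a ^ 3 = 1 → (Ω a) ^ 3 = 1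
  omega_inj : ∀ a b : Fq, a ^ 3 = 1 → b ^ 3 = 1 → Ω a = Ω b → a = b
  omega_surj : ∀ z : ℂ, z ^ 3 = 1 → ∃ a : Fq, a ^ 3 = 1 ∧ Ω a = z
  chi_one : ∀ a : Polynomial Fq, chi 1 a = 1
  chi_mul_left : ∀ F G a : Polynomial Fq, F.Monic → G.Monic →
    chi (F * G) a = chi F a * chi G a
  chi_prime_dvd : ∀ P a : Polynomial Fq, P.Monic → Irreducible P → P ∣ a → chi P a = 0
  chi_prime_not_dvd : ∀ P a : Polynomial Fq, P.Monic → Irreducible P → ¬ P ∣ a →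
    ∃ c : Fq, c ^ 3 = 1 ∧ Ω c = chi P a ∧ P ∣ (a ^ ((q ^ P.natDegree - 1) / 3) - C c)

/-- The monic irreducible polynomials over `Fq`. -/
def MonicIrred (Fq : Type) [Field Fq] : Type := {P : Polynomial Fq // P.Monic ∧ Irreducible P}

/-- `|P| = q^{deg P}` as a real number. -/
def normP {Fq : Type} [Field Fq] (q : ℕ) (P : MonicIrred Fq) : ℝ := (q : ℝ) ^ P.1.natDegree

/-- `C_q = ∏_P (1 - 1/(|P|(|P|+1)))`. -/
def Cq (q : ℕ) (Fq : Type) [Field Fq] : ℝ :=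
  ∏' P : MonicIrred Fq, (1 - (normP q P * (normP q P + 1))⁻¹)

/-- `M_q(s) = ζ_q(3s) ∏_P (1 - |P|^{-3s}/(|P|+1))`. -/
def Mq (q : ℕ) (Fq : Type) [Field Fq] (s : ℝ) : ℝ :=
  (1 - (q : ℝ) ^ (1 - 3 * s))⁻¹ *
    ∏' P : MonicIrred Fq, (1 - (normP q P) ^ (-3 * s) * (normP q P + 1)⁻¹)

/-!
For monic `F`, the symbol `χ_F(f)` is a cubic character of the resultant of `F` and `f`, so it is
symmetric in monic arguments. Fix `deg F = N` with `3 ∤ N` and `deg f = n = N - j`, and sieve the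
squarefree `F` by `∑_{D² ∣ F} μ(D)`.

* If `2 deg D ≤ j`, the cofactor `F / D²` runs over complete residue systems modulo `f`, so only the
  cubes `f = k³` contribute. With `l = deg k`, the sum over `D` tends, after normalization, to the
  mean over `k` of `∏_{P ∣ k} (1 + 1 / |P|)⁻¹`, and this mean tends to `C_q` as `l → ∞`.
* If `2 deg D > j`, Poisson summation in `f` leads to averages of cubic Gauss sums over the moduli
  of degree `m`. Reciprocity gives these averages a linear recurrence, under which
  `m ↦ m + 3` multiplies them by `q ^ 4`: they grow like `q ^ (4m / 3)`, against the trivial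
  `q ^ (3m / 2)`.

The resulting errors decay geometrically in `j`, so they sum to `O(1)` and the `g + 1` main terms,
one for each `l ≤ g`, give `C_q g`.
-/

section DegreeLT

variable {R : Type*} [CommRing R]

section Fintype

variable [Fintype R]

/-- The finite set of polynomials of degree less than `n` over a finite ring, a set of
representatives for the residues modulo a monic polynomial of degree `n`. -/
def degreeLTFinset (R : Type*) [CommRing R] [Fintype R] (n : ℕ) : Finset R[X] :=
  univ.map ⟨ofFn n, injective_ofFn n⟩

/-- The finite set of monic polynomials of degree `n` over a finite ring. -/
def monicsOfDegree (R : Type*) [CommRing R] [Fintype R] (n : ℕ) : Finset R[X] :=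
  (degreeLTFinset R n).map (addLeftEmbedding (X ^ n))

lemma mem_degreeLTFinset {n : ℕ} {x : R[X]} : x ∈ degreeLTFinset R n ↔ x.degree < n := by
  simp only [degreeLTFinset, Finset.mem_map, mem_univ, Function.Embedding.coeFn_mk, true_and]
  constructor
  · rintro ⟨c, rfl⟩
    exact ofFn_degree_lt c
  · intro h
    refine ⟨fun i ↦ x.coeff i, ext fun i ↦ ?_⟩
    rcases lt_or_ge i n with hi | hi
    · rw [ofFn_coeff_eq_val_of_lt _ hi]
    · rw [ofFn_coeff_eq_zero_of_ge _ hi, (degree_lt_iff_coeff_zero x n).1 h i hi]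

lemma degreeLTFinset_zero : degreeLTFinset R 0 = {0} := by
  ext x
  simp [mem_degreeLTFinset]

lemma add_mem_degreeLTFinset {n : ℕ} {a b : R[X]} (ha : a ∈ degreeLTFinset R n)
    (hb : b ∈ degreeLTFinset R n) : a + b ∈ degreeLTFinset R n := by
  rw [mem_degreeLTFinset, ← mem_degreeLT] at *
  exact add_mem ha hb

lemma sub_mem_degreeLTFinset {n : ℕ} {a b : R[X]} (ha : a ∈ degreeLTFinset R n)
    (hb : b ∈ degreeLTFinset R n) : a - b ∈ degreeLTFinset R n := by
  rw [mem_degreeLTFinset, ← mem_degreeLT] at *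
  exact sub_mem ha hb

lemma degreeLTFinset_mono {m n : ℕ} (h : m ≤ n) : degreeLTFinset R m ⊆ degreeLTFinset R n :=
  fun _ ha ↦ mem_degreeLTFinset.2 ((mem_degreeLTFinset.1 ha).trans_le (by exact_mod_cast h))

lemma card_degreeLTFinset (n : ℕ) : (degreeLTFinset R n).card = Fintype.card R ^ n := by
  simp [degreeLTFinset]

lemma mem_monicsOfDegree [Nontrivial R] {n : ℕ} {f : R[X]} :
    f ∈ monicsOfDegree R n ↔ f.Monic ∧ f.natDegree = n := by
  simp only [monicsOfDegree, Finset.mem_map, mem_degreeLTFinset, addLeftEmbedding_apply]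
  constructor
  · rintro ⟨g, hg, rfl⟩
    refine ⟨monic_X_pow_add hg, ?_⟩
    rw [natDegree_add_eq_left_of_degree_lt, natDegree_X_pow]
    rwa [degree_X_pow]
  · rintro ⟨hf, rfl⟩
    refine ⟨f - X ^ f.natDegree, ?_, by ring⟩
    rw [← degree_eq_natDegree hf.ne_zero]
    refine degree_sub_lt_left ?_ hf.ne_zero ?_
    · rw [degree_X_pow, degree_eq_natDegree hf.ne_zero]
    · rw [leadingCoeff_X_pow, hf.leadingCoeff]

lemma card_monicsOfDegree (n : ℕ) : (monicsOfDegree R n).card = Fintype.card R ^ n := by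
  rw [monicsOfDegree, card_map, card_degreeLTFinset]

lemma sum_monicsOfDegree {M : Type*} [AddCommMonoid M] (n : ℕ) (φ : R[X] → M) :
    ∑ f ∈ monicsOfDegree R n, φ f = ∑ g ∈ degreeLTFinset R n, φ (X ^ n + g) :=
  sum_map _ _ _

end Fintype

/-- `φ` depends only on its argument modulo `F`. -/
def PeriodicMod {M : Type*} (F : R[X]) (φ : R[X] → M) : Prop :=
  ∀ a b, F ∣ a - b → φ a = φ b

lemma PeriodicMod.of_dvd {M : Type*} {F G : R[X]} {φ : R[X] → M} (h : PeriodicMod F φ)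
    (hFG : F ∣ G) : PeriodicMod G φ := fun a b hab ↦ h a b (hFG.trans hab)

lemma PeriodicMod.apply_modByMonic {M : Type*} {F : R[X]} {φ : R[X] → M} (h : PeriodicMod F φ)
    (a : R[X]) : φ (a %ₘ F) = φ a := h _ _ (dvd_modByMonic_sub a F)

lemma PeriodicMod.mul {M : Type*} [Mul M] {F : R[X]} {φ χ : R[X] → M} (h : PeriodicMod F φ)
    (h' : PeriodicMod F χ) : PeriodicMod F fun x ↦ φ x * χ x :=
  fun a b hab ↦ congrArg₂ (· * ·) (h a b hab) (h' a b hab)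

lemma isCoprime_congr {F a b : R[X]} (h : F ∣ a - b) : IsCoprime F a ↔ IsCoprime F b := by
  obtain ⟨c, hc⟩ := h
  rw [show a = b + F * c by linear_combination hc, IsCoprime.add_mul_left_right_iff]

/-- An inverse of `a` modulo `F`, with junk value `0` when `a` is not invertible. -/
def invMod (F a : R[X]) : R[X] :=
  if h : ∃ b, F ∣ a * b - 1 then h.choose else 0

lemma dvd_mul_invMod_sub_one {F a : R[X]} (h : IsCoprime F a) : F ∣ a * invMod F a - 1 := by
  have hex : ∃ b, F ∣ a * b - 1 := by
    obtain ⟨u, v, huv⟩ := h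
    exact ⟨v, -u, by linear_combination huv⟩
  rw [invMod, dif_pos hex]
  exact hex.choose_spec

lemma isCoprime_invMod {F a : R[X]} (h : IsCoprime F a) : IsCoprime F (invMod F a) := by
  obtain ⟨c, hc⟩ := dvd_mul_invMod_sub_one h
  exact ⟨-c, a, by linear_combination hc⟩

lemma dvd_sub_mul_invMod {F a b x : R[X]} (h : IsCoprime F a) (hab : F ∣ a * b - x) :
    F ∣ b - x * invMod F a := by
  obtain ⟨u, hu⟩ := dvd_mul_invMod_sub_one h
  obtain ⟨w, hw⟩ := hab
  exact ⟨invMod F a * w - b * u, by linear_combination invMod F a * hw - b * hu⟩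

section Residues

variable [Fintype R] [Nontrivial R] {M : Type*} [AddCommMonoid M] {F : R[X]}

lemma modByMonic_mem_degreeLTFinset (hF : F.Monic) (a : R[X]) :
    a %ₘ F ∈ degreeLTFinset R F.natDegree := by
  rw [mem_degreeLTFinset, ← degree_eq_natDegree hF.ne_zero]
  exact degree_modByMonic_lt _ hF

lemma eq_of_mem_degreeLTFinset_of_dvd_sub (hF : F.Monic) {a b : R[X]}
    (ha : a ∈ degreeLTFinset R F.natDegree) (hb : b ∈ degreeLTFinset R F.natDegree)
    (h : F ∣ a - b) : a = b := by
  by_contra hne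
  refine hF.not_dvd_of_degree_lt (sub_ne_zero.2 hne) ?_ h
  rw [degree_eq_natDegree hF.ne_zero]
  exact mem_degreeLTFinset.1 (sub_mem_degreeLTFinset ha hb)

lemma sum_completeResidues (hF : F.Monic) {φ : R[X] → M} (hφ : PeriodicMod F φ) {ι : Type*}
    (T : Finset ι) (σ : ι → R[X]) (hT : T.card = Fintype.card R ^ F.natDegree)
    (hσ : ∀ i ∈ T, ∀ j ∈ T, F ∣ σ i - σ j → i = j) :
    ∑ i ∈ T, φ (σ i) = ∑ x ∈ degreeLTFinset R F.natDegree, φ x := by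
  have hmem : Set.MapsTo (fun i ↦ σ i %ₘ F) T (degreeLTFinset R F.natDegree) :=
    fun i _ ↦ modByMonic_mem_degreeLTFinset hF _
  have hinj : Set.InjOn (fun i ↦ σ i %ₘ F) T := by
    intro i hi j hj (h : σ i %ₘ F = σ j %ₘ F)
    have hdvd := dvd_sub (dvd_modByMonic_sub (σ j) F) (dvd_modByMonic_sub (σ i) F)
    rw [h, sub_sub_sub_cancel_left] at hdvd
    exact hσ i hi j hj hdvd
  have hsurj := surjOn_of_injOn_of_card_le _ hmem hinj (by rw [hT, card_degreeLTFinset])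
  exact sum_bij (fun i _ ↦ σ i %ₘ F) hmem (fun i hi j hj h ↦ hinj hi hj h)
    (fun b hb ↦ by simpa using hsurj hb) fun i _ ↦ (hφ.apply_modByMonic _).symm

lemma sum_degreeLTFinset_mul_left (hF : F.Monic) {φ : R[X] → M} (hφ : PeriodicMod F φ)
    {c : R[X]} (hc : IsCoprime F c) :
    ∑ x ∈ degreeLTFinset R F.natDegree, φ (c * x) =
      ∑ x ∈ degreeLTFinset R F.natDegree, φ x := by
  refine sum_completeResidues hF hφ _ (fun x ↦ c * x) (card_degreeLTFinset _) ?_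
  intro i hi j hj h
  rw [← mul_sub] at h
  exact eq_of_mem_degreeLTFinset_of_dvd_sub hF hi hj (hc.dvd_of_dvd_mul_left h)

lemma sum_coprime_invMod (hF : F.Monic) {φ : R[X] → M} (hφ : PeriodicMod F φ) :
    ∑ x ∈ degreeLTFinset R F.natDegree with IsCoprime F x, φ (invMod F x) =
      ∑ x ∈ degreeLTFinset R F.natDegree with IsCoprime F x, φ x := by
  have hφ' : PeriodicMod F (fun x ↦ if IsCoprime F x then φ x else 0) := by
    intro a b h
    simp only [isCoprime_congr h, hφ a b h]
  rw [sum_filter, sum_filter, ← sum_completeResidues hF hφ' (degreeLTFinset R F.natDegree)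
    (fun x ↦ if IsCoprime F x then invMod F x else x) (card_degreeLTFinset _)]
  · refine sum_congr rfl fun x _ ↦ ?_
    by_cases hx : IsCoprime F x <;> simp [hx, isCoprime_invMod]
  intro i hi j hj h
  refine eq_of_mem_degreeLTFinset_of_dvd_sub hF hi hj ?_
  by_cases h1 : IsCoprime F i <;> by_cases h2 : IsCoprime F j
  · rw [if_pos h1, if_pos h2] at h
    obtain ⟨u, hu⟩ := dvd_mul_invMod_sub_one h1
    obtain ⟨v, hv⟩ := dvd_mul_invMod_sub_one h2
    obtain ⟨w, hw⟩ := h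
    exact ⟨j * u - i * v - i * j * w, by linear_combination j * hu - i * hv - i * j * hw⟩
  · rw [if_pos h1, if_neg h2] at h
    exact absurd ((isCoprime_congr h).1 (isCoprime_invMod h1)) h2
  · rw [if_neg h1, if_pos h2] at h
    exact absurd ((isCoprime_congr h).2 (isCoprime_invMod h2)) h1
  · rwa [if_neg h1, if_neg h2] at h

lemma mul_add_mem_degreeLTFinset {p r : R[X]} {n : ℕ} (hF : F.Monic) (hn : F.natDegree ≤ n)
    (hp : p ∈ degreeLTFinset R (n - F.natDegree)) (hr : r ∈ degreeLTFinset R F.natDegree) :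
    F * p + r ∈ degreeLTFinset R n := by
  refine add_mem_degreeLTFinset ?_ (degreeLTFinset_mono hn hr)
  by_cases hp0 : p = 0
  · simp [hp0, mem_degreeLTFinset]
  rw [mem_degreeLTFinset, degree_eq_natDegree hp0] at hp
  have hlt : p.natDegree < n - F.natDegree := by exact_mod_cast hp
  rw [mem_degreeLTFinset, mul_comm, hF.degree_mul, degree_eq_natDegree hF.ne_zero,
    degree_eq_natDegree hp0]
  exact_mod_cast (by omega : p.natDegree + F.natDegree < n)

lemma divByMonic_mem_degreeLTFinset {g : R[X]} {n : ℕ} (hF : F.Monic) (hn : F.natDegree ≤ n)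
    (hg : g ∈ degreeLTFinset R n) : g /ₘ F ∈ degreeLTFinset R (n - F.natDegree) := by
  rcases lt_or_ge g.degree F.degree with h | h
  · simp [(divByMonic_eq_zero_iff hF).2 h, mem_degreeLTFinset]
  have hp0 : g /ₘ F ≠ 0 := fun h0 ↦ h.not_gt ((divByMonic_eq_zero_iff hF).1 h0)
  have hdeg := degree_add_divByMonic hF h
  rw [degree_eq_natDegree hF.ne_zero, degree_eq_natDegree hp0] at hdeg
  rw [mem_degreeLTFinset, ← hdeg] at hg
  rw [mem_degreeLTFinset, degree_eq_natDegree hp0]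
  have hlt : F.natDegree + (g /ₘ F).natDegree < n := by exact_mod_cast hg
  exact_mod_cast (by omega : (g /ₘ F).natDegree < n - F.natDegree)

lemma sum_degreeLTFinset_eq_sum_divMod (hF : F.Monic) {n : ℕ} (hn : F.natDegree ≤ n)
    (φ : R[X] → M) :
    ∑ g ∈ degreeLTFinset R n, φ g =
      ∑ p ∈ degreeLTFinset R (n - F.natDegree), ∑ r ∈ degreeLTFinset R F.natDegree,
        φ (F * p + r) := by
  rw [← sum_product']
  refine sum_bij' (fun g _ ↦ (g /ₘ F, g %ₘ F)) (fun p _ ↦ F * p.1 + p.2) ?_ ?_ ?_ ?_ ?_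
  · exact fun g hg ↦ mem_product.2
      ⟨divByMonic_mem_degreeLTFinset hF hn hg, modByMonic_mem_degreeLTFinset hF g⟩
  · exact fun p hp ↦ mul_add_mem_degreeLTFinset hF hn (mem_product.1 hp).1 (mem_product.1 hp).2
  · exact fun g _ ↦ by rw [add_comm, modByMonic_add_div]
  · intro p hp
    have hr : p.2.degree < F.degree := by
      rw [degree_eq_natDegree hF.ne_zero]
      exact mem_degreeLTFinset.1 (mem_product.1 hp).2
    obtain ⟨hq, hm⟩ := div_modByMonic_unique p.1 p.2 hF ⟨add_comm _ _, hr⟩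
    exact Prod.ext hq hm
  · exact fun g _ ↦ by rw [add_comm, modByMonic_add_div]

lemma sum_degreeLTFinset_add_left (hF : F.Monic) {φ : R[X] → M} (hφ : PeriodicMod F φ) {n : ℕ}
    (hn : F.natDegree ≤ n) (c : R[X]) :
    ∑ g ∈ degreeLTFinset R n, φ (c + g) =
      Fintype.card R ^ (n - F.natDegree) • ∑ x ∈ degreeLTFinset R F.natDegree, φ x := by
  have hinner : ∀ p ∈ degreeLTFinset R (n - F.natDegree),
      ∑ r ∈ degreeLTFinset R F.natDegree, φ (c + (F * p + r)) =
        ∑ x ∈ degreeLTFinset R F.natDegree, φ x := by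
    intro p _
    refine sum_completeResidues hF hφ _ (fun r ↦ c + (F * p + r)) (card_degreeLTFinset _) ?_
    intro i hi j hj h
    refine eq_of_mem_degreeLTFinset_of_dvd_sub hF hi hj ?_
    rwa [add_sub_add_left_eq_sub, add_sub_add_left_eq_sub] at h
  rw [sum_degreeLTFinset_eq_sum_divMod hF hn, sum_congr rfl hinner, sum_const,
    card_degreeLTFinset]

lemma sum_monicsOfDegree_of_periodicMod (hF : F.Monic) {φ : R[X] → M} (hφ : PeriodicMod F φ)
    {n : ℕ} (hn : F.natDegree ≤ n) :
    ∑ f ∈ monicsOfDegree R n, φ f =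
      Fintype.card R ^ (n - F.natDegree) • ∑ x ∈ degreeLTFinset R F.natDegree, φ x := by
  rw [sum_monicsOfDegree, sum_degreeLTFinset_add_left hF hφ hn]

end Residues

end DegreeLT

section SumMonic

variable {K : Type} [Field K]

lemma monicOf_eq (n : ℕ) (c : Fin n → K) : monicOf n c = X ^ n + ofFn n c := by
  simp only [monicOf, ofFn_eq_sum_monomial, C_mul_X_pow_eq_monomial]

lemma sumMonic_eq_sum_monicsOfDegree [Fintype K] (n : ℕ) (φ : K[X] → ℂ) :
    sumMonic n φ = ∑ f ∈ monicsOfDegree K n, φ f := by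
  simp [sumMonic, monicsOfDegree, degreeLTFinset, monicOf_eq]

lemma sumSqfree_eq_sum_monicsOfDegree [Fintype K] (n : ℕ) (φ : K[X] → ℂ) :
    sumSqfree n φ = ∑ f ∈ monicsOfDegree K n with Squarefree f, φ f := by
  rw [sum_filter, ← sumMonic_eq_sum_monicsOfDegree]
  rfl

end SumMonic

section ResidueCoeff

variable {R : Type*} [CommRing R]

/-- The residue functional modulo a monic polynomial `F`: the coefficient of `1/T` in the
expansion of `a / F` at infinity. -/
def residueCoeff (F : R[X]) : R[X] →ₗ[R] R := lcoeff R (F.natDegree - 1) ∘ₗ modByMonicHom F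

lemma residueCoeff_periodicMod {F : R[X]} (hF : F.Monic) : PeriodicMod F (residueCoeff F) := by
  intro a b h
  have hmod : (a - b) %ₘ F = 0 := (modByMonic_eq_zero_iff_dvd hF).2 h
  rw [← sub_eq_zero, ← map_sub]
  simp [residueCoeff, hmod]

lemma residueCoeff_one_left (a : R[X]) : residueCoeff 1 a = 0 := by
  simp [residueCoeff, modByMonicHom]

variable [Nontrivial R]

lemma residueCoeff_of_degree_lt {F a : R[X]} (hF : F.Monic) (ha : a.degree < F.degree) :
    residueCoeff F a = a.coeff (F.natDegree - 1) := by
  simp [residueCoeff, modByMonicHom, (modByMonic_eq_self_iff hF).2 ha]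

lemma residueCoeff_eq_zero_of_degree_lt {F a : R[X]} (hF : F.Monic)
    (ha : a.degree < (F.natDegree - 1 : ℕ)) : residueCoeff F a = 0 := by
  rw [residueCoeff_of_degree_lt hF, coeff_eq_zero_of_degree_lt ha]
  rw [degree_eq_natDegree hF.ne_zero]
  exact ha.trans_le (by exact_mod_cast Nat.sub_le _ 1)

lemma residueCoeff_mul_mul_right {F G : R[X]} (hF : F.Monic) (hG : G.Monic) (a : R[X]) :
    residueCoeff (F * G) (a * G) = residueCoeff F a := by
  have hdvd : F * G ∣ a * G - (a %ₘ F) * G := by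
    rw [← sub_mul]
    exact mul_dvd_mul_right (dvd_sub_comm.1 (dvd_modByMonic_sub a F)) _
  rw [residueCoeff_periodicMod (hF.mul hG) _ _ hdvd,
    ← residueCoeff_periodicMod hF _ _ (dvd_modByMonic_sub a F)]
  have hr : (a %ₘ F).degree < F.degree := degree_modByMonic_lt a hF
  rcases Nat.eq_zero_or_pos F.natDegree with h0 | h0
  · simp [eq_one_of_monic_natDegree_zero hF h0]
  have hr' : (a %ₘ F).natDegree ≤ F.natDegree - 1 :=
    Nat.le_sub_one_of_lt (natDegree_modByMonic_lt a hF fun h ↦ by simp [h] at h0)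
  rw [residueCoeff_of_degree_lt hF hr, residueCoeff_of_degree_lt (hF.mul hG),
    hF.natDegree_mul hG, show F.natDegree + G.natDegree - 1 = (F.natDegree - 1) + G.natDegree by
      omega, coeff_mul_add_eq_of_natDegree_le hr' le_rfl, hG.coeff_natDegree, mul_one]
  rw [hG.degree_mul, hG.degree_mul, degree_eq_natDegree hG.ne_zero]
  exact WithBot.add_lt_add_right (by simp) hr

lemma residueCoeff_mul_left {F G a b : R[X]} (hF : F.Monic) (hG : G.Monic)
    (h : F * G ∣ a * F + b * G - 1) (V : R[X]) :
    residueCoeff (F * G) V = residueCoeff F (V * b) + residueCoeff G (V * a) := by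
  have hV : F * G ∣ V - (V * b * G + V * a * F) := by
    obtain ⟨c, hc⟩ := h
    exact ⟨-V * c, by linear_combination (-V) * hc⟩
  rw [residueCoeff_periodicMod (hF.mul hG) _ _ hV, map_add, residueCoeff_mul_mul_right hF hG,
    mul_comm F G, residueCoeff_mul_mul_right hG hF]

omit [Nontrivial R] in
lemma mul_dvd_invMod_mul_add_invMod_mul_sub_one {F G : R[X]} (h : IsCoprime F G) :
    F * G ∣ invMod G F * F + invMod F G * G - 1 := by
  refine h.mul_dvd ?_ ?_
  · obtain ⟨c, hc⟩ := dvd_mul_invMod_sub_one h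
    exact ⟨c + invMod G F, by linear_combination hc⟩
  · obtain ⟨c, hc⟩ := dvd_mul_invMod_sub_one h.symm
    exact ⟨c + invMod F G, by linear_combination hc⟩

end ResidueCoeff

section ResidueChar

/-- The additive character `a ↦ ψ (res (a / F))` of `R[X]` modulo a monic polynomial `F`. -/
def residueChar {R : Type*} [CommRing R] (ψ : AddChar R ℂ) (F : R[X]) : AddChar R[X] ℂ :=
  ψ.compAddMonoidHom (residueCoeff F).toAddMonoidHom

section CommRing

variable {R : Type*} [CommRing R] {ψ : AddChar R ℂ}

lemma residueChar_apply (F a : R[X]) : residueChar ψ F a = ψ (residueCoeff F a) := rfl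

lemma residueChar_periodicMod {F : R[X]} (hF : F.Monic) : PeriodicMod F (residueChar ψ F) :=
  fun a b h ↦ congrArg ψ (residueCoeff_periodicMod hF a b h)

lemma residueChar_mul_periodicMod {F : R[X]} (hF : F.Monic) (V : R[X]) :
    PeriodicMod F fun x ↦ residueChar ψ F (x * V) := by
  intro a b h
  refine residueChar_periodicMod hF _ _ ?_
  rw [← sub_mul]
  exact h.mul_right V

lemma residueChar_one_left (a : R[X]) : residueChar ψ 1 a = 1 := by
  rw [residueChar_apply, residueCoeff_one_left, AddChar.map_zero_eq_one]

lemma conj_residueChar [Finite R] (F a : R[X]) :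
    (starRingEnd ℂ) (residueChar ψ F a) = residueChar ψ F (-a) := by
  rw [residueChar_apply, residueChar_apply, map_neg, AddChar.map_neg_eq_conj]

end CommRing

lemma sum_addChar_eq_zero_of_mem_iff_add_mem {G : Type*} [AddGroup G] (χ : AddChar G ℂ)
    {s : Finset G} {w : G} (hs : ∀ x, x ∈ s ↔ x + w ∈ s) (hw : χ w ≠ 1) :
    ∑ x ∈ s, χ x = 0 := by
  have hshift : ∑ x ∈ s, χ x * χ w = ∑ x ∈ s, χ x :=
    sum_equiv (Equiv.addRight w) hs fun x _ ↦ (AddChar.map_add_eq_mul χ x w).symm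
  rw [← sum_mul] at hshift
  exact (mul_right_eq_self₀.1 hshift).resolve_left hw

variable {K : Type*} [Field K] {ψ : AddChar K ℂ} {Q : K[X]} {n L : ℕ}

lemma residueChar_mul_eq_one (hQ : Q.Monic) (hL : Q.natDegree = n + L) {W r : K[X]}
    (hW : W.degree < L) (hr : r.degree < n) : residueChar ψ Q (W * r) = 1 := by
  rw [residueChar_apply, residueCoeff_eq_zero_of_degree_lt hQ, AddChar.map_zero_eq_one]
  rcases eq_or_ne (W * r) 0 with h0 | h0
  · simp [h0]
  have hW0 := left_ne_zero_of_mul h0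
  have hr0 := right_ne_zero_of_mul h0
  rw [degree_eq_natDegree hr0, Nat.cast_lt] at hr
  rw [degree_eq_natDegree hW0, Nat.cast_lt] at hW
  rw [degree_eq_natDegree h0, natDegree_mul hW0 hr0, Nat.cast_lt]
  omega

lemma exists_residueChar_mul_ne_one (hψ : ψ ≠ 1) (hQ : Q.Monic) (hL : Q.natDegree = n + L)
    {r : K[X]} (hn : ¬ r.degree < n) (hr : r.degree < Q.degree) :
    ∃ W : K[X], W.degree < L ∧ residueChar ψ Q (W * r) ≠ 1 := by
  obtain ⟨c, hc⟩ := AddChar.ne_one_iff.1 hψ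
  have hr0 : r ≠ 0 := by
    rintro rfl
    simp at hn
  rw [degree_eq_natDegree hr0, Nat.cast_lt, not_lt] at hn
  have hd := natDegree_lt_natDegree hr0 hr
  have hlc : r.leadingCoeff ≠ 0 := leadingCoeff_ne_zero.2 hr0
  have hW : (C (c / r.leadingCoeff) * X ^ (Q.natDegree - 1 - r.natDegree)).degree ≤
      ((Q.natDegree - 1 - r.natDegree : ℕ) : WithBot ℕ) := degree_C_mul_X_pow_le _ _
  refine ⟨_, hW.trans_lt (by exact_mod_cast (by omega :
    Q.natDegree - 1 - r.natDegree < L)), ?_⟩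
  rw [residueChar_apply, residueCoeff_of_degree_lt hQ, mul_assoc, coeff_C_mul, coeff_X_pow_mul',
    if_pos (by omega), show Q.natDegree - 1 - (Q.natDegree - 1 - r.natDegree) = r.natDegree by
      omega, coeff_natDegree, div_mul_cancel₀ _ hlc]
  · exact hc
  · rw [degree_mul, degree_eq_natDegree hr0, degree_eq_natDegree hQ.ne_zero]
    refine (add_le_add_left hW _).trans_lt ?_
    exact_mod_cast (by omega : Q.natDegree - 1 - r.natDegree + r.natDegree < Q.natDegree)

variable [Fintype K]

lemma sum_degreeLTFinset_residueChar (hψ : ψ ≠ 1) (hQ : Q.Monic) (hL : Q.natDegree = n + L)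
    (x : K[X]) :
    ∑ W ∈ degreeLTFinset K L, residueChar ψ Q (W * x) =
      if x %ₘ Q ∈ degreeLTFinset K n then (Fintype.card K : ℂ) ^ L else 0 := by
  have hred : ∀ W, residueChar ψ Q (W * x) = residueChar ψ Q (W * (x %ₘ Q)) := by
    intro W
    refine (residueChar_periodicMod hQ _ _ ?_).symm
    rw [← mul_sub]
    exact (dvd_modByMonic_sub x Q).mul_left _
  simp only [hred]
  split_ifs with h
  · rw [sum_congr rfl fun W hW ↦ residueChar_mul_eq_one hQ hL (mem_degreeLTFinset.1 hW)
      (mem_degreeLTFinset.1 h), sum_const, card_degreeLTFinset]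
    simp
  · obtain ⟨w, hwL, hw⟩ := exists_residueChar_mul_ne_one hψ hQ hL (r := x %ₘ Q)
      (fun hn ↦ h (mem_degreeLTFinset.2 hn)) (degree_modByMonic_lt x hQ)
    refine sum_addChar_eq_zero_of_mem_iff_add_mem (w := w)
      ((residueChar ψ Q).compAddMonoidHom (AddMonoidHom.mulRight (x %ₘ Q))) (fun W ↦ ?_) hw
    simp only [mem_degreeLTFinset, ← mem_degreeLT] at hwL ⊢
    exact (add_mem_cancel_right hwL).symm

lemma sum_residues_residueChar (hψ : ψ ≠ 1) (hQ : Q.Monic) (x : K[X]) :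
    ∑ W ∈ degreeLTFinset K Q.natDegree, residueChar ψ Q (W * x) =
      if Q ∣ x then (Fintype.card K : ℂ) ^ Q.natDegree else 0 := by
  rw [sum_degreeLTFinset_residueChar hψ hQ (n := 0) (by simp)]
  have hmem : x %ₘ Q ∈ degreeLTFinset K 0 ↔ Q ∣ x := by
    rw [mem_degreeLTFinset, ← modByMonic_eq_zero_iff_dvd hQ]
    simp
  simp only [hmem]

end ResidueChar

lemma pow_ne_one_of_pow_prime_eq_one {M : Type*} [Monoid M] {p : ℕ} [Fact p.Prime] {z : M}
    (hp : z ^ p = 1) (h1 : z ≠ 1) {i : ℕ} (hi : ¬ p ∣ i) : z ^ i ≠ 1 := by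
  rwa [Ne, ← orderOf_dvd_iff_pow_eq_one, orderOf_eq_prime hp h1]

/-! ### Cubic residue symbols and resultants -/

section
variable {R : Type*} [CommRing R]

lemma resultant_mul_left_of_monic {F G : R[X]} (hF : F.Monic) (hG : G.Monic) (a : R[X]) :
    resultant (F * G) a = resultant F a * resultant G a := by
  rw [hF.natDegree_mul hG, resultant_mul_left _ _ _ _ le_rfl]

lemma resultant_eq_of_natDegree_le {F : R[X]} (hF : F.Monic) {a : R[X]} {n : ℕ}
    (hn : a.natDegree ≤ n) : resultant F a F.natDegree n = resultant F a := by
  obtain ⟨k, rfl⟩ := Nat.exists_eq_add_of_le hn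
  rw [resultant_add_right_deg _ _ _ _ _ le_rfl, hF.coeff_natDegree, one_pow, one_mul]

lemma resultant_mul_right_of_monic {F : R[X]} (hF : F.Monic) (a b : R[X]) :
    resultant F (a * b) = resultant F a * resultant F b := by
  rw [← resultant_mul_right _ _ _ _ le_rfl, resultant_eq_of_natDegree_le hF natDegree_mul_le]

lemma resultant_periodicMod {F : R[X]} (hF : F.Monic) : PeriodicMod F fun a ↦ resultant F a := by
  rintro a b ⟨p, hp⟩
  have : a = b + F * p := by linear_combination hp
  set n := max (max a.natDegree b.natDegree) (p.natDegree + F.natDegree)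
  change resultant F a = resultant F b
  rw [← resultant_eq_of_natDegree_le hF (n := n) (a := a) (by omega),
    ← resultant_eq_of_natDegree_le hF (n := n) (a := b) (by omega), this,
    resultant_add_mul_right _ _ _ _ _ (by omega) le_rfl]

end

section
variable {K : Type*} [Field K]

lemma resultant_eq_norm_adjoinRoot [PerfectField K] {P : K[X]} (hP : P.Monic)
    (hi : Irreducible P) (a : K[X]) :
    resultant P a = Algebra.norm K (AdjoinRoot.mk P a) := by
  have : Fact (Irreducible P) := ⟨hi⟩
  have : FiniteDimensional K (AdjoinRoot P) := (AdjoinRoot.powerBasis hi.ne_zero).finite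
  let E := AlgebraicClosure K
  have hroots (x : E) : x ∈ (P.map (algebraMap K E)).roots ↔ aeval x P = 0 := by
    rw [mem_roots (hP.map _).ne_zero, IsRoot.def, eval_map_algebraMap]
  apply (algebraMap K E).injective
  calc algebraMap K E (resultant P a)
      = ((P.map (algebraMap K E)).roots.map fun x ↦ eval x (a.map (algebraMap K E))).prod := by
        have h := resultant_eq_prod_eval (P.map (algebraMap K E)) (a.map (algebraMap K E))
          a.natDegree (by simp) (IsAlgClosed.splits _)
        rwa [natDegree_map, resultant_map_map, (hP.map _).leadingCoeff, one_pow, one_mul] at h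
    _ = ∏ x ∈ (P.map (algebraMap K E)).roots.toFinset, aeval x a := by
        rw [Finset.prod, Multiset.toFinset_val,
          (nodup_roots (PerfectField.separable_of_irreducible hi).map).dedup]
        simp only [eval_map_algebraMap]
    _ = ∏ σ : AdjoinRoot P →ₐ[K] E, σ (AdjoinRoot.mk P a) := by
        refine (Finset.prod_bij (fun σ _ ↦ σ (AdjoinRoot.root P)) (fun σ _ ↦ ?_)
          (fun σ _ τ _ h ↦ AdjoinRoot.algHom_ext h) (fun x hx ↦ ?_) fun σ _ ↦ ?_).symm
        · rw [Multiset.mem_toFinset, hroots, aeval_algHom_apply, AdjoinRoot.aeval_eq,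
            AdjoinRoot.mk_self, map_zero]
        · rw [Multiset.mem_toFinset, hroots] at hx
          exact ⟨AdjoinRoot.liftAlgHom P (Algebra.ofId K E) x hx, mem_univ _,
            AdjoinRoot.liftAlgHom_root ..⟩
        · rw [aeval_algHom_apply, AdjoinRoot.aeval_eq]
    _ = algebraMap K E (Algebra.norm K (AdjoinRoot.mk P a)) :=
        (Algebra.norm_eq_prod_embeddings K E _).symm

/-- The residue symbol `(a / F)` attached to a multiplicative character `ω` of the constant field:
for irreducible `F` the resultant is the norm of `a` from `K[X] / (F)` to `K`. -/
def residueSymbol (ω : MulChar K ℂ) (F a : K[X]) : ℂ := ω (resultant F a)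

variable {ω : MulChar K ℂ}

lemma residueSymbol_one_left (a : K[X]) : residueSymbol ω 1 a = 1 := by
  simp [residueSymbol]

lemma residueSymbol_mul_left {F G : K[X]} (hF : F.Monic) (hG : G.Monic) (a : K[X]) :
    residueSymbol ω (F * G) a = residueSymbol ω F a * residueSymbol ω G a := by
  rw [residueSymbol, resultant_mul_left_of_monic hF hG, map_mul]; rfl

lemma residueSymbol_mul_right {F : K[X]} (hF : F.Monic) (a b : K[X]) :
    residueSymbol ω F (a * b) = residueSymbol ω F a * residueSymbol ω F b := by
  rw [residueSymbol, resultant_mul_right_of_monic hF, map_mul]; rfl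

lemma residueSymbol_periodicMod {F : K[X]} (hF : F.Monic) : PeriodicMod F (residueSymbol ω F) := by
  intro a b h
  rw [residueSymbol, residueSymbol]
  exact congrArg _ (resultant_periodicMod hF a b h)

lemma residueSymbol_C (F : K[X]) (c : K) : residueSymbol ω F (C c) = ω c ^ F.natDegree := by
  rw [residueSymbol, natDegree_C, resultant_C_zero_right, map_pow]

lemma residueSymbol_one_right (F : K[X]) : residueSymbol ω F 1 = 1 := by
  rw [← C_1, residueSymbol_C]; simp

lemma residueSymbol_eq_zero_iff {F : K[X]} (hF : F.Monic) (a : K[X]) :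
    residueSymbol ω F a = 0 ↔ ¬ IsCoprime F a := by
  rw [residueSymbol, ← isUnit_resultant_iff_isCoprime hF]
  constructor
  · intro h hu
    exact (hu.map ω).ne_zero h
  · exact ω.map_nonunit

lemma residueSymbol_pow_left {F : K[X]} (hF : F.Monic) (n : ℕ) (a : K[X]) :
    residueSymbol ω (F ^ n) a = residueSymbol ω F a ^ n := by
  induction n with
  | zero => simp [residueSymbol_one_left]
  | succ n ih => rw [pow_succ, residueSymbol_mul_left (hF.pow n) hF, ih, pow_succ]

lemma residueSymbol_pow_right {F : K[X]} (hF : F.Monic) (n : ℕ) (a : K[X]) :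
    residueSymbol ω F (a ^ n) = residueSymbol ω F a ^ n := by
  induction n with
  | zero => simp [residueSymbol_one_right]
  | succ n ih => rw [pow_succ, residueSymbol_mul_right hF, ih, pow_succ]

lemma mulChar_pow_three_eq_one (hω : ω ^ 3 = 1) {c : K} (hc : c ≠ 0) : ω c ^ 3 = 1 := by
  rw [← MulChar.pow_apply' _ (by norm_num), hω, MulChar.one_apply (isUnit_iff_ne_zero.2 hc)]

lemma mulChar_neg_one_eq_one (hω : ω ^ 3 = 1) : ω (-1) = 1 := by
  rw [← mulChar_pow_three_eq_one hω (c := -1) (by simp), ← map_pow]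
  norm_num

lemma residueSymbol_pow_three (hω : ω ^ 3 = 1) {F a : K[X]} (hF : F.Monic) (h : IsCoprime F a) :
    residueSymbol ω F a ^ 3 = 1 :=
  mulChar_pow_three_eq_one hω ((isUnit_resultant_iff_isCoprime hF).2 h).ne_zero

lemma norm_residueSymbol (hω : ω ^ 3 = 1) {F a : K[X]} (hF : F.Monic) (h : IsCoprime F a) :
    ‖residueSymbol ω F a‖ = 1 := by
  have := congrArg norm (residueSymbol_pow_three hω hF h)
  rw [norm_pow, norm_one] at this
  exact (pow_eq_one_iff_of_nonneg (norm_nonneg _) (by norm_num)).1 this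

lemma residueSymbol_comm (hω : ω ^ 3 = 1) (F G : K[X]) :
    residueSymbol ω F G = residueSymbol ω G F := by
  rw [residueSymbol, resultant_comm, map_mul, map_pow, mulChar_neg_one_eq_one hω, one_pow, one_mul]
  rfl

lemma exists_residueSymbol_ne_one [Finite K] (hω1 : ω ≠ 1) {P : K[X]} (hP : P.Monic)
    (hi : Irreducible P) :
    ∃ a, IsCoprime P a ∧ residueSymbol ω P a ≠ 1 := by
  have : Fact (Irreducible P) := ⟨hi⟩
  have : FiniteDimensional K (AdjoinRoot P) := (AdjoinRoot.powerBasis hi.ne_zero).finite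
  have : Finite (AdjoinRoot P) := Module.finite_of_finite K
  obtain ⟨c, hc⟩ : ∃ c : Kˣ, ω c ≠ 1 := by
    by_contra hc
    push Not at hc
    exact hω1 (MulChar.ext fun a ↦ by rw [hc a, MulChar.one_apply_coe])
  obtain ⟨x, hx⟩ := FiniteField.norm_surjective K (AdjoinRoot P) (c : K)
  obtain ⟨a, rfl⟩ := AdjoinRoot.mk_surjective x
  rw [← resultant_eq_norm_adjoinRoot hP hi] at hx
  refine ⟨a, (isUnit_resultant_iff_isCoprime hP).1 (hx ▸ c.isUnit), ?_⟩
  rwa [residueSymbol, hx]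

end

lemma monic_induction {K : Type*} [Field K] {p : K[X] → Prop} (one : p 1)
    (mul : ∀ P G : K[X], P.Monic → Irreducible P → G.Monic → p G → p (P * G))
    (F : K[X]) (hF : F.Monic) : p F := by
  induction hn : F.natDegree using Nat.strong_induction_on generalizing F with
  | _ n ih =>
    by_cases h0 : F.natDegree = 0
    · rwa [eq_one_of_monic_natDegree_zero hF h0]
    · obtain ⟨P, hP, hi, G, rfl⟩ := exists_monic_irreducible_factor F
        fun hu ↦ h0 (natDegree_eq_zero_of_isUnit hu)
      have hG : G.Monic := hP.of_mul_monic_left hF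
      have := hi.natDegree_pos
      rw [hP.natDegree_mul hG] at hn
      exact mul P G hP hi hG (ih _ (by omega) G hG rfl)

lemma pow_sub_one_div_sub_one_mul_div {q d : ℕ} (hq : 1 < q) (hd : d ∣ q - 1) (n : ℕ) :
    (q ^ n - 1) / (q - 1) * ((q - 1) / d) = (q ^ n - 1) / d := by
  rw [Nat.div_mul_div_comm (by simpa using Nat.sub_dvd_pow_sub_pow q 1 n) hd,
    Nat.mul_comm, Nat.mul_div_mul_left _ _ (by omega)]

section
variable {K : Type} [Field K] [Fintype K] {Ω : K → ℂ} {chi : K[X] → K[X] → ℂ}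

namespace IsCubicSymbol

lemma omega_one {q : ℕ} (hchi : IsCubicSymbol q Ω chi) : Ω 1 = 1 := by
  have hmul : Ω 1 = Ω 1 * Ω 1 := by simpa using hchi.omega_mul 1 1 (by simp) (by simp)
  have hne : Ω 1 ≠ 0 := fun h ↦ by simpa [h] using hchi.omega_cube 1 (by simp)
  exact (mul_eq_left₀ hne).1 hmul.symm

lemma three_dvd_card_sub_one {q : ℕ} (hchi : IsCubicSymbol q Ω chi) :
    3 ∣ Fintype.card K - 1 := by
  have hζ := Complex.isPrimitiveRoot_exp 3 (by norm_num)
  obtain ⟨c, hc, hcζ⟩ := hchi.omega_surj _ hζ.pow_eq_one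
  have hc1 : c ≠ 1 := by
    rintro rfl
    exact hζ.ne_one (by norm_num) (hcζ.symm.trans hchi.omega_one)
  have hc0 : c ≠ 0 := by
    rintro rfl
    simp at hc
  rw [← orderOf_eq_prime hc hc1]
  exact orderOf_dvd_of_pow_eq_one (FiniteField.pow_card_sub_one_eq_one c hc0)

lemma four_le_card {q : ℕ} (hchi : IsCubicSymbol q Ω chi) : 4 ≤ Fintype.card K := by
  have := Nat.le_of_dvd (Nat.sub_pos_of_lt Fintype.one_lt_card) hchi.three_dvd_card_sub_one
  omega

lemma pow_card_sub_one_div_three_pow_three {q : ℕ} (hchi : IsCubicSymbol q Ω chi) {c : K}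
    (hc : c ≠ 0) : (c ^ ((Fintype.card K - 1) / 3)) ^ 3 = 1 := by
  rw [← pow_mul, Nat.div_mul_cancel hchi.three_dvd_card_sub_one,
    FiniteField.pow_card_sub_one_eq_one c hc]

/-- The cubic character `c ↦ Ω (c ^ ((|K| - 1) / 3))` of the constant field. -/
def mulChar {q : ℕ} (hchi : IsCubicSymbol q Ω chi) : MulChar K ℂ where
  toFun c := if c = 0 then 0 else Ω (c ^ ((Fintype.card K - 1) / 3))
  map_one' := by simp [hchi.omega_one]
  map_mul' a b := by
    rcases eq_or_ne a 0 with rfl | ha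
    · simp
    rcases eq_or_ne b 0 with rfl | hb
    · simp
    simpa only [ha, hb, mul_eq_zero, or_self, if_false, mul_pow] using hchi.omega_mul _ _
      (hchi.pow_card_sub_one_div_three_pow_three ha) (hchi.pow_card_sub_one_div_three_pow_three hb)
  map_nonunit' a ha := if_pos (by rwa [isUnit_iff_ne_zero, not_not] at ha)

lemma mulChar_apply {q : ℕ} (hchi : IsCubicSymbol q Ω chi) {c : K} (hc : c ≠ 0) :
    hchi.mulChar c = Ω (c ^ ((Fintype.card K - 1) / 3)) :=
  if_neg hc

lemma mulChar_pow_three {q : ℕ} (hchi : IsCubicSymbol q Ω chi) : hchi.mulChar ^ 3 = 1 := by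
  ext c
  rw [MulChar.pow_apply_coe, hchi.mulChar_apply c.ne_zero, MulChar.one_apply_coe]
  exact hchi.omega_cube _ (hchi.pow_card_sub_one_div_three_pow_three c.ne_zero)

lemma mulChar_ne_one {q : ℕ} (hchi : IsCubicSymbol q Ω chi) : hchi.mulChar ≠ 1 := by
  intro h1
  obtain ⟨g, hg⟩ := IsCyclic.exists_generator (α := Kˣ)
  have hΩ := hchi.mulChar_apply g.ne_zero
  rw [h1, MulChar.one_apply_coe, ← hchi.omega_one] at hΩ
  have hpow : g ^ ((Fintype.card K - 1) / 3) = 1 := Units.ext <| by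
    simpa using (hchi.omega_inj _ _ (by simp)
      (hchi.pow_card_sub_one_div_three_pow_three g.ne_zero) hΩ).symm
  have hord := orderOf_dvd_of_pow_eq_one hpow
  rw [orderOf_eq_card_of_forall_mem_zpowers hg, Nat.card_units, Nat.card_eq_fintype_card] at hord
  have := hchi.four_le_card
  have := Nat.le_of_dvd (by omega) hord
  omega

end IsCubicSymbol

lemma algebraMap_resultant_adjoinRoot {K : Type*} [Field K] [Fintype K] {P : K[X]}
    (hP : P.Monic) (hi : Irreducible P) (a : K[X]) :
    algebraMap K (AdjoinRoot P) (resultant P a) = AdjoinRoot.mk P a ^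
      ((Fintype.card K ^ P.natDegree - 1) / (Fintype.card K - 1)) := by
  have : Fact (Irreducible P) := ⟨hi⟩
  have : FiniteDimensional K (AdjoinRoot P) := (AdjoinRoot.powerBasis hi.ne_zero).finite
  have : Finite (AdjoinRoot P) := Module.finite_of_finite K
  have hcard : Nat.card (AdjoinRoot P) = Fintype.card K ^ P.natDegree := by
    rw [Module.natCard_eq_pow_finrank (K := K), (AdjoinRoot.powerBasis hi.ne_zero).finrank,
      AdjoinRoot.powerBasis_dim, Nat.card_eq_fintype_card]
  rw [resultant_eq_norm_adjoinRoot hP hi, FiniteField.algebraMap_norm_eq_pow, hcard,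
    Nat.card_eq_fintype_card]

namespace IsCubicSymbol

lemma chi_prime_eq_residueSymbol (hchi : IsCubicSymbol (Fintype.card K) Ω chi)
    {P : K[X]} (hP : P.Monic) (hi : Irreducible P) (a : K[X]) :
    chi P a = residueSymbol hchi.mulChar P a := by
  by_cases hd : P ∣ a
  · rw [hchi.chi_prime_dvd P a hP hi hd, eq_comm, residueSymbol_eq_zero_iff hP,
      hi.coprime_iff_not_dvd, not_not]
    exact hd
  obtain ⟨c, -, hcΩ, hcd⟩ := hchi.chi_prime_not_dvd P a hP hi hd
  have hr : resultant P a ≠ 0 :=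
    ((isUnit_resultant_iff_isCoprime hP).2 (hi.coprime_iff_not_dvd.2 hd)).ne_zero
  have : Fact (Irreducible P) := ⟨hi⟩
  have hpow : resultant P a ^ ((Fintype.card K - 1) / 3) = c := by
    apply (algebraMap K (AdjoinRoot P)).injective
    rw [map_pow, algebraMap_resultant_adjoinRoot hP hi, ← pow_mul,
      pow_sub_one_div_sub_one_mul_div Fintype.one_lt_card hchi.three_dvd_card_sub_one, ← map_pow]
    exact AdjoinRoot.mk_eq_mk.2 hcd
  rw [residueSymbol, hchi.mulChar_apply hr, hpow, hcΩ]

lemma chi_eq_residueSymbol (hchi : IsCubicSymbol (Fintype.card K) Ω chi)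
    {F : K[X]} (hF : F.Monic) (a : K[X]) : chi F a = residueSymbol hchi.mulChar F a := by
  refine monic_induction (p := fun F ↦ chi F a = residueSymbol hchi.mulChar F a) ?_ ?_ F hF
  · rw [hchi.chi_one, residueSymbol_one_left]
  · intro P G hP hi hG ih
    rw [hchi.chi_mul_left P G a hP hG, residueSymbol_mul_left hP hG, ih,
      hchi.chi_prime_eq_residueSymbol hP hi]

end IsCubicSymbol

end

/-! ### Gauss sums -/

section GaussSum

/-- `φ` is a unitary character of the units modulo `F`, extended by zero. -/
structure IsUnitChar {R : Type*} [CommRing R] (F : R[X]) (φ : R[X] → ℂ) : Prop where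
  periodic : PeriodicMod F φ
  map_mul : ∀ a b, φ (a * b) = φ a * φ b
  norm_eq_one : ∀ a, IsCoprime F a → ‖φ a‖ = 1
  eq_zero : ∀ a, ¬ IsCoprime F a → φ a = 0

/-- The Gauss sum `G(V, φ, F) = ∑_{x mod F} φ(x) e(x V / F)`. -/
def shiftedGaussSum {R : Type*} [CommRing R] [Fintype R] (ψ : AddChar R ℂ) (φ : R[X] → ℂ)
    (F V : R[X]) : ℂ :=
  ∑ x ∈ degreeLTFinset R F.natDegree, φ x * residueChar ψ F (x * V)

lemma isUnitChar_residueSymbol {K : Type*} [Field K] {ω : MulChar K ℂ} (hω : ω ^ 3 = 1)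
    {F : K[X]} (hF : F.Monic) : IsUnitChar F (residueSymbol ω F) where
  periodic := residueSymbol_periodicMod hF
  map_mul := residueSymbol_mul_right hF
  norm_eq_one _ := norm_residueSymbol hω hF
  eq_zero a := (residueSymbol_eq_zero_iff hF a).2

lemma IsUnitChar.norm_le_one {R : Type*} [CommRing R] {F : R[X]} {φ : R[X] → ℂ}
    (hφ : IsUnitChar F φ) (a : R[X]) : ‖φ a‖ ≤ 1 := by
  by_cases h : IsCoprime F a
  · exact (hφ.norm_eq_one a h).le
  · simp [hφ.eq_zero a h]

lemma residueChar_mul_mul_right {R : Type*} [CommRing R] [Nontrivial R] {ψ : AddChar R ℂ}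
    {F G : R[X]} (hF : F.Monic) (hG : G.Monic) (a : R[X]) :
    residueChar ψ (F * G) (a * G) = residueChar ψ F a := by
  rw [residueChar_apply, residueCoeff_mul_mul_right hF hG, residueChar_apply]

lemma shiftedGaussSum_one {R : Type*} [CommRing R] [Fintype R] {ψ : AddChar R ℂ} {φ : R[X] → ℂ}
    (V : R[X]) : shiftedGaussSum ψ φ 1 V = φ 0 := by
  simp [shiftedGaussSum, degreeLTFinset_zero, residueChar_one_left]

section CommRing
variable {R : Type*} [CommRing R] [Nontrivial R] [Fintype R] {ψ : AddChar R ℂ}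

lemma IsUnitChar.mul_shiftedGaussSum_mul {F : R[X]} (hF : F.Monic) {φ : R[X] → ℂ}
    (hφ : IsUnitChar F φ) {c : R[X]} (hc : IsCoprime F c) (V : R[X]) :
    φ c * shiftedGaussSum ψ φ F (c * V) = shiftedGaussSum ψ φ F V := by
  have hper := hφ.periodic.mul (residueChar_mul_periodicMod (ψ := ψ) hF V)
  rw [shiftedGaussSum, shiftedGaussSum, ← sum_degreeLTFinset_mul_left hF hper hc, Finset.mul_sum]
  refine Finset.sum_congr rfl fun x _ ↦ ?_
  rw [hφ.map_mul, ← mul_assoc, ← mul_assoc, mul_comm x c]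

lemma sum_degreeLTFinset_crt {M : Type*} [AddCommMonoid M] {A B : R[X]} (hA : A.Monic)
    (hB : B.Monic) (hAB : IsCoprime A B) {φ : R[X] → M} (hφ : PeriodicMod (A * B) φ) :
    ∑ x ∈ degreeLTFinset R (A * B).natDegree, φ x =
      ∑ y ∈ degreeLTFinset R A.natDegree, ∑ z ∈ degreeLTFinset R B.natDegree,
        φ (y * B + z * A) := by
  rw [← Finset.sum_product' _ _ fun y z ↦ φ (y * B + z * A)]
  refine (sum_completeResidues (hA.mul hB) hφ
    (degreeLTFinset R A.natDegree ×ˢ degreeLTFinset R B.natDegree)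
    (fun p ↦ p.1 * B + p.2 * A) ?_ ?_).symm
  · rw [Finset.card_product, card_degreeLTFinset, card_degreeLTFinset, hA.natDegree_mul hB,
      pow_add]
  rintro ⟨y, z⟩ h ⟨y', z'⟩ h' hd
  rw [Finset.mem_product] at h h'
  have hdA : A ∣ (y - y') * B + A * (z - z') := by
    convert (dvd_mul_right A B).trans hd using 1
    ring
  have hdB : B ∣ (z - z') * A + B * (y - y') := by
    convert (dvd_mul_left B A).trans hd using 1
    ring
  exact Prod.ext
    (eq_of_mem_degreeLTFinset_of_dvd_sub hA h.1 h'.1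
      (hAB.dvd_of_dvd_mul_right ((dvd_add_left (dvd_mul_right _ _)).1 hdA)))
    (eq_of_mem_degreeLTFinset_of_dvd_sub hB h.2 h'.2
      (hAB.symm.dvd_of_dvd_mul_right ((dvd_add_left (dvd_mul_right _ _)).1 hdB)))

lemma shiftedGaussSum_mul_of_isCoprime {A B : R[X]} (hA : A.Monic) (hB : B.Monic)
    (hAB : IsCoprime A B) {φ χ : R[X] → ℂ} (hφ : IsUnitChar A φ) (hχ : IsUnitChar B χ)
    (W : R[X]) :
    shiftedGaussSum ψ (fun x ↦ φ x * χ x) (A * B) W =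
      φ B * χ A * (shiftedGaussSum ψ φ A W * shiftedGaussSum ψ χ B W) := by
  have hper : PeriodicMod (A * B) fun x ↦ φ x * χ x * residueChar ψ (A * B) (x * W) :=
    ((hφ.periodic.of_dvd (dvd_mul_right _ _)).mul (hχ.periodic.of_dvd (dvd_mul_left _ _))).mul
      (residueChar_mul_periodicMod (hA.mul hB) W)
  rw [shiftedGaussSum, sum_degreeLTFinset_crt hA hB hAB hper, shiftedGaussSum, shiftedGaussSum,
    Finset.sum_mul_sum, Finset.mul_sum]
  refine Finset.sum_congr rfl fun y _ ↦ ?_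
  rw [Finset.mul_sum]
  refine Finset.sum_congr rfl fun z _ ↦ ?_
  have hφyz : φ (y * B + z * A) = φ y * φ B := by
    rw [← hφ.map_mul]
    exact hφ.periodic _ _ ⟨z, by ring⟩
  have hχyz : χ (y * B + z * A) = χ z * χ A := by
    rw [← hχ.map_mul]
    exact hχ.periodic _ _ ⟨y, by ring⟩
  have he : residueChar ψ (A * B) ((y * B + z * A) * W) =
      residueChar ψ A (y * W) * residueChar ψ B (z * W) := by
    rw [show (y * B + z * A) * W = y * W * B + z * W * A by ring, AddChar.map_add_eq_mul,
      residueChar_mul_mul_right hA hB, mul_comm A B, residueChar_mul_mul_right hB hA]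
  rw [hφyz, hχyz, he]
  ring

end CommRing

section Field
variable {K : Type*} [Field K]

lemma exists_gcd_factorization {F : K[X]} (hF : F.Monic) (V : K[X]) :
    ∃ E F₀ V₀ : K[X], E.Monic ∧ F₀.Monic ∧ F = E * F₀ ∧ V = E * V₀ ∧ IsCoprime F₀ V₀ := by
  have hg : gcd F V ≠ 0 := fun h ↦ hF.ne_zero ((gcd_eq_zero_iff F V).1 h).1
  have hgm : (gcd F V).Monic := normalize_gcd F V ▸ Polynomial.monic_normalize hg
  obtain ⟨F₀, hF₀⟩ := gcd_dvd_left F V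
  obtain ⟨V₀, hV₀⟩ := gcd_dvd_right F V
  refine ⟨gcd F V, F₀, V₀, hgm, hgm.of_mul_monic_left (hF₀ ▸ hF), hF₀, hV₀, ?_⟩
  obtain ⟨u, v, huv⟩ := exists_gcd_eq_mul_add_mul F V
  refine ⟨u, v, mul_left_cancel₀ hg ?_⟩
  linear_combination (-1 : K[X]) * huv - u * hF₀ - v * hV₀

variable [Fintype K] {ψ : AddChar K ℂ} {F E F₀ V₀ V : K[X]} {φ : K[X] → ℂ}

lemma card_coprime_mul_norm_shiftedGaussSum_sq_le (hF : F.Monic) (hφ : IsUnitChar F φ) :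
    (#{c ∈ degreeLTFinset K F.natDegree | IsCoprime F c} : ℝ) * ‖shiftedGaussSum ψ φ F V‖ ^ 2 ≤
      ∑ c ∈ degreeLTFinset K F.natDegree, ‖shiftedGaussSum ψ φ F (c * V)‖ ^ 2 := by
  calc _ = ∑ c ∈ degreeLTFinset K F.natDegree with IsCoprime F c,
        ‖shiftedGaussSum ψ φ F (c * V)‖ ^ 2 := by
        rw [Finset.sum_eq_card_nsmul (b := ‖shiftedGaussSum ψ φ F V‖ ^ 2), nsmul_eq_mul]
        intro c hc
        have hc := (Finset.mem_filter.1 hc).2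
        rw [← hφ.mul_shiftedGaussSum_mul hF hc V, norm_mul, hφ.norm_eq_one c hc, one_mul]
    _ ≤ _ := Finset.sum_le_sum_of_subset_of_nonneg (Finset.filter_subset _ _)
        fun _ _ _ ↦ by positivity

lemma sum_norm_shiftedGaussSum_sq (hψ : ψ ≠ 1) (hF : F.Monic) :
    ((∑ c ∈ degreeLTFinset K F.natDegree, ‖shiftedGaussSum ψ φ F (c * V)‖ ^ 2 : ℝ) : ℂ) =
      ∑ x ∈ degreeLTFinset K F.natDegree, ∑ y ∈ degreeLTFinset K F.natDegree,
        φ x * starRingEnd ℂ (φ y) *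
          if F ∣ (x - y) * V then (Fintype.card K : ℂ) ^ F.natDegree else 0 := by
  have hsq (z : ℂ) : ((‖z‖ ^ 2 : ℝ) : ℂ) = z * starRingEnd ℂ z := by
    rw [Complex.mul_conj, Complex.normSq_eq_norm_sq]
  rw [Complex.ofReal_sum]
  simp only [hsq, shiftedGaussSum, map_sum, Finset.sum_mul_sum]
  rw [Finset.sum_comm]
  refine Finset.sum_congr rfl fun x _ ↦ ?_
  rw [Finset.sum_comm]
  refine Finset.sum_congr rfl fun y _ ↦ ?_
  rw [← sum_residues_residueChar hψ hF, Finset.mul_sum]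
  refine Finset.sum_congr rfl fun c _ ↦ ?_
  rw [map_mul (starRingEnd ℂ), conj_residueChar,
    show c * ((x - y) * V) = x * (c * V) + -(y * (c * V)) by ring,
    AddChar.map_add_eq_mul]
  ring

lemma card_filter_dvd_sub_mul_le (hE : E.Monic) (hF₀ : F₀.Monic) (hcop : IsCoprime F₀ V₀)
    (x : K[X]) :
    #{y ∈ degreeLTFinset K (E * F₀).natDegree | E * F₀ ∣ (x - y) * (E * V₀)} ≤
      Fintype.card K ^ E.natDegree := by
  have hiff (y : K[X]) : E * F₀ ∣ (x - y) * (E * V₀) ↔ F₀ ∣ x - y := by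
    rw [mul_left_comm, mul_dvd_mul_iff_left hE.ne_zero]
    exact ⟨hcop.dvd_of_dvd_mul_right, fun h ↦ h.mul_right _⟩
  have hper : PeriodicMod F₀ fun y ↦ if F₀ ∣ x - y then 1 else 0 := fun a b h ↦ by
    simp only [show x - b = (x - a) + (a - b) by ring, dvd_add_left h]
  have hdeg := hE.natDegree_mul hF₀
  have hcount := sum_degreeLTFinset_add_left hF₀ hper (n := (E * F₀).natDegree) (by omega) 0
  simp only [zero_add, Finset.sum_boole, Nat.cast_id] at hcount
  simp only [hiff]
  rw [hcount, hdeg, Nat.add_sub_cancel, smul_eq_mul]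
  refine mul_le_of_le_one_right (Nat.zero_le _) (Finset.card_le_one.2 fun a ha b hb ↦ ?_)
  rw [Finset.mem_filter] at ha hb
  refine eq_of_mem_degreeLTFinset_of_dvd_sub hF₀ ha.1 hb.1 ?_
  simpa only [sub_sub_sub_cancel_left] using dvd_sub hb.2 ha.2

lemma norm_sum_filter_dvd_le (hE : E.Monic) (hF₀ : F₀.Monic) (hcop : IsCoprime F₀ V₀)
    (hφ : IsUnitChar (E * F₀) φ) (x : K[X]) :
    ‖∑ y ∈ degreeLTFinset K (E * F₀).natDegree, φ x * starRingEnd ℂ (φ y) *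
        if E * F₀ ∣ (x - y) * (E * V₀) then
          (Fintype.card K : ℂ) ^ (E * F₀).natDegree else 0‖ ≤
      Fintype.card K ^ (E * F₀).natDegree * Fintype.card K ^ E.natDegree := by
  calc _ ≤ ∑ y ∈ degreeLTFinset K (E * F₀).natDegree,
        if E * F₀ ∣ (x - y) * (E * V₀) then (Fintype.card K : ℝ) ^ (E * F₀).natDegree else 0 := by
        refine norm_sum_le_of_le _ fun y _ ↦ ?_
        rw [norm_mul, norm_mul, RCLike.norm_conj]
        refine (mul_le_of_le_one_left (norm_nonneg _) (mul_le_one₀ (hφ.norm_le_one x)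
          (norm_nonneg _) (hφ.norm_le_one y))).trans_eq ?_
        split_ifs <;> simp
    _ = Fintype.card K ^ (E * F₀).natDegree * (#{y ∈ degreeLTFinset K (E * F₀).natDegree |
        E * F₀ ∣ (x - y) * (E * V₀)} : ℝ) := by
        rw [← Finset.sum_filter, Finset.sum_const, nsmul_eq_mul, mul_comm]
    _ ≤ _ := by
        gcongr
        exact_mod_cast card_filter_dvd_sub_mul_le hE hF₀ hcop x

lemma norm_shiftedGaussSum_sq_le (hψ : ψ ≠ 1) (hE : E.Monic) (hF₀ : F₀.Monic)
    (hcop : IsCoprime F₀ V₀) (hφ : IsUnitChar (E * F₀) φ) :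
    ‖shiftedGaussSum ψ φ (E * F₀) (E * V₀)‖ ^ 2 ≤
      Fintype.card K ^ (E * F₀).natDegree * Fintype.card K ^ E.natDegree := by
  have hF := hE.mul hF₀
  set U := {c ∈ degreeLTFinset K (E * F₀).natDegree | IsCoprime (E * F₀) c}
  have hU : 0 < (#U : ℝ) := by
    have hone : 1 %ₘ (E * F₀) ∈ U := Finset.mem_filter.2 ⟨modByMonic_mem_degreeLTFinset hF 1,
      (isCoprime_congr (dvd_modByMonic_sub 1 _)).2 isCoprime_one_right⟩
    exact_mod_cast Finset.card_pos.2 ⟨_, hone⟩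
  refine le_of_mul_le_mul_left
    ((card_coprime_mul_norm_shiftedGaussSum_sq_le hF hφ).trans ?_) hU
  rw [← Complex.norm_of_nonneg (r := ∑ c ∈ _, _) (Finset.sum_nonneg fun _ _ ↦ by positivity),
    sum_norm_shiftedGaussSum_sq hψ hF]
  rw [← Finset.sum_filter_of_ne (p := IsCoprime (E * F₀)) fun x _ hx ↦ ?_]
  · refine (norm_sum_le_of_le _ fun x _ ↦ norm_sum_filter_dvd_le hE hF₀ hcop hφ x).trans_eq ?_
    rw [Finset.sum_const, nsmul_eq_mul]
  · by_contra h
    simp [hφ.eq_zero x h] at hx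

lemma exists_norm_shiftedGaussSum_sq_le (hψ : ψ ≠ 1) (hF : F.Monic) (hφ : IsUnitChar F φ)
    (V : K[X]) :
    ∃ E : K[X], E.Monic ∧ E ∣ F ∧ E ∣ V ∧ ‖shiftedGaussSum ψ φ F V‖ ^ 2 ≤
      Fintype.card K ^ F.natDegree * Fintype.card K ^ E.natDegree := by
  obtain ⟨E, F₀, V₀, hE, hF₀, rfl, rfl, hcop⟩ := exists_gcd_factorization hF V
  exact ⟨E, hE, dvd_mul_right _ _, dvd_mul_right _ _,
    norm_shiftedGaussSum_sq_le hψ hE hF₀ hcop hφ⟩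

lemma sum_degreeLTFinset_mul {M : Type*} [AddCommMonoid M] {A B : K[X]} (hA : A.Monic)
    (hB : B.Monic) (φ : K[X] → M) :
    ∑ x ∈ degreeLTFinset K (A * B).natDegree, φ x =
      ∑ y ∈ degreeLTFinset K A.natDegree, ∑ z ∈ degreeLTFinset K B.natDegree,
        φ (A * z + y) := by
  rw [sum_degreeLTFinset_eq_sum_divMod hA (by rw [hA.natDegree_mul hB]; omega),
    hA.natDegree_mul hB, Nat.add_sub_cancel_left, Finset.sum_comm]

lemma shiftedGaussSum_mul_of_periodicMod_left (hψ : ψ ≠ 1) {A B : K[X]} (hA : A.Monic)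
    (hB : B.Monic) (hφ : PeriodicMod A φ) (hV : ¬ B ∣ V) :
    shiftedGaussSum ψ φ (A * B) V = 0 := by
  rw [shiftedGaussSum, sum_degreeLTFinset_mul hA hB]
  refine Finset.sum_eq_zero fun y _ ↦ ?_
  have hterm (z : K[X]) : φ (A * z + y) * residueChar ψ (A * B) ((A * z + y) * V) =
      φ y * residueChar ψ (A * B) (y * V) * residueChar ψ B (z * V) := by
    have hφy : φ (A * z + y) = φ y := hφ _ _ ⟨z, by ring⟩
    rw [hφy, show (A * z + y) * V = y * V + z * V * A by ring, AddChar.map_add_eq_mul,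
      mul_comm A B, residueChar_mul_mul_right hB hA]
    ring
  simp only [hterm]
  rw [← Finset.mul_sum, sum_residues_residueChar hψ hB, if_neg hV, mul_zero]

end Field

end GaussSum

section InverseTerm
variable {R : Type*} [CommRing R]

lemma dvd_invMod_sub_invMod {F a b : R[X]} (h : F ∣ a - b) (hb : IsCoprime F b) :
    F ∣ invMod F a - invMod F b := by
  obtain ⟨u, hu⟩ := dvd_mul_invMod_sub_one ((isCoprime_congr h).2 hb)
  obtain ⟨w, hw⟩ := h
  simpa using dvd_sub_mul_invMod hb (b := invMod F a) (x := 1)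
    ⟨u - w * invMod F a, by linear_combination hu - invMod F a * hw⟩

/-- The summand of the Gauss sum `∑_x φ(x) e(x V / F)` after the substitution `x ↦ x⁻¹ mod F`. -/
def gaussSumInvTerm (ψ : AddChar R ℂ) (φ : R[X] → ℂ) (F V x : R[X]) : ℂ :=
  if IsCoprime F x then φ (invMod F x) * residueChar ψ F (invMod F x * V) else 0

lemma gaussSumInvTerm_periodicMod {ψ : AddChar R ℂ} {F : R[X]} (hF : F.Monic) {φ : R[X] → ℂ}
    (hφ : PeriodicMod F φ) (V : R[X]) : PeriodicMod F (gaussSumInvTerm ψ φ F V) := by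
  intro x y hxy
  simp only [gaussSumInvTerm, isCoprime_congr hxy]
  split_ifs with hy
  · exact (hφ.mul (residueChar_mul_periodicMod hF V)) _ _ (dvd_invMod_sub_invMod hxy hy)
  · rfl

lemma sum_gaussSumInvTerm [Nontrivial R] [Fintype R] {ψ : AddChar R ℂ} {F : R[X]}
    (hF : F.Monic) {φ : R[X] → ℂ} (hφ : IsUnitChar F φ) (V : R[X]) :
    ∑ x ∈ degreeLTFinset R F.natDegree, gaussSumInvTerm ψ φ F V x =
      shiftedGaussSum ψ φ F V := by
  simp only [gaussSumInvTerm]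
  rw [← Finset.sum_filter,
    sum_coprime_invMod hF (hφ.periodic.mul (residueChar_mul_periodicMod hF V)),
    Finset.sum_filter_of_ne fun x _ hx ↦ ?_, shiftedGaussSum]
  by_contra h
  simp [hφ.eq_zero x h] at hx

lemma residueChar_mul_invMod_comm [Nontrivial R] {ψ : AddChar R ℂ} {F G W : R[X]}
    (hF : F.Monic) (hG : G.Monic) (hFG : IsCoprime F G)
    (hW : W.degree < ((F * G).natDegree - 1 : ℕ)) :
    residueChar ψ F (W * invMod F G) = residueChar ψ G (-(W * invMod G F)) := by
  have hsum : residueCoeff F (W * invMod F G) + residueCoeff G (W * invMod G F) = 0 := by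
    rw [← residueCoeff_mul_left hF hG (mul_dvd_invMod_mul_add_invMod_mul_sub_one hFG),
      residueCoeff_eq_zero_of_degree_lt (hF.mul hG) hW]
  rw [residueChar_apply, residueChar_apply, map_neg, eq_neg_of_add_eq_zero_left hsum]

end InverseTerm

section CubicGaussSum
variable {K : Type*} [Field K] {ω : MulChar K ℂ}

lemma residueSymbol_invMod (hω : ω ^ 3 = 1) {F a : K[X]} (hF : F.Monic) (h : IsCoprime F a) :
    residueSymbol ω F (invMod F a) = residueSymbol ω F a ^ 2 := by
  have hinv : residueSymbol ω F a * residueSymbol ω F (invMod F a) = 1 := by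
    rw [← residueSymbol_mul_right hF,
      residueSymbol_periodicMod hF _ 1 (dvd_mul_invMod_sub_one h), residueSymbol_one_right]
  linear_combination residueSymbol ω F a ^ 2 * hinv -
    residueSymbol ω F (invMod F a) * residueSymbol_pow_three hω hF h

lemma gaussSumInvTerm_flip {ψ : AddChar K ℂ} (hω : ω ^ 3 = 1) {F a V : K[X]} (hF : F.Monic)
    (ha : a.Monic) (c : Kˣ) (hV : V.degree < (F.natDegree - 1 : ℕ)) :
    gaussSumInvTerm ψ (residueSymbol ω F) F V (C (c : K) * a) = ω c ^ (2 * F.natDegree) *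
      gaussSumInvTerm ψ (residueSymbol ω a) a (C (-(c : K)⁻¹) * V) F := by
  have hcu : C (c : K) * C (c : K)⁻¹ = (1 : K[X]) := by
    rw [← C_mul, mul_inv_cancel₀ c.ne_zero, C_1]
  have hiff : IsCoprime F (C (c : K) * a) ↔ IsCoprime a F := by
    rw [isCoprime_mul_unit_left_right (IsUnit.of_mul_eq_one _ hcu), isCoprime_comm]
  simp only [gaussSumInvTerm, hiff]
  split_ifs with haF
  swap
  · rw [mul_zero]
  have hcop := hiff.2 haF
  have hsymbol : residueSymbol ω F (invMod F (C (c : K) * a)) =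
      ω c ^ (2 * F.natDegree) * residueSymbol ω a (invMod a F) := by
    rw [residueSymbol_invMod hω hF hcop, residueSymbol_invMod hω ha haF,
      residueSymbol_mul_right hF, residueSymbol_C, residueSymbol_comm hω F a]
    ring
  have hinv : F ∣ invMod F (C (c : K) * a) * V - C (c : K)⁻¹ * V * invMod F a := by
    obtain ⟨w, hw⟩ := dvd_sub_mul_invMod haF.symm (b := C (c : K) * invMod F (C (c : K) * a))
      (x := 1) (by convert dvd_mul_invMod_sub_one hcop using 1; ring)
    exact ⟨C (c : K)⁻¹ * V * w, by
      linear_combination (C (c : K)⁻¹ * V) * hw - invMod F (C (c : K) * a) * V * hcu⟩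
  have hW : (C (c : K)⁻¹ * V).degree < ((F * a).natDegree - 1 : ℕ) := by
    rw [degree_C_mul (inv_ne_zero c.ne_zero), hF.natDegree_mul ha]
    exact hV.trans_le (by exact_mod_cast (by omega))
  rw [hsymbol, residueChar_periodicMod hF _ _ hinv,
    residueChar_mul_invMod_comm hF ha haF.symm hW, C_neg,
    show -(C (c : K)⁻¹ * V * invMod a F) = invMod a F * (-C (c : K)⁻¹ * V) by ring, mul_assoc]

variable [Fintype K]

/-- The cubic Gauss sum `G(V, F) = ∑_{x mod F} (x / F) e(x V / F)`. -/
def cubicGaussSum (ψ : AddChar K ℂ) (ω : MulChar K ℂ) (V F : K[X]) : ℂ :=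
  shiftedGaussSum ψ (residueSymbol ω F) F V

/-- The sum of the cubic Gauss sums `G(V, F)` over the monic moduli `F` of degree `n`. -/
def cubicGaussSumOfDegree (ψ : AddChar K ℂ) (ω : MulChar K ℂ) (V : K[X]) (n : ℕ) : ℂ :=
  ∑ F ∈ monicsOfDegree K n, cubicGaussSum ψ ω V F

variable {ψ : AddChar K ℂ}

lemma cubicGaussSum_one (V : K[X]) : cubicGaussSum ψ ω V 1 = 1 := by
  rw [cubicGaussSum, shiftedGaussSum_one, residueSymbol_one_left]

lemma residueSymbol_mul_cubicGaussSum_mul (hω : ω ^ 3 = 1) {F c : K[X]} (hF : F.Monic)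
    (hc : IsCoprime F c) (V : K[X]) :
    residueSymbol ω F c * cubicGaussSum ψ ω (c * V) F = cubicGaussSum ψ ω V F :=
  (isUnitChar_residueSymbol hω hF).mul_shiftedGaussSum_mul hF hc V

lemma cubicGaussSum_pow_three_mul (hω : ω ^ 3 = 1) {F c : K[X]} (hF : F.Monic)
    (hc : IsCoprime F c) (V : K[X]) :
    cubicGaussSum ψ ω (c ^ 3 * V) F = cubicGaussSum ψ ω V F := by
  rw [← residueSymbol_mul_cubicGaussSum_mul hω hF (hc.pow_right (n := 3)) V,
    residueSymbol_pow_right hF, residueSymbol_pow_three hω hF hc, one_mul]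

lemma cubicGaussSum_mul (hω : ω ^ 3 = 1) {F G : K[X]} (hF : F.Monic) (hG : G.Monic)
    (hFG : IsCoprime F G) (V : K[X]) :
    cubicGaussSum ψ ω V (F * G) = cubicGaussSum ψ ω (G * V) F * cubicGaussSum ψ ω V G := by
  have hcrt : cubicGaussSum ψ ω V (F * G) = residueSymbol ω F G * residueSymbol ω G F *
      (cubicGaussSum ψ ω V F * cubicGaussSum ψ ω V G) := by
    have hsymbol : residueSymbol ω (F * G) =
        fun x ↦ residueSymbol ω F x * residueSymbol ω G x :=
      funext fun x ↦ residueSymbol_mul_left hF hG x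
    rw [cubicGaussSum, hsymbol]
    exact shiftedGaussSum_mul_of_isCoprime hF hG hFG (isUnitChar_residueSymbol hω hF)
      (isUnitChar_residueSymbol hω hG) V
  rw [hcrt, residueSymbol_comm hω G F, ← residueSymbol_mul_cubicGaussSum_mul hω hF hFG V]
  linear_combination (cubicGaussSum ψ ω (G * V) F * cubicGaussSum ψ ω V G) *
    residueSymbol_pow_three hω hF hFG

lemma cubicGaussSum_pow_succ_of_not_dvd (hψ : ψ ≠ 1) {P : K[X]} (hP : P.Monic) {i : ℕ}
    {V : K[X]} (hV : ¬ P ^ i ∣ V) : cubicGaussSum ψ ω V (P ^ (i + 1)) = 0 := by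
  have hper : PeriodicMod P (residueSymbol ω (P * P ^ i)) := fun a b h ↦ by
    rw [← pow_succ', residueSymbol_pow_left hP, residueSymbol_pow_left hP,
      residueSymbol_periodicMod hP a b h]
  rw [cubicGaussSum, pow_succ']
  exact shiftedGaussSum_mul_of_periodicMod_left hψ hP (hP.pow i) hper hV

lemma sum_eq_zero_of_apply_ne_one {F a : K[X]} (hF : F.Monic) {φ : K[X] → ℂ}
    (hφ : IsUnitChar F φ) (ha : IsCoprime F a) (h1 : φ a ≠ 1) :
    ∑ x ∈ degreeLTFinset K F.natDegree, φ x = 0 := by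
  have h := sum_degreeLTFinset_mul_left hF hφ.periodic ha
  simp only [hφ.map_mul] at h
  rw [← Finset.mul_sum] at h
  exact (mul_left_eq_self₀.1 h).resolve_left h1

lemma cubicGaussSum_pow_of_dvd (hω : ω ^ 3 = 1) (hω1 : ω ≠ 1) {P : K[X]} (hP : P.Monic)
    (hi : Irreducible P) {i : ℕ} (h3 : ¬ 3 ∣ i) {V : K[X]} (hV : P ^ i ∣ V) :
    cubicGaussSum ψ ω V (P ^ i) = 0 := by
  obtain ⟨a, ha, ha1⟩ := exists_residueSymbol_ne_one hω1 hP hi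
  have he (x : K[X]) : residueChar ψ (P ^ i) (x * V) = 1 := by
    rw [residueChar_periodicMod (hP.pow i) _ 0 (by simpa using hV.mul_left x),
      AddChar.map_zero_eq_one]
  rw [cubicGaussSum, shiftedGaussSum]
  simp only [he, mul_one]
  refine sum_eq_zero_of_apply_ne_one (hP.pow i) (isUnitChar_residueSymbol hω (hP.pow i))
    ha.pow_left ?_
  rw [residueSymbol_pow_left hP]
  exact pow_ne_one_of_pow_prime_eq_one (residueSymbol_pow_three hω hP ha) ha1 h3

lemma mem_degreeLTFinset_succ_sdiff {n : ℕ} {x : K[X]} :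
    x ∈ degreeLTFinset K (n + 1) \ degreeLTFinset K n ↔ x.degree = n := by
  rw [Finset.mem_sdiff, mem_degreeLTFinset, mem_degreeLTFinset, not_lt]
  rcases eq_or_ne x 0 with rfl | hx
  · simp
  · rw [degree_eq_natDegree hx]
    norm_cast
    omega

lemma sum_degreeLTFinset_succ {M : Type*} [AddCommMonoid M] (n : ℕ) (f : K[X] → M) :
    ∑ x ∈ degreeLTFinset K (n + 1), f x = ∑ x ∈ degreeLTFinset K n, f x +
      ∑ c : Kˣ, ∑ a ∈ monicsOfDegree K n, f (C (c : K) * a) := by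
  rw [← Finset.sum_sdiff (degreeLTFinset_mono n.le_succ), add_comm, ← Finset.sum_product']
  congr 1
  symm
  refine Finset.sum_bij (fun p _ ↦ C (p.1 : K) * p.2) ?_ ?_ (fun x hx ↦ ?_) fun _ _ ↦ rfl
  · rintro ⟨c, a⟩ h
    have ha := mem_monicsOfDegree.1 (Finset.mem_product.1 h).2
    rw [mem_degreeLTFinset_succ_sdiff, degree_C_mul c.ne_zero, degree_eq_natDegree ha.1.ne_zero,
      ha.2]
  · rintro ⟨c, a⟩ h ⟨c', a'⟩ h' he
    have ha := (mem_monicsOfDegree.1 (Finset.mem_product.1 h).2).1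
    have ha' := (mem_monicsOfDegree.1 (Finset.mem_product.1 h').2).1
    have hc : c = c' := Units.ext <| by
      simpa [leadingCoeff_mul, ha.leadingCoeff, ha'.leadingCoeff] using congrArg leadingCoeff he
    subst hc
    exact Prod.ext rfl (mul_left_cancel₀ (C_ne_zero.2 c.ne_zero) he)
  · rw [mem_degreeLTFinset_succ_sdiff] at hx
    have hl : x.leadingCoeff ≠ 0 := leadingCoeff_ne_zero.2 fun h ↦ by simp [h] at hx
    refine ⟨(Units.mk0 _ hl, C (x.leadingCoeff⁻¹) * x), ?_, ?_⟩
    · rw [Finset.mem_product, mem_monicsOfDegree]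
      refine ⟨mem_univ _, ?_, ?_⟩
      · rw [Monic, leadingCoeff_mul, leadingCoeff_C, inv_mul_cancel₀ hl]
      · rw [natDegree_C_mul (inv_ne_zero hl), natDegree_eq_of_degree_eq_some hx]
    · rw [Units.val_mk0, ← mul_assoc, ← C_mul, mul_inv_cancel₀ hl, C_1, one_mul]

lemma sum_degreeLTFinset_eq_sum_monicsOfDegree {M : Type*} [AddCommMonoid M] (n : ℕ)
    (f : K[X] → M) :
    ∑ x ∈ degreeLTFinset K n, f x =
      f 0 + ∑ m ∈ range n, ∑ c : Kˣ, ∑ a ∈ monicsOfDegree K m, f (C (c : K) * a) := by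
  induction n with
  | zero => simp [degreeLTFinset_zero]
  | succ n ih => rw [sum_degreeLTFinset_succ, ih, Finset.sum_range_succ, add_assoc]

lemma sum_units_mulChar_pow (hω : ω ^ 3 = 1) (hω1 : ω ≠ 1) (k : ℕ) :
    ∑ c : Kˣ, ω (c : K) ^ k = if 3 ∣ k then (Fintype.card K : ℂ) - 1 else 0 := by
  have hiff : ((ω : K →* ℂ).comp (Units.coeHom K)) ^ k = 1 ↔ 3 ∣ k := by
    rw [← orderOf_eq_prime hω hω1, orderOf_dvd_iff_pow_eq_one, MonoidHom.ext_iff, MulChar.ext_iff]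
    simp [MulChar.pow_apply_coe, MulChar.one_apply_coe]
  have hsum := sum_hom_units (((ω : K →* ℂ).comp (Units.coeHom K)) ^ k)
  simp only [hiff, Fintype.card_units, Nat.cast_ite, Nat.cast_zero,
    Nat.cast_sub Fintype.card_pos, Nat.cast_one] at hsum
  exact hsum

lemma sum_gaussSumInvTerm_C_mul (hω : ω ^ 3 = 1) {a V : K[X]} {n : ℕ} (ha : a.Monic)
    (han : a.natDegree ≤ n) (c : Kˣ) (hV : V ∈ degreeLTFinset K (n - 1)) :
    ∑ F ∈ monicsOfDegree K n, gaussSumInvTerm ψ (residueSymbol ω F) F V (C (c : K) * a) =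
      (Fintype.card K : ℂ) ^ (n - a.natDegree) *
        (ω c ^ (2 * n + a.natDegree) * cubicGaussSum ψ ω V a) := by
  have hflip : ∀ F ∈ monicsOfDegree K n,
      gaussSumInvTerm ψ (residueSymbol ω F) F V (C (c : K) * a) = ω c ^ (2 * n) *
        gaussSumInvTerm ψ (residueSymbol ω a) a (C (-(c : K)⁻¹) * V) F := fun F hFn ↦ by
    obtain ⟨hF, rfl⟩ := mem_monicsOfDegree.1 hFn
    exact gaussSumInvTerm_flip hω hF ha c (mem_degreeLTFinset.1 hV)
  have hscale : cubicGaussSum ψ ω (C (-(c : K)⁻¹) * V) a =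
      ω c ^ a.natDegree * cubicGaussSum ψ ω V a := by
    have hcop : IsCoprime a (C (-(c : K)⁻¹)) :=
      ⟨0, C (-(c : K)), by rw [zero_mul, zero_add, ← C_mul, neg_mul_neg,
        mul_inv_cancel₀ c.ne_zero, C_1]⟩
    rw [← residueSymbol_mul_cubicGaussSum_mul (ψ := ψ) hω ha hcop V, residueSymbol_C,
      ← mul_assoc, ← mul_pow, ← map_mul, mul_neg, mul_inv_cancel₀ c.ne_zero,
      mulChar_neg_one_eq_one hω, one_pow, one_mul]
  rw [Finset.sum_congr rfl hflip, ← Finset.mul_sum, sum_monicsOfDegree_of_periodicMod ha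
      (gaussSumInvTerm_periodicMod ha (residueSymbol_periodicMod ha) _) han,
    sum_gaussSumInvTerm ha (isUnitChar_residueSymbol hω ha), ← cubicGaussSum, hscale,
    nsmul_eq_mul, pow_add]
  push_cast
  ring

lemma cubicGaussSumOfDegree_eq (hω : ω ^ 3 = 1) {V : K[X]} {n : ℕ} (hn : 1 ≤ n)
    (hV : V ∈ degreeLTFinset K (n - 1)) :
    cubicGaussSumOfDegree ψ ω V n = ∑ m ∈ range n, (Fintype.card K : ℂ) ^ (n - m) *
      (∑ c : Kˣ, ω (c : K) ^ (2 * n + m)) * cubicGaussSumOfDegree ψ ω V m := by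
  have hterm : ∀ F ∈ monicsOfDegree K n, cubicGaussSum ψ ω V F = ∑ m ∈ range n, ∑ c : Kˣ,
      ∑ a ∈ monicsOfDegree K m,
        gaussSumInvTerm ψ (residueSymbol ω F) F V (C (c : K) * a) := fun F hFn ↦ by
    obtain ⟨hF, rfl⟩ := mem_monicsOfDegree.1 hFn
    rw [cubicGaussSum, ← sum_gaussSumInvTerm hF (isUnitChar_residueSymbol hω hF),
      sum_degreeLTFinset_eq_sum_monicsOfDegree, gaussSumInvTerm, if_neg, zero_add]
    intro h
    have := natDegree_eq_zero_of_isUnit (isCoprime_zero_right.1 h)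
    omega
  rw [cubicGaussSumOfDegree, Finset.sum_congr rfl hterm, Finset.sum_comm]
  refine Finset.sum_congr rfl fun m hm ↦ ?_
  rw [Finset.sum_comm, Finset.mul_sum, Finset.sum_mul]
  refine Finset.sum_congr rfl fun c _ ↦ ?_
  rw [Finset.sum_comm, cubicGaussSumOfDegree, Finset.mul_sum]
  refine Finset.sum_congr rfl fun a ham ↦ ?_
  obtain ⟨ha, rfl⟩ := mem_monicsOfDegree.1 ham
  rw [sum_gaussSumInvTerm_C_mul hω ha (Finset.mem_range.1 hm).le c hV]
  ring

-- Only the `m ≡ n (mod 3)` survive in the previous recurrence, so the sums at `n` and `n + 3`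
-- differ by the factor `q ^ 3` and the single new term `m = n`.
lemma cubicGaussSumOfDegree_add_three (hω : ω ^ 3 = 1) (hω1 : ω ≠ 1) {V : K[X]} {n : ℕ}
    (hn : 1 ≤ n) (hV : V ∈ degreeLTFinset K (n - 1)) :
    cubicGaussSumOfDegree ψ ω V (n + 3) =
      (Fintype.card K : ℂ) ^ 4 * cubicGaussSumOfDegree ψ ω V n := by
  have hr := cubicGaussSumOfDegree_eq (ψ := ψ) hω hn hV
  rw [cubicGaussSumOfDegree_eq hω (by omega) (degreeLTFinset_mono (by omega) hV),
    Finset.sum_range_succ, Finset.sum_range_succ, Finset.sum_range_succ]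
  simp only [sum_units_mulChar_pow hω hω1] at hr ⊢
  rw [if_pos (by omega), if_neg (by omega), if_neg (by omega)]
  have hinit : ∑ m ∈ range n, (Fintype.card K : ℂ) ^ (n + 3 - m) *
      (if 3 ∣ 2 * (n + 3) + m then (Fintype.card K : ℂ) - 1 else 0) *
        cubicGaussSumOfDegree ψ ω V m =
      (Fintype.card K : ℂ) ^ 3 * cubicGaussSumOfDegree ψ ω V n := by
    rw [hr, Finset.mul_sum]
    refine Finset.sum_congr rfl fun m hm ↦ ?_
    rw [Finset.mem_range] at hm
    have hiff : 3 ∣ 2 * (n + 3) + m ↔ 3 ∣ 2 * n + m := by omega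
    simp only [hiff]
    rw [show n + 3 - m = 3 + (n - m) by omega, pow_add]
    ring
  rw [hinit, show n + 3 - n = 3 by omega]
  ring

end CubicGaussSum

/-! ### Norms and prime factors -/

section NormPow
variable {K : Type*} [Field K] [Fintype K]

/-- The real power `|f|^x` of the norm `|f| = q ^ deg f`. -/
def normPow (x : ℝ) (f : K[X]) : ℝ := (Fintype.card K : ℝ) ^ (x * (f.natDegree : ℝ))

lemma one_lt_card_real : (1 : ℝ) < Fintype.card K := by
  exact_mod_cast Fintype.one_lt_card

lemma card_pos_real : (0 : ℝ) < Fintype.card K := zero_lt_one.trans one_lt_card_real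

lemma normPow_pos (x : ℝ) (f : K[X]) : 0 < normPow x f := Real.rpow_pos_of_pos card_pos_real _

lemma normPow_one (x : ℝ) : normPow x (1 : K[X]) = 1 := by simp [normPow]

lemma normPow_mul (x : ℝ) {f g : K[X]} (hf : f ≠ 0) (hg : g ≠ 0) :
    normPow x (f * g) = normPow x f * normPow x g := by
  rw [normPow, normPow, normPow, natDegree_mul hf hg, ← Real.rpow_add card_pos_real]
  push_cast
  ring_nf

lemma normPow_pow (x : ℝ) (f : K[X]) (n : ℕ) : normPow x (f ^ n) = normPow x f ^ n := by
  rw [normPow, normPow, natDegree_pow, ← Real.rpow_natCast, ← Real.rpow_mul card_pos_real.le]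
  push_cast
  ring_nf

lemma normPow_add (x y : ℝ) (f : K[X]) : normPow (x + y) f = normPow x f * normPow y f := by
  rw [normPow, normPow, normPow, ← Real.rpow_add card_pos_real]
  ring_nf

lemma normPow_le_of_dvd {x : ℝ} (hx : 0 ≤ x) {f g : K[X]} (hg : g ≠ 0) (h : f ∣ g) :
    normPow x f ≤ normPow x g := by
  refine Real.rpow_le_rpow_of_exponent_le one_lt_card_real.le ?_
  have := natDegree_le_of_dvd h hg
  gcongr

lemma one_le_normPow {x : ℝ} (hx : 0 ≤ x) (f : K[X]) : 1 ≤ normPow x f :=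
  Real.one_le_rpow one_lt_card_real.le (by positivity)

lemma normPow_prod {ι : Type*} (x : ℝ) (s : Finset ι) (f : ι → K[X]) (hf : ∀ i ∈ s, f i ≠ 0) :
    normPow x (∏ i ∈ s, f i) = ∏ i ∈ s, normPow x (f i) := by
  induction s using Finset.induction_on with
  | empty => simp [normPow_one]
  | insert i s hi ih =>
    rw [Finset.prod_insert hi, Finset.prod_insert hi,
      normPow_mul x (hf i (Finset.mem_insert_self _ _)), ih]
    · exact fun j hj ↦ hf j (Finset.mem_insert_of_mem hj)
    · exact Finset.prod_ne_zero_iff.2 fun j hj ↦ hf j (Finset.mem_insert_of_mem hj)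

end NormPow

section MonicPrimes
variable {K : Type} [Field K]

/-- The product of a finite set of monic irreducibles. -/
def primeProd (s : Finset (MonicIrred K)) : K[X] := ∏ P ∈ s, P.1

lemma monic_primeProd (s : Finset (MonicIrred K)) : (primeProd s).Monic :=
  monic_prod_of_monic _ _ fun P _ ↦ P.2.1

lemma MonicIrred.eq_of_dvd {P Q : MonicIrred K} (h : P.1 ∣ Q.1) : P = Q :=
  Subtype.ext (eq_of_monic_of_associated P.2.1 Q.2.1 (P.2.2.associated_of_dvd Q.2.2 h))

lemma isCoprime_of_forall_not_dvd {F G : K[X]} (hF : F ≠ 0)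
    (h : ∀ P : MonicIrred K, P.1 ∣ F → ¬ P.1 ∣ G) : IsCoprime F G := by
  refine isCoprime_of_irreducible_dvd (fun h0 ↦ hF h0.1) fun z hz hzF hzG ↦ ?_
  have ha : Associated z (normalize z) := (normalize_associated z).symm
  exact h ⟨normalize z, monic_normalize hz.ne_zero, ha.irreducible hz⟩ (ha.dvd_iff_dvd_left.1 hzF)
    (ha.dvd_iff_dvd_left.1 hzG)

lemma MonicIrred.isCoprime_iff (P : MonicIrred K) (F : K[X]) : IsCoprime P.1 F ↔ ¬ P.1 ∣ F :=
  P.2.2.coprime_iff_not_dvd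

lemma dvd_primeProd_iff {s : Finset (MonicIrred K)} {P : MonicIrred K} :
    P.1 ∣ primeProd s ↔ P ∈ s := by
  refine ⟨fun h ↦ ?_, fun h ↦ Finset.dvd_prod_of_mem _ h⟩
  obtain ⟨Q, hQ, hPQ⟩ := (Prime.dvd_finsetProd_iff P.2.2.prime _).1 h
  exact MonicIrred.eq_of_dvd hPQ ▸ hQ

lemma primeProd_dvd {s : Finset (MonicIrred K)} {F : K[X]} (h : ∀ P ∈ s, P.1 ∣ F) :
    primeProd s ∣ F := by
  refine Finset.prod_dvd_of_coprime (fun P _ Q _ hPQ ↦ ?_) h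
  exact (P.isCoprime_iff _).2 fun hd ↦ hPQ (MonicIrred.eq_of_dvd hd)

lemma isCoprime_primeProd_iff {s : Finset (MonicIrred K)} {F : K[X]} :
    IsCoprime F (primeProd s) ↔ ∀ P ∈ s, ¬ P.1 ∣ F := by
  rw [primeProd, IsCoprime.prod_right_iff]
  exact forall₂_congr fun P _ ↦ by rw [isCoprime_comm, P.isCoprime_iff]

/-- `E` is monic and all its irreducible factors lie in `s`. -/
def IsSupportedOn (s : Finset (MonicIrred K)) (E : K[X]) : Prop :=
  E.Monic ∧ ∀ P : MonicIrred K, P.1 ∣ E → P ∈ s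

lemma exists_eq_pow_mul (P : MonicIrred K) {E : K[X]} (hE : E.Monic) :
    ∃ i : ℕ, ∃ R : K[X], E = P.1 ^ i * R ∧ R.Monic ∧ ¬ P.1 ∣ R := by
  obtain ⟨R, hR, hd⟩ := (FiniteMultiplicity.of_not_isUnit P.2.2.not_isUnit
    hE.ne_zero).exists_eq_pow_mul_and_not_dvd
  refine ⟨_, R, hR, ?_, hd⟩
  exact (P.2.1.pow _).of_mul_monic_left (hR ▸ hE)

lemma MonicIrred.natDegree_pos (P : MonicIrred K) : 0 < P.1.natDegree := P.2.2.natDegree_pos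

lemma IsSupportedOn.eq_one {E : K[X]} (hE : IsSupportedOn ∅ E) : E = 1 := by
  by_contra h1
  obtain ⟨P, hP, hi, hd⟩ := exists_monic_irreducible_factor E
    fun hu ↦ h1 (hE.1.eq_one_of_isUnit hu)
  exact Finset.notMem_empty _ (hE.2 ⟨P, hP, hi⟩ hd)

lemma IsSupportedOn.of_eq_pow_mul {s : Finset (MonicIrred K)} {P : MonicIrred K} {E R : K[X]}
    {i : ℕ} (hE : IsSupportedOn (insert P s) E) (h : E = P.1 ^ i * R) (hR : R.Monic)
    (hPR : ¬ P.1 ∣ R) : IsSupportedOn s R :=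
  ⟨hR, fun Q hQ ↦ (Finset.mem_insert.1 (hE.2 Q (h ▸ hQ.mul_left _))).resolve_left
    fun hQP ↦ hPR (hQP ▸ hQ)⟩

lemma finite_setOf_natDegree_lt [Finite K] (B : ℕ) :
    {P : MonicIrred K | P.1.natDegree < B}.Finite := by
  have := Fintype.ofFinite K
  have h : Set.InjOn (fun P : MonicIrred K ↦ P.1) {P | P.1.natDegree < B} :=
    fun P _ Q _ h ↦ Subtype.ext h
  refine Set.Finite.of_finite_image ?_ h
  refine ((range B).biUnion (monicsOfDegree K)).finite_toSet.subset ?_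
  rintro _ ⟨P, hP, rfl⟩
  simp only [Finset.coe_biUnion, Set.mem_iUnion]
  exact ⟨_, Finset.mem_coe.2 (Finset.mem_range.2 hP),
    Finset.mem_coe.2 (mem_monicsOfDegree.2 ⟨P.2.1, rfl⟩)⟩

end MonicPrimes

section Divisors
variable {K : Type} [Field K] [Fintype K]

/-- The monic divisors of a nonzero polynomial. -/
def monicDivisors (V : K[X]) : Finset K[X] :=
  ((range (V.natDegree + 1)).biUnion (monicsOfDegree K)).filter (· ∣ V)

lemma mem_monicDivisors {V : K[X]} (hV : V ≠ 0) {E : K[X]} :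
    E ∈ monicDivisors V ↔ E.Monic ∧ E ∣ V := by
  simp only [monicDivisors, Finset.mem_filter, Finset.mem_biUnion, Finset.mem_range,
    mem_monicsOfDegree]
  constructor
  · rintro ⟨⟨_, _, hm, _⟩, hd⟩; exact ⟨hm, hd⟩
  · rintro ⟨hm, hd⟩
    exact ⟨⟨_, Nat.lt_succ_of_le (natDegree_le_of_dvd hd hV), hm, rfl⟩, hd⟩

/-- The monic irreducible divisors of a nonzero polynomial. -/
def monicPrimeFactors (V : K[X]) : Finset (MonicIrred K) :=
  Finset.subtype (fun P : K[X] ↦ P.Monic ∧ Irreducible P) (monicDivisors V)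

lemma mem_monicPrimeFactors {V : K[X]} (hV : V ≠ 0) {P : MonicIrred K} :
    P ∈ monicPrimeFactors V ↔ P.1 ∣ V := by
  refine (Finset.mem_subtype (p := fun P : K[X] ↦ P.Monic ∧ Irreducible P)).trans ?_
  rw [mem_monicDivisors hV]
  exact ⟨fun h ↦ h.2, fun h ↦ ⟨P.2.1, h⟩⟩

lemma normPow_neg_half_le (hcard : 4 ≤ Fintype.card K) (P : MonicIrred K) :
    normPow (-(1 / 2)) P.1 ≤ 1 / 2 := by
  have hq4 : (4 : ℝ) ≤ Fintype.card K := by exact_mod_cast (by omega : 4 ≤ Fintype.card K)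
  have hle : normPow (-(1 / 2)) P.1 ≤ (Fintype.card K : ℝ) ^ (-(1 / 2) : ℝ) := by
    refine Real.rpow_le_rpow_of_exponent_le one_lt_card_real.le ?_
    have : (1 : ℝ) ≤ P.1.natDegree := by exact_mod_cast P.natDegree_pos
    linarith
  refine hle.trans ((Real.rpow_le_rpow_of_nonpos (by norm_num) hq4 (by norm_num)).trans ?_)
  rw [show (4 : ℝ) = 2 ^ (2 : ℝ) by norm_num, ← Real.rpow_mul (by norm_num)]
  norm_num [Real.rpow_neg_one]

lemma sum_geometric_le_two {a : ℝ} (h0 : 0 ≤ a) (h1 : a ≤ 1 / 2) (n : ℕ) :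
    ∑ i ∈ range n, a ^ i ≤ 2 := by
  calc ∑ i ∈ range n, a ^ i ≤ ∑ i ∈ range n, (1 / 2 : ℝ) ^ i :=
        Finset.sum_le_sum fun i _ ↦ pow_le_pow_left₀ h0 h1 i
    _ ≤ 2 := sum_geometric_two_le n

lemma exists_sum_normPow_le_of_isSupportedOn_insert (x : ℝ) {s : Finset (MonicIrred K)}
    {P : MonicIrred K} {T : Finset K[X]} (hT : ∀ E ∈ T, IsSupportedOn (insert P s) E) :
    ∃ (n : ℕ) (T' : Finset K[X]), (∀ E ∈ T', IsSupportedOn s E) ∧ ∑ E ∈ T, normPow x E ≤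
      (∑ i ∈ range n, normPow x P.1 ^ i) * ∑ E ∈ T', normPow x E := by
  choose! i R hR hRm hRd using fun E (hE : E ∈ T) ↦ exists_eq_pow_mul P (hT E hE).1
  refine ⟨T.sup i + 1, T.image R, fun E' hE' ↦ ?_, ?_⟩
  · obtain ⟨E, hE, rfl⟩ := Finset.mem_image.1 hE'
    exact (hT E hE).of_eq_pow_mul (hR E hE) (hRm E hE) (hRd E hE)
  have hinj : Set.InjOn (fun E ↦ (i E, R E)) (T : Set K[X]) := by
    intro E hE E' hE' h
    simp only [Prod.mk.injEq] at h
    rw [hR E hE, hR E' hE', h.1, h.2]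
  have hval : ∀ E ∈ T, normPow x E = normPow x P.1 ^ i E * normPow x (R E) := fun E hE ↦ by
    rw [← normPow_pow, ← normPow_mul _ (P.2.1.pow _).ne_zero (hRm E hE).ne_zero, ← hR E hE]
  have hsub : T.image (fun E ↦ (i E, R E)) ⊆ range (T.sup i + 1) ×ˢ T.image R := by
    intro y hy
    obtain ⟨E, hE, rfl⟩ := Finset.mem_image.1 hy
    exact Finset.mem_product.2 ⟨Finset.mem_range.2 (Nat.lt_succ_of_le (Finset.le_sup (f := i) hE)),
      Finset.mem_image_of_mem R hE⟩
  rw [Finset.sum_congr rfl hval, ← Finset.sum_image (f := fun y : ℕ × K[X] ↦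
    normPow x P.1 ^ y.1 * normPow x y.2) hinj, Finset.sum_mul_sum, ← Finset.sum_product']
  exact Finset.sum_le_sum_of_subset_of_nonneg hsub fun y _ _ ↦
    mul_nonneg (pow_nonneg (normPow_pos _ _).le _) (normPow_pos _ _).le

lemma sum_normPow_neg_half_le (hcard : 4 ≤ Fintype.card K) (s : Finset (MonicIrred K)) :
    ∀ T : Finset K[X], (∀ E ∈ T, IsSupportedOn s E) →
      ∑ E ∈ T, normPow (-(1 / 2)) E ≤ 2 ^ s.card := by
  induction s using Finset.induction_on with
  | empty =>
    intro T hT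
    have hsub : T ⊆ {1} := fun E hE ↦ Finset.mem_singleton.2 (hT E hE).eq_one
    refine (Finset.sum_le_sum_of_subset_of_nonneg hsub fun E _ _ ↦ (normPow_pos _ E).le).trans ?_
    simp [normPow_one]
  | insert P s hPs ih =>
    intro T hT
    obtain ⟨n, T', hT', h⟩ := exists_sum_normPow_le_of_isSupportedOn_insert (-(1 / 2)) hT
    rw [Finset.card_insert_of_notMem hPs, pow_succ']
    exact h.trans (mul_le_mul
      (sum_geometric_le_two (normPow_pos _ _).le (normPow_neg_half_le hcard P) n) (ih T' hT')
      (Finset.sum_nonneg fun E _ ↦ (normPow_pos _ E).le) (by norm_num))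

lemma exists_pow_card_le_normPow {c ε : ℝ} (hc : 1 ≤ c) (hε : 0 < ε) :
    ∃ A : ℝ, 1 ≤ A ∧ ∀ s : Finset (MonicIrred K), c ^ s.card ≤ A * normPow ε (primeProd s) := by
  obtain ⟨B, hB⟩ : ∃ B : ℕ, c ≤ ((Fintype.card K : ℝ) ^ ε) ^ B :=
    (pow_unbounded_of_one_lt c (Real.one_lt_rpow one_lt_card_real hε)).imp fun _ h ↦ h.le
  set T := (finite_setOf_natDegree_lt (K := K) B).toFinset
  refine ⟨c ^ T.card, one_le_pow₀ hc, fun s ↦ ?_⟩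
  have hle : ∀ P ∈ s, c ≤ normPow ε P.1 * (if P ∈ T then c else 1) := by
    intro P _
    split_ifs with h
    · exact le_mul_of_one_le_left (by linarith) (one_le_normPow hε.le _)
    · rw [mul_one]
      have h' : B ≤ P.1.natDegree := by simpa [T] using h
      refine hB.trans ?_
      rw [← Real.rpow_natCast, ← Real.rpow_mul card_pos_real.le]
      refine Real.rpow_le_rpow_of_exponent_le one_lt_card_real.le ?_
      gcongr
  have hlarge : ∏ P ∈ s, (if P ∈ T then c else 1) ≤ c ^ T.card := by
    rw [← Finset.prod_filter, Finset.prod_const]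
    refine pow_le_pow_right₀ hc (Finset.card_le_card ?_)
    intro P hP
    exact (Finset.mem_filter.1 hP).2
  calc c ^ s.card = ∏ _P ∈ s, c := (Finset.prod_const c).symm
    _ ≤ ∏ P ∈ s, (normPow ε P.1 * if P ∈ T then c else 1) :=
      Finset.prod_le_prod (fun _ _ ↦ by linarith) hle
    _ = normPow ε (primeProd s) * ∏ P ∈ s, (if P ∈ T then c else 1) := by
      rw [Finset.prod_mul_distrib, primeProd, normPow_prod _ _ _ fun P _ ↦ P.2.1.ne_zero]
    _ ≤ _ := by
      rw [mul_comm]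
      exact mul_le_mul_of_nonneg_right hlarge (normPow_pos _ _).le

lemma primeProd_monicPrimeFactors_dvd {V : K[X]} (hV : V ≠ 0) :
    primeProd (monicPrimeFactors V) ∣ V :=
  primeProd_dvd fun _ hP ↦ (mem_monicPrimeFactors hV).1 hP

lemma isSupportedOn_monicPrimeFactors {V E : K[X]} (hV : V ≠ 0) (hE : E ∈ monicDivisors V) :
    IsSupportedOn (monicPrimeFactors V) E :=
  ⟨((mem_monicDivisors hV).1 hE).1, fun _ hP ↦
    (mem_monicPrimeFactors hV).2 (hP.trans ((mem_monicDivisors hV).1 hE).2)⟩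

lemma card_monicsOfDegree_filter_dvd_le {E : K[X]} (hE : E.Monic) (n : ℕ) :
    ((monicsOfDegree K n).filter (E ∣ ·)).card ≤
      if E.natDegree ≤ n then Fintype.card K ^ (n - E.natDegree) else 0 := by
  split_ifs with h
  · rw [← card_monicsOfDegree (R := K) (n - E.natDegree)]
    refine (Finset.card_le_card (t := (monicsOfDegree K (n - E.natDegree)).image (E * ·)) ?_).trans
      Finset.card_image_le
    intro F hF
    obtain ⟨hF, G, rfl⟩ := Finset.mem_filter.1 hF
    obtain ⟨hm, hd⟩ := mem_monicsOfDegree.1 hF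
    have hG : G.Monic := hE.of_mul_monic_left hm
    refine Finset.mem_image.2 ⟨G, mem_monicsOfDegree.2 ⟨hG, ?_⟩, rfl⟩
    rw [hE.natDegree_mul hG] at hd
    omega
  · refine Nat.le_of_eq (Finset.card_eq_zero.2 (Finset.filter_eq_empty_iff.2 fun F hF hd ↦ h ?_))
    obtain ⟨hm, hd'⟩ := mem_monicsOfDegree.1 hF
    exact hd' ▸ natDegree_le_of_dvd hd hm.ne_zero

variable {ψ : AddChar K ℂ} {ω : MulChar K ℂ}

lemma norm_shiftedGaussSum_le_sum (hψ : ψ ≠ 1) {F V : K[X]} (hF : F.Monic) {φ : K[X] → ℂ}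
    (hφ : IsUnitChar F φ) {T : Finset K[X]} (hT : ∀ E : K[X], E.Monic → E ∣ F → E ∣ V → E ∈ T) :
    ‖shiftedGaussSum ψ φ F V‖ ≤
      normPow (1 / 2) F * ∑ E ∈ T, if E ∣ F ∧ E ∣ V then normPow (1 / 2) E else 0 := by
  obtain ⟨E, hE, hEF, hEV, h⟩ := exists_norm_shiftedGaussSum_sq_le hψ hF hφ V
  have hsq : ∀ f : K[X], normPow (1 / 2) f ^ 2 = (Fintype.card K : ℝ) ^ f.natDegree := by
    intro f
    rw [normPow, ← Real.rpow_natCast, ← Real.rpow_mul card_pos_real.le, ← Real.rpow_natCast]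
    congr 1
    push_cast
    ring
  have hroot : ‖shiftedGaussSum ψ φ F V‖ ≤ normPow (1 / 2) F * normPow (1 / 2) E := by
    refine abs_le_of_sq_le_sq' ?_ (mul_pos (normPow_pos _ _) (normPow_pos _ _)).le |>.2
    rw [mul_pow, hsq, hsq]
    exact h
  refine hroot.trans (mul_le_mul_of_nonneg_left ?_ (normPow_pos _ _).le)
  refine le_trans ?_ (Finset.single_le_sum
    (f := fun E ↦ if E ∣ F ∧ E ∣ V then normPow (1 / 2) E else 0) (fun E _ ↦ ?_)
    (hT E hE hEF hEV))
  · simp [hEF, hEV]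
  · split_ifs
    exacts [(normPow_pos _ _).le, le_rfl]

lemma normPow_half_mul_card_le {E : K[X]} (hE : E.Monic) (n : ℕ) :
    normPow (1 / 2) E * ((monicsOfDegree K n).filter (E ∣ ·)).card ≤
      (Fintype.card K : ℝ) ^ (n : ℝ) * normPow (-(1 / 2)) E := by
  have h : (((monicsOfDegree K n).filter (E ∣ ·)).card : ℝ) ≤
      (Fintype.card K : ℝ) ^ ((n : ℝ) - E.natDegree) := by
    have hcard := card_monicsOfDegree_filter_dvd_le hE n
    split_ifs at hcard with hd
    · refine (Nat.cast_le.2 hcard).trans (le_of_eq ?_)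
      rw [← Nat.cast_sub hd, Real.rpow_natCast]
      push_cast
      rfl
    · rw [Nat.le_zero.1 hcard, Nat.cast_zero]
      exact (Real.rpow_pos_of_pos card_pos_real _).le
  refine (mul_le_mul_of_nonneg_left h (normPow_pos _ _).le).trans (le_of_eq ?_)
  rw [normPow, normPow, ← Real.rpow_add card_pos_real, ← Real.rpow_add card_pos_real]
  ring_nf

lemma norm_cubicGaussSumOfDegree_le (hcard : 4 ≤ Fintype.card K) (hψ : ψ ≠ 1) (hω : ω ^ 3 = 1)
    {V : K[X]} (hV : V ≠ 0) (M : ℕ) :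
    ‖cubicGaussSumOfDegree ψ ω V M‖ ≤
      (Fintype.card K : ℝ) ^ (3 / 2 * (M : ℝ)) * 2 ^ (monicPrimeFactors V).card := by
  set q : ℝ := (Fintype.card K : ℝ)
  have hterm : ∀ F ∈ monicsOfDegree K M, ‖cubicGaussSum ψ ω V F‖ ≤
      q ^ (1 / 2 * (M : ℝ)) * ∑ E ∈ monicDivisors V, if E ∣ F then normPow (1 / 2) E else 0 := by
    intro F hF
    obtain ⟨hm, hd⟩ := mem_monicsOfDegree.1 hF
    refine (norm_shiftedGaussSum_le_sum hψ hm (isUnitChar_residueSymbol hω hm)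
      (T := monicDivisors V) fun E hE _ h ↦ (mem_monicDivisors hV).2 ⟨hE, h⟩).trans (le_of_eq ?_)
    rw [normPow, hd]
    congr 1
    refine Finset.sum_congr rfl fun E hE ↦ ?_
    simp [((mem_monicDivisors hV).1 hE).2]
  calc ‖cubicGaussSumOfDegree ψ ω V M‖ ≤ ∑ F ∈ monicsOfDegree K M, ‖cubicGaussSum ψ ω V F‖ :=
      norm_sum_le _ _
    _ ≤ ∑ F ∈ monicsOfDegree K M, q ^ (1 / 2 * (M : ℝ)) *
        ∑ E ∈ monicDivisors V, (if E ∣ F then normPow (1 / 2) E else 0) := Finset.sum_le_sum hterm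
    _ = q ^ (1 / 2 * (M : ℝ)) * ∑ E ∈ monicDivisors V,
        normPow (1 / 2) E * ((monicsOfDegree K M).filter (E ∣ ·)).card := by
      rw [← Finset.mul_sum, Finset.sum_comm]
      congr 1
      refine Finset.sum_congr rfl fun E _ ↦ ?_
      rw [← Finset.sum_filter, Finset.sum_const, nsmul_eq_mul, mul_comm]
    _ ≤ q ^ (1 / 2 * (M : ℝ)) * ∑ E ∈ monicDivisors V, q ^ (M : ℝ) * normPow (-(1 / 2)) E := by
      refine mul_le_mul_of_nonneg_left (Finset.sum_le_sum fun E hE ↦ ?_)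
        (Real.rpow_pos_of_pos card_pos_real _).le
      exact normPow_half_mul_card_le ((mem_monicDivisors hV).1 hE).1 M
    _ = q ^ (3 / 2 * (M : ℝ)) * ∑ E ∈ monicDivisors V, normPow (-(1 / 2)) E := by
      rw [← Finset.mul_sum, ← mul_assoc, ← Real.rpow_add card_pos_real,
        show 1 / 2 * (M : ℝ) + M = 3 / 2 * M by ring]
    _ ≤ _ := by
      gcongr
      exact sum_normPow_neg_half_le hcard _ _ fun E hE ↦ isSupportedOn_monicPrimeFactors hV hE

lemma exists_norm_cubicGaussSumOfDegree_le_of_le (hcard : 4 ≤ Fintype.card K) (hψ : ψ ≠ 1)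
    (hω : ω ^ 3 = 1) : ∃ A : ℝ, 0 < A ∧ ∀ V : K[X], V ≠ 0 → ∀ M ≤ V.natDegree + 4,
      ‖cubicGaussSumOfDegree ψ ω V M‖ ≤
        A * (Fintype.card K : ℝ) ^ (4 / 3 * (M : ℝ)) * normPow (1 / 3) V := by
  obtain ⟨A, hA1, hA⟩ := exists_pow_card_le_normPow (K := K) (c := 2) (ε := 1 / 6) (by norm_num)
    (by norm_num)
  set q : ℝ := (Fintype.card K : ℝ)
  have hq0 : 0 < q := card_pos_real
  refine ⟨A * q ^ (2 / 3 : ℝ), by positivity, fun V hV M hM ↦ ?_⟩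
  have hdivisors : (2 : ℝ) ^ (monicPrimeFactors V).card ≤ A * normPow (1 / 6) V :=
    (hA _).trans (mul_le_mul_of_nonneg_left
      (normPow_le_of_dvd (by norm_num) hV (primeProd_monicPrimeFactors_dvd hV)) (by linarith))
  calc ‖cubicGaussSumOfDegree ψ ω V M‖ ≤ q ^ (3 / 2 * (M : ℝ)) * (A * normPow (1 / 6) V) :=
        (norm_cubicGaussSumOfDegree_le hcard hψ hω hV M).trans
          (mul_le_mul_of_nonneg_left hdivisors (Real.rpow_pos_of_pos hq0 _).le)
    _ = A * q ^ (3 / 2 * (M : ℝ) + 1 / 6 * (V.natDegree : ℝ)) := by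
        rw [normPow, Real.rpow_add hq0]; ring
    _ ≤ A * q ^ (2 / 3 + 4 / 3 * (M : ℝ) + 1 / 3 * (V.natDegree : ℝ)) := by
        have : (M : ℝ) ≤ V.natDegree + 4 := by exact_mod_cast hM
        refine mul_le_mul_of_nonneg_left (Real.rpow_le_rpow_of_exponent_le
          one_lt_card_real.le ?_) (by linarith)
        linarith
    _ = A * q ^ (2 / 3 : ℝ) * q ^ (4 / 3 * (M : ℝ)) * normPow (1 / 3) V := by
        rw [normPow, Real.rpow_add hq0, Real.rpow_add hq0]; ring

lemma exists_norm_cubicGaussSumOfDegree_le (hcard : 4 ≤ Fintype.card K) (hψ : ψ ≠ 1)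
    (hω : ω ^ 3 = 1) (hω1 : ω ≠ 1) : ∃ A : ℝ, 0 < A ∧ ∀ V : K[X], V ≠ 0 → ∀ M : ℕ,
      ‖cubicGaussSumOfDegree ψ ω V M‖ ≤
        A * (Fintype.card K : ℝ) ^ (4 / 3 * (M : ℝ)) * normPow (1 / 3) V := by
  obtain ⟨A, hA0, hA⟩ := exists_norm_cubicGaussSumOfDegree_le_of_le hcard hψ hω
  refine ⟨A, hA0, fun V hV M ↦ ?_⟩
  induction M using Nat.strong_induction_on with
  | _ M ih =>
    rcases le_or_gt M (V.natDegree + 4) with hM | hM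
    · exact hA V hV M hM
    obtain ⟨n, rfl⟩ : ∃ n, M = n + 3 := ⟨M - 3, by omega⟩
    have hVn : V ∈ degreeLTFinset K (n - 1) := by
      rw [mem_degreeLTFinset, degree_eq_natDegree hV]
      exact_mod_cast (by omega : V.natDegree < n - 1)
    have hpow : (Fintype.card K : ℝ) ^ (4 / 3 * ((n + 3 : ℕ) : ℝ)) =
        (Fintype.card K : ℝ) ^ 4 * (Fintype.card K : ℝ) ^ (4 / 3 * (n : ℝ)) := by
      rw [← Real.rpow_natCast _ 4, ← Real.rpow_add card_pos_real]
      push_cast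
      ring_nf
    rw [cubicGaussSumOfDegree_add_three hω hω1 (by omega) hVn, norm_mul, norm_pow,
      Complex.norm_natCast, hpow]
    linarith [mul_le_mul_of_nonneg_left (ih n (by omega))
      (pow_nonneg (Nat.cast_nonneg (α := ℝ) (Fintype.card K)) 4)]

end Divisors

section Supported
variable {K : Type} [Field K]

lemma IsSupportedOn.isCoprime {s : Finset (MonicIrred K)} {F G : K[X]} (hF : F ≠ 0)
    (h : ∀ P ∈ s, ¬ P.1 ∣ F) (hG : IsSupportedOn s G) : IsCoprime F G :=
  isCoprime_of_forall_not_dvd hF fun P hP hPG ↦ h P (hG.2 P hPG) hP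

lemma exists_isSupportedOn_mul (s : Finset (MonicIrred K)) {F : K[X]} (hF : F.Monic) :
    ∃ H G : K[X], F = H * G ∧ H.Monic ∧ (∀ P ∈ s, ¬ P.1 ∣ H) ∧ IsSupportedOn s G := by
  refine monic_induction (p := fun F ↦ ∃ H G : K[X], F = H * G ∧ H.Monic ∧
    (∀ P ∈ s, ¬ P.1 ∣ H) ∧ IsSupportedOn s G) ?_ ?_ F hF
  · exact ⟨1, 1, (one_mul 1).symm, monic_one, fun P _ h ↦ P.2.2.not_isUnit (isUnit_of_dvd_one h),
      monic_one, fun P h ↦ absurd (isUnit_of_dvd_one h) P.2.2.not_isUnit⟩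
  · rintro P F hP hi _ ⟨H, G, rfl, hH, hHs, hG⟩
    by_cases hPs : (⟨P, hP, hi⟩ : MonicIrred K) ∈ s
    · refine ⟨H, P * G, by ring, hH, hHs, hP.mul hG.1, fun Q hQ ↦ ?_⟩
      rcases Q.2.2.prime.dvd_mul.1 hQ with h | h
      · exact MonicIrred.eq_of_dvd (Q := ⟨P, hP, hi⟩) h ▸ hPs
      · exact hG.2 Q h
    · refine ⟨P * H, G, by ring, hP.mul hH, fun Q hQ h ↦ ?_, hG⟩
      rcases Q.2.2.prime.dvd_mul.1 h with h | h
      · exact hPs (MonicIrred.eq_of_dvd (Q := ⟨P, hP, hi⟩) h ▸ hQ)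
      · exact hHs Q hQ h

lemma eq_of_isSupportedOn_mul_eq {s : Finset (MonicIrred K)} {H G H' G' : K[X]} (hH : H.Monic)
    (hH' : H'.Monic) (hs : ∀ P ∈ s, ¬ P.1 ∣ H) (hs' : ∀ P ∈ s, ¬ P.1 ∣ H') (hG : IsSupportedOn s G)
    (hG' : IsSupportedOn s G') (h : H * G = H' * G') : H = H' ∧ G = G' := by
  have hdvd : H ∣ H' := (IsSupportedOn.isCoprime hH.ne_zero hs hG').dvd_of_dvd_mul_right
    (h ▸ dvd_mul_right H G)
  have hdvd' : H' ∣ H := (IsSupportedOn.isCoprime hH'.ne_zero hs' hG).dvd_of_dvd_mul_right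
    (h ▸ dvd_mul_right H' G')
  have heq := eq_of_monic_of_associated hH hH' (associated_of_dvd_dvd hdvd hdvd')
  subst heq
  exact ⟨rfl, mul_left_cancel₀ hH.ne_zero h⟩

lemma IsSupportedOn.eq_pow_of_singleton {P : MonicIrred K} {G : K[X]}
    (hG : IsSupportedOn {P} G) : ∃ i : ℕ, G = P.1 ^ i := by
  obtain ⟨i, R, hR, hRm, hRd⟩ := exists_eq_pow_mul P hG.1
  exact ⟨i, by rw [hR, (IsSupportedOn.of_eq_pow_mul (s := ∅) hG hR hRm hRd).eq_one, mul_one]⟩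

lemma isSupportedOn_singleton_pow (P : MonicIrred K) (i : ℕ) : IsSupportedOn {P} (P.1 ^ i) :=
  ⟨P.2.1.pow i, fun Q hQ ↦ Finset.mem_singleton.2 (MonicIrred.eq_of_dvd
    (Q.2.2.prime.dvd_of_dvd_pow hQ))⟩

lemma not_pow_dvd_mul {P : MonicIrred K} {V : K[X]} (hV : ¬ P.1 ∣ V) {a i : ℕ} (h : a < i) :
    ¬ P.1 ^ i ∣ P.1 ^ a * V := by
  intro hd
  obtain ⟨j, rfl⟩ : ∃ j, i = a + (j + 1) := ⟨i - a - 1, by omega⟩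
  rw [pow_add] at hd
  exact hV ((dvd_pow_self _ (Nat.succ_ne_zero j)).trans
    ((mul_dvd_mul_iff_left (P.2.1.pow a).ne_zero).1 hd))

end Supported

section PrimeTo
variable {K : Type} [Field K] [Fintype K]

/-- The monic polynomials of degree `n` without irreducible factor in `s`. -/
def monicsPrimeTo (s : Finset (MonicIrred K)) (n : ℕ) : Finset K[X] :=
  (monicsOfDegree K n).filter (fun F ↦ ∀ P ∈ s, ¬ P.1 ∣ F)

/-- The monic polynomials of degree at most `n` with all irreducible factors in `s`. -/
def monicsSupportedOn (s : Finset (MonicIrred K)) (n : ℕ) : Finset K[X] :=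
  ((range (n + 1)).biUnion (monicsOfDegree K)).filter (IsSupportedOn s)

lemma mem_monicsPrimeTo {s : Finset (MonicIrred K)} {n : ℕ} {F : K[X]} :
    F ∈ monicsPrimeTo s n ↔ (F.Monic ∧ F.natDegree = n) ∧ ∀ P ∈ s, ¬ P.1 ∣ F := by
  rw [monicsPrimeTo, Finset.mem_filter, mem_monicsOfDegree]

lemma mem_monicsSupportedOn {s : Finset (MonicIrred K)} {n : ℕ} {G : K[X]} :
    G ∈ monicsSupportedOn s n ↔ IsSupportedOn s G ∧ G.natDegree ≤ n := by
  simp only [monicsSupportedOn, Finset.mem_filter, Finset.mem_biUnion, Finset.mem_range,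
    mem_monicsOfDegree]
  constructor
  · rintro ⟨⟨m, hm, _, h⟩, h'⟩; exact ⟨h', by omega⟩
  · rintro ⟨h, h'⟩; exact ⟨⟨_, Nat.lt_succ_of_le h', h.1, rfl⟩, h⟩

lemma sum_monicsOfDegree_eq_sum_supportedOn_primeTo {M : Type*} [AddCommMonoid M]
    (s : Finset (MonicIrred K)) (n : ℕ) (φ : K[X] → M) :
    ∑ F ∈ monicsOfDegree K n, φ F =
      ∑ G ∈ monicsSupportedOn s n, ∑ H ∈ monicsPrimeTo s (n - G.natDegree), φ (H * G) := by
  rw [sum_sigma']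
  symm
  refine Finset.sum_bij (fun x _ ↦ x.2 * x.1) ?_ ?_ ?_ fun _ _ ↦ rfl
  · rintro ⟨G, H⟩ hx
    obtain ⟨hG, hH⟩ := mem_sigma.1 hx
    obtain ⟨hG, hd⟩ := mem_monicsSupportedOn.1 hG
    obtain ⟨⟨hH, hd'⟩, _⟩ := mem_monicsPrimeTo.1 hH
    refine mem_monicsOfDegree.2 ⟨hH.mul hG.1, ?_⟩
    dsimp only at *
    rw [hH.natDegree_mul hG.1]
    omega
  · rintro ⟨G, H⟩ hx ⟨G', H'⟩ hx' h
    obtain ⟨hG, hH⟩ := mem_sigma.1 hx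
    obtain ⟨hG', hH'⟩ := mem_sigma.1 hx'
    obtain ⟨h1, h2⟩ := eq_of_isSupportedOn_mul_eq (mem_monicsPrimeTo.1 hH).1.1
      (mem_monicsPrimeTo.1 hH').1.1
      (mem_monicsPrimeTo.1 hH).2 (mem_monicsPrimeTo.1 hH').2 (mem_monicsSupportedOn.1 hG).1
      (mem_monicsSupportedOn.1 hG').1 h
    dsimp only at h1 h2
    rw [h1, h2]
  · intro F hF
    obtain ⟨hF, hd⟩ := mem_monicsOfDegree.1 hF
    obtain ⟨H, G, rfl, hH, hHs, hG⟩ := exists_isSupportedOn_mul s hF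
    rw [hH.natDegree_mul hG.1] at hd
    exact ⟨⟨G, H⟩, mem_sigma.2 ⟨mem_monicsSupportedOn.2 ⟨hG, (by omega : G.natDegree ≤ n)⟩,
      mem_monicsPrimeTo.2 ⟨⟨hH, (by omega : H.natDegree = n - G.natDegree)⟩, hHs⟩⟩, rfl⟩

variable {ψ : AddChar K ℂ} {ω : MulChar K ℂ}

/-- The sum of the Gauss sums `G(V, F)` over monic `F` of degree `n` coprime to `s`. -/
def cubicGaussSumPrimeTo (ψ : AddChar K ℂ) (ω : MulChar K ℂ) (s : Finset (MonicIrred K))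
    (V : K[X]) (n : ℕ) : ℂ :=
  ∑ F ∈ monicsPrimeTo s n, cubicGaussSum ψ ω V F

lemma cubicGaussSumPrimeTo_eq_sum_insert (hω : ω ^ 3 = 1) {s : Finset (MonicIrred K)}
    {P : MonicIrred K} (hP : P ∉ s) (V : K[X]) (n : ℕ) :
    cubicGaussSumPrimeTo ψ ω s V n = ∑ G ∈ monicsSupportedOn {P} n,
      cubicGaussSum ψ ω V G * cubicGaussSumPrimeTo ψ ω (insert P s) (G * V) (n - G.natDegree) := by
  rw [cubicGaussSumPrimeTo, monicsPrimeTo, Finset.sum_filter,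
    sum_monicsOfDegree_eq_sum_supportedOn_primeTo {P} n]
  refine Finset.sum_congr rfl fun G hG ↦ ?_
  obtain ⟨hG, _⟩ := mem_monicsSupportedOn.1 hG
  have hfil : (monicsPrimeTo {P} (n - G.natDegree)).filter (fun H ↦ ∀ Q ∈ s, ¬ Q.1 ∣ H * G) =
      monicsPrimeTo (insert P s) (n - G.natDegree) := by
    ext H
    simp only [Finset.mem_filter, mem_monicsPrimeTo, Finset.mem_singleton, forall_eq,
      Finset.mem_insert, forall_eq_or_imp, and_assoc]
    refine and_congr_right fun _ ↦ and_congr_right fun _ ↦ and_congr_right fun _ ↦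
      forall₂_congr fun Q hQ ↦ not_congr ?_
    rw [Q.2.2.prime.dvd_mul]
    refine or_iff_left fun h ↦ ?_
    exact hP (Finset.mem_singleton.1 (hG.2 Q h) ▸ hQ)
  rw [← Finset.sum_filter, hfil, cubicGaussSumPrimeTo, Finset.mul_sum]
  refine Finset.sum_congr rfl fun H hH ↦ ?_
  obtain ⟨⟨hH, _⟩, hHs⟩ := mem_monicsPrimeTo.1 hH
  have hc : IsCoprime H G := IsSupportedOn.isCoprime hH.ne_zero
    (s := {P}) (fun Q hQ ↦ hHs Q (Finset.mem_insert.2 (Or.inl (Finset.mem_singleton.1 hQ)))) hG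
  rw [cubicGaussSum_mul hω hH hG.1 hc, mul_comm]

lemma cubicGaussSum_pow_ne_zero (hψ : ψ ≠ 1) (hω : ω ^ 3 = 1) (hω1 : ω ≠ 1) {P : MonicIrred K}
    {V : K[X]} (hV : ¬ P.1 ∣ V) {a i : ℕ} (ha : a < 3)
    (h : cubicGaussSum ψ ω (P.1 ^ a * V) (P.1 ^ i) ≠ 0) : i = 0 ∨ i = a + 1 := by
  by_contra! hi
  rcases Nat.lt_or_ge a i with hai | hai
  · obtain ⟨j, rfl⟩ : ∃ j, i = j + 1 := ⟨i - 1, by omega⟩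
    exact h (cubicGaussSum_pow_succ_of_not_dvd hψ P.2.1 (not_pow_dvd_mul hV (by omega)))
  · exact h (cubicGaussSum_pow_of_dvd hω hω1 P.2.1 P.2.2 (by omega)
      ((pow_dvd_pow _ hai).trans (dvd_mul_right _ _)))

lemma norm_cubicGaussSum_pow_le (hψ : ψ ≠ 1) (hω : ω ^ 3 = 1) {P : MonicIrred K} {V : K[X]}
    (hV : ¬ P.1 ∣ V) (a : ℕ) :
    ‖cubicGaussSum ψ ω (P.1 ^ a * V) (P.1 ^ (a + 1))‖ ≤ normPow (a + 1 / 2) P.1 := by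
  have h := norm_shiftedGaussSum_sq_le hψ (P.2.1.pow a) P.2.1 ((P.isCoprime_iff V).2 hV)
    (pow_succ P.1 a ▸ isUnitChar_residueSymbol hω (P.2.1.pow (a + 1)))
  rw [← pow_succ] at h
  refine abs_le_of_sq_le_sq' (h.trans (le_of_eq ?_)) (normPow_pos _ _).le |>.2
  rw [normPow, ← Real.rpow_natCast _ 2, ← Real.rpow_mul card_pos_real.le, ← pow_add,
    ← Real.rpow_natCast]
  congr 1
  simp only [natDegree_pow]
  push_cast
  ring

lemma cubicGaussSumPrimeTo_eq_add_insert (hψ : ψ ≠ 1) (hω : ω ^ 3 = 1) (hω1 : ω ≠ 1)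
    {s : Finset (MonicIrred K)} {P : MonicIrred K} (hP : P ∉ s) {V : K[X]} (hV : ¬ P.1 ∣ V)
    {a : ℕ} (ha : a < 3) (n : ℕ) :
    cubicGaussSumPrimeTo ψ ω s (P.1 ^ a * V) n =
      cubicGaussSumPrimeTo ψ ω (insert P s) (P.1 ^ a * V) n +
        if (a + 1) * P.1.natDegree ≤ n then cubicGaussSum ψ ω (P.1 ^ a * V) (P.1 ^ (a + 1)) *
          cubicGaussSumPrimeTo ψ ω (insert P s) (P.1 ^ (a + 1) * (P.1 ^ a * V))
            (n - (a + 1) * P.1.natDegree)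
        else 0 := by
  have hne : (1 : K[X]) ≠ P.1 ^ (a + 1) := fun h ↦
    P.2.2.not_isUnit (isUnit_of_dvd_one (h ▸ dvd_pow_self _ a.succ_ne_zero))
  have hsub : ({1, P.1 ^ (a + 1)} : Finset K[X]).filter (·.natDegree ≤ n) ⊆
      monicsSupportedOn {P} n := by
    intro G hG
    obtain ⟨hG, hGn⟩ := Finset.mem_filter.1 hG
    refine mem_monicsSupportedOn.2 ⟨?_, hGn⟩
    rcases Finset.mem_insert.1 hG with rfl | hG
    · simpa using isSupportedOn_singleton_pow P 0
    · exact Finset.mem_singleton.1 hG ▸ isSupportedOn_singleton_pow P _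
  rw [cubicGaussSumPrimeTo_eq_sum_insert hω hP, ← Finset.sum_subset hsub fun G hG hG' ↦ ?_,
    Finset.filter_insert, Finset.filter_singleton, if_pos (by simp), natDegree_pow]
  · split_ifs
    · rw [Finset.sum_pair hne, cubicGaussSum_one, natDegree_one, natDegree_pow, one_mul, one_mul,
        Nat.sub_zero]
    · simp [cubicGaussSum_one]
  · obtain ⟨hGs, hGn⟩ := mem_monicsSupportedOn.1 hG
    obtain ⟨i, rfl⟩ := hGs.eq_pow_of_singleton
    by_contra h0
    refine hG' (Finset.mem_filter.2 ⟨?_, hGn⟩)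
    rcases cubicGaussSum_pow_ne_zero hψ hω hω1 hV ha (left_ne_zero_of_mul h0) with rfl | rfl <;>
      simp

lemma norm_cubicGaussSumPrimeTo_insert_le (hψ : ψ ≠ 1) (hω : ω ^ 3 = 1) (hω1 : ω ≠ 1)
    {s : Finset (MonicIrred K)} {P : MonicIrred K} (hP : P ∉ s) {V : K[X]} (hV : ¬ P.1 ∣ V)
    {a : ℕ} (ha : a < 3) (n : ℕ) :
    ‖cubicGaussSumPrimeTo ψ ω (insert P s) (P.1 ^ a * V) n‖ ≤
      ‖cubicGaussSumPrimeTo ψ ω s (P.1 ^ a * V) n‖ +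
        if (a + 1) * P.1.natDegree ≤ n then normPow (a + 1 / 2) P.1 *
          ‖cubicGaussSumPrimeTo ψ ω (insert P s) (P.1 ^ (a + 1) * (P.1 ^ a * V))
            (n - (a + 1) * P.1.natDegree)‖
        else 0 := by
  rw [← sub_eq_of_eq_add (cubicGaussSumPrimeTo_eq_add_insert hψ hω hω1 hP hV ha n)]
  refine (norm_sub_le _ _).trans (add_le_add_right ?_ _)
  split_ifs
  · rw [norm_mul]
    exact mul_le_mul_of_nonneg_right (norm_cubicGaussSum_pow_le hψ hω hV a) (norm_nonneg _)
  · rw [norm_zero]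

lemma cubicGaussSumPrimeTo_pow_three_mul (hω : ω ^ 3 = 1) {s : Finset (MonicIrred K)} {P :
    MonicIrred K} (hP : P ∈ s)
    (k : ℕ) (V : K[X]) (n : ℕ) :
      cubicGaussSumPrimeTo ψ ω s (P.1 ^ (3 * k) * V) n = cubicGaussSumPrimeTo ψ ω s V n := by
  refine Finset.sum_congr rfl fun F hF ↦ ?_
  obtain ⟨⟨hF, _⟩, hs⟩ := mem_monicsPrimeTo.1 hF
  rw [mul_comm 3 k, pow_mul]
  refine cubicGaussSum_pow_three_mul hω hF ?_ V
  exact (isCoprime_comm.1 ((P.isCoprime_iff F).2 (hs P hP))).pow_right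

lemma normPow_mul_card_rpow_mul_normPow_pow (P : K[X]) {a n : ℕ}
    (hd : (a + 1) * P.natDegree ≤ n) :
    normPow (a + 1 / 2) P *
      ((Fintype.card K : ℝ) ^ (4 / 3 * ((n - (a + 1) * P.natDegree : ℕ) : ℝ)) *
      normPow (1 / 3) (P ^ (a + 1))) =
        (Fintype.card K : ℝ) ^ (4 / 3 * (n : ℝ)) * normPow (-(1 / 2)) P := by
  simp only [normPow, natDegree_pow]
  rw [← Real.rpow_add card_pos_real, ← Real.rpow_add card_pos_real, ← Real.rpow_add card_pos_real]
  congr 1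
  push_cast [Nat.cast_sub hd]
  ring

lemma norm_cubicGaussSumPrimeTo_insert_pow_mul_le (hcard : 4 ≤ Fintype.card K) (hψ : ψ ≠ 1)
    (hω : ω ^ 3 = 1) (hω1 : ω ≠ 1) {s : Finset (MonicIrred K)} {P : MonicIrred K} (hP : P ∉ s)
    {V : K[X]} (hV : ¬ P.1 ∣ V) {a : ℕ} (ha : a < 3) {n : ℕ} {B : ℝ}
    (hs : ‖cubicGaussSumPrimeTo ψ ω s (P.1 ^ a * V) n‖ ≤
      B * (Fintype.card K : ℝ) ^ (4 / 3 * (n : ℝ)) * normPow (1 / 3) (P.1 ^ a * V))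
    (hlt : ∀ m < n, ∀ W : K[X], W ≠ 0 → ‖cubicGaussSumPrimeTo ψ ω (insert P s) W m‖ ≤
      2 * B * (Fintype.card K : ℝ) ^ (4 / 3 * (m : ℝ)) * normPow (1 / 3) W) :
    ‖cubicGaussSumPrimeTo ψ ω (insert P s) (P.1 ^ a * V) n‖ ≤
      2 * B * (Fintype.card K : ℝ) ^ (4 / 3 * (n : ℝ)) * normPow (1 / 3) (P.1 ^ a * V) := by
  have hW : P.1 ^ a * V ≠ 0 := mul_ne_zero (P.2.1.pow a).ne_zero fun h ↦ hV (h ▸ dvd_zero _)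
  set D := B * (Fintype.card K : ℝ) ^ (4 / 3 * (n : ℝ)) * normPow (1 / 3) (P.1 ^ a * V) with hD
  have hD0 : 0 ≤ D := (norm_nonneg _).trans hs
  have hgoal : 2 * B * (Fintype.card K : ℝ) ^ (4 / 3 * (n : ℝ)) *
      normPow (1 / 3) (P.1 ^ a * V) = D + D := by ring
  rw [hgoal]
  refine (norm_cubicGaussSumPrimeTo_insert_le hψ hω hω1 hP hV ha n).trans (add_le_add hs ?_)
  split_ifs with hd
  swap
  · exact hD0
  have hpos : 0 < (a + 1) * P.1.natDegree := Nat.mul_pos a.succ_pos P.natDegree_pos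
  calc _ ≤ _ := mul_le_mul_of_nonneg_left (hlt (n - (a + 1) * P.1.natDegree) (by omega) _
        (mul_ne_zero (P.2.1.pow (a + 1)).ne_zero hW)) (normPow_pos _ _).le
    _ = D * (2 * normPow (-(1 / 2)) P.1) := by
        rw [normPow_mul _ (P.2.1.pow _).ne_zero hW, hD]
        linear_combination 2 * B * normPow (1 / 3) (P.1 ^ a * V) *
          normPow_mul_card_rpow_mul_normPow_pow P.1 hd
    _ ≤ D := mul_le_of_le_one_right hD0 (by linarith [normPow_neg_half_le hcard P])

lemma exists_norm_cubicGaussSumPrimeTo_le (hcard : 4 ≤ Fintype.card K) (hψ : ψ ≠ 1)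
    (hω : ω ^ 3 = 1) (hω1 : ω ≠ 1) :
    ∃ A : ℝ, 0 < A ∧ ∀ (s : Finset (MonicIrred K)) (n : ℕ) (V : K[X]), V ≠ 0 →
      ‖cubicGaussSumPrimeTo ψ ω s V n‖ ≤
        A * 2 ^ s.card * (Fintype.card K : ℝ) ^ (4 / 3 * (n : ℝ)) * normPow (1 / 3) V := by
  obtain ⟨A, hA, hbase⟩ := exists_norm_cubicGaussSumOfDegree_le hcard hψ hω hω1
  refine ⟨A, hA, fun s ↦ ?_⟩
  induction s using Finset.induction_on with
  | empty =>
    intro n V hV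
    have hempty : cubicGaussSumPrimeTo ψ ω ∅ V n = cubicGaussSumOfDegree ψ ω V n := by
      simp [cubicGaussSumPrimeTo, cubicGaussSumOfDegree, monicsPrimeTo]
    simpa [hempty] using hbase V hV n
  | insert P s hP ih =>
    intro n
    rw [Finset.card_insert_of_notMem hP, pow_succ', mul_left_comm]
    induction n using Nat.strong_induction_on with
    | _ n ihn =>
      intro V hV
      obtain ⟨V₀, hV₀, hd⟩ := (FiniteMultiplicity.of_not_isUnit P.2.2.not_isUnit
        hV).exists_eq_pow_mul_and_not_dvd
      set b := multiplicity P.1 V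
      have hb : V = P.1 ^ (3 * (b / 3)) * (P.1 ^ (b % 3) * V₀) := by
        rw [← mul_assoc, ← pow_add, Nat.div_add_mod]
        exact hV₀
      have hle : normPow (1 / 3) (P.1 ^ (b % 3) * V₀) ≤ normPow (1 / 3) V :=
        normPow_le_of_dvd (by norm_num) hV (hb ▸ dvd_mul_left _ _)
      have hW : P.1 ^ (b % 3) * V₀ ≠ 0 := right_ne_zero_of_mul (hb ▸ hV)
      have hcube : cubicGaussSumPrimeTo ψ ω (insert P s) V n =
          cubicGaussSumPrimeTo ψ ω (insert P s) (P.1 ^ (b % 3) * V₀) n := by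
        conv_lhs => rw [hb]
        exact cubicGaussSumPrimeTo_pow_three_mul hω (Finset.mem_insert_self P s) _ _ _
      rw [hcube]
      refine (norm_cubicGaussSumPrimeTo_insert_pow_mul_le hcard hψ hω hω1 hP hd
        (Nat.mod_lt b three_pos) (ih n _ hW) ihn).trans ?_
      gcongr

end PrimeTo

/-! ### Poisson summation -/

section Poisson
variable {K : Type*} [Field K] {ω : MulChar K ℂ}

lemma isUnitChar_residueSymbol_mul_sq (hω : ω ^ 3 = 1) {F D : K[X]} (hF : F.Monic)
    (hD : D.Monic) : IsUnitChar (F * D) (residueSymbol ω (F * D ^ 2)) where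
  periodic a b h := by
    rw [residueSymbol_mul_left hF (hD.pow 2), residueSymbol_mul_left hF (hD.pow 2),
      residueSymbol_pow_left hD, residueSymbol_pow_left hD,
      residueSymbol_periodicMod hF a b ((dvd_mul_right F D).trans h),
      residueSymbol_periodicMod hD a b ((dvd_mul_left D F).trans h)]
  map_mul := residueSymbol_mul_right (hF.mul (hD.pow 2))
  norm_eq_one a h := norm_residueSymbol hω (hF.mul (hD.pow 2))
    (h.of_mul_left_left.mul_left h.of_mul_left_right.pow_left)
  eq_zero a h := (residueSymbol_eq_zero_iff (hF.mul (hD.pow 2)) a).2 fun h' ↦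
    h (h'.of_mul_left_left.mul_left
      ((IsCoprime.pow_left_iff (by norm_num)).1 h'.of_mul_left_right))

variable [Fintype K] {ψ : AddChar K ℂ}

lemma sum_residues_residueSymbol_mul_sq_eq_zero (hω : ω ^ 3 = 1) (hω1 : ω ≠ 1) {F D : K[X]}
    (hF : F.Monic) (hD : D.Monic) (h3 : ¬ 3 ∣ (F * D ^ 2).natDegree) :
    ∑ x ∈ degreeLTFinset K (F * D).natDegree, residueSymbol ω (F * D ^ 2) x = 0 := by
  obtain ⟨c, hc⟩ := MulChar.ne_one_iff.1 hω1
  refine sum_eq_zero_of_apply_ne_one (hF.mul hD) (isUnitChar_residueSymbol_mul_sq hω hF hD)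
    (a := C (c : K)) (isCoprime_one_right.of_isCoprime_of_dvd_right (isUnit_C.2 c.isUnit).dvd) ?_
  rw [residueSymbol_C]
  exact pow_ne_one_of_pow_prime_eq_one (mulChar_pow_three_eq_one hω c.ne_zero) hc h3

lemma sum_monicsOfDegree_eq_sum_ite {M : Type*} [AddCommMonoid M] {m n : ℕ} (h : n < m)
    (φ : K[X] → M) :
    ∑ f ∈ monicsOfDegree K n, φ f =
      ∑ y ∈ degreeLTFinset K m, if y - X ^ n ∈ degreeLTFinset K n then φ y else 0 := by
  have hX : (X : K[X]) ^ n ∈ degreeLTFinset K m := by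
    rw [mem_degreeLTFinset, degree_X_pow]
    exact_mod_cast h
  rw [sum_monicsOfDegree, ← Finset.sum_filter]
  refine Finset.sum_bij (fun g _ ↦ X ^ n + g) (fun g hg ↦ ?_) (fun g _ g' _ h ↦ by simpa using h)
    (fun y hy ↦ ⟨y - X ^ n, (Finset.mem_filter.1 hy).2, by ring⟩) fun _ _ ↦ rfl
  exact Finset.mem_filter.2
    ⟨add_mem_degreeLTFinset hX (degreeLTFinset_mono h.le hg), by simpa using hg⟩

lemma residueChar_neg_mul_X_pow (ψ : AddChar K ℂ) {Q W : K[X]} (hQ : Q.Monic) {n L : ℕ}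
    (hd : Q.natDegree = n + L) (hW : W ∈ degreeLTFinset K L) :
    residueChar ψ Q (-(W * X ^ n)) = ψ ((-(W * X ^ n)).coeff (n + L - 1)) := by
  have hlt : (-(W * X ^ n)).degree < Q.degree := by
    rw [degree_neg, degree_mul, degree_X_pow, degree_eq_natDegree hQ.ne_zero, hd, add_comm n L,
      Nat.cast_add]
    exact WithBot.add_lt_add_right (WithBot.natCast_ne_bot n) (mem_degreeLTFinset.1 hW)
  change ψ (residueCoeff Q _) = _
  rw [residueCoeff_of_degree_lt hQ hlt, hd]

lemma card_pow_mul_sum_monicsOfDegree (hψ : ψ ≠ 1) {Q : K[X]} (hQ : Q.Monic) {n L : ℕ}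
    (hL : 1 ≤ L) (hd : Q.natDegree = n + L) (φ : K[X] → ℂ) :
    (Fintype.card K : ℂ) ^ L * ∑ f ∈ monicsOfDegree K n, φ f =
      ∑ W ∈ degreeLTFinset K L,
        ψ ((-(W * X ^ n)).coeff (n + L - 1)) * shiftedGaussSum ψ φ Q W := by
  have hX : (X : K[X]) ^ n ∈ degreeLTFinset K (n + L) := by
    rw [mem_degreeLTFinset, degree_X_pow]
    exact_mod_cast (by omega : n < n + L)
  have hdetect : ∀ y ∈ degreeLTFinset K (n + L),
      (if y - X ^ n ∈ degreeLTFinset K n then (Fintype.card K : ℂ) ^ L else 0) =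
        ∑ W ∈ degreeLTFinset K L, residueChar ψ Q (W * (y - X ^ n)) := by
    intro y hy
    rw [sum_degreeLTFinset_residueChar hψ hQ hd, (modByMonic_eq_self_iff hQ).2]
    rw [degree_eq_natDegree hQ.ne_zero, hd]
    exact mem_degreeLTFinset.1 (sub_mem_degreeLTFinset hy hX)
  rw [sum_monicsOfDegree_eq_sum_ite (by omega : n < n + L), Finset.mul_sum]
  calc ∑ y ∈ degreeLTFinset K (n + L),
        (Fintype.card K : ℂ) ^ L * (if y - X ^ n ∈ degreeLTFinset K n then φ y else 0)
      = ∑ y ∈ degreeLTFinset K (n + L),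
          φ y * ∑ W ∈ degreeLTFinset K L, residueChar ψ Q (W * (y - X ^ n)) := by
        refine Finset.sum_congr rfl fun y hy ↦ ?_
        rw [← hdetect y hy]
        split_ifs <;> ring
    _ = ∑ W ∈ degreeLTFinset K L, ∑ y ∈ degreeLTFinset K (n + L),
          φ y * residueChar ψ Q (W * (y - X ^ n)) := by
        simp only [Finset.mul_sum]
        exact Finset.sum_comm
    _ = _ := by
        refine Finset.sum_congr rfl fun W hW ↦ ?_
        rw [← residueChar_neg_mul_X_pow ψ hQ hd hW, shiftedGaussSum, hd, Finset.mul_sum]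
        refine Finset.sum_congr rfl fun y _ ↦ ?_
        rw [show W * (y - X ^ n) = -(W * X ^ n) + y * W by ring, AddChar.map_add_eq_mul]
        ring

lemma shiftedGaussSum_mul_mul_sq (hω : ω ^ 3 = 1) {H G D : K[X]} (hH : H.Monic) (hG : G.Monic)
    (hD : D.Monic) (hHG : IsCoprime H G) (hHD : IsCoprime H D) (W : K[X]) :
    shiftedGaussSum ψ (residueSymbol ω (H * G * D ^ 2)) (H * G * D) W =
      shiftedGaussSum ψ (residueSymbol ω (G * D ^ 2)) (G * D) W *
        cubicGaussSum ψ ω (G * W) H := by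
  have hGD := hG.mul (hD.pow 2)
  have hsplit : residueSymbol ω (H * G * D ^ 2) =
      fun x ↦ residueSymbol ω H x * residueSymbol ω (G * D ^ 2) x := by
    funext x
    rw [mul_assoc, residueSymbol_mul_left hH hGD]
  rw [hsplit, mul_assoc H G D,
    shiftedGaussSum_mul_of_isCoprime hH (hG.mul hD) (hHG.mul_right hHD)
      (isUnitChar_residueSymbol hω hH) (isUnitChar_residueSymbol_mul_sq hω hG hD) W,
    residueSymbol_comm hω (G * D ^ 2) H]
  change _ * (cubicGaussSum ψ ω W H * _) = _
  rw [← residueSymbol_mul_cubicGaussSum_mul hω hH hHG W, residueSymbol_mul_right hH,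
    residueSymbol_mul_right hH, residueSymbol_pow_right hH]
  have hcube : residueSymbol ω H G ^ 3 * residueSymbol ω H D ^ 3 = 1 := by
    rw [residueSymbol_pow_three hω hH hHG, residueSymbol_pow_three hω hH hHD, one_mul]
  linear_combination (cubicGaussSum ψ ω (G * W) H *
    shiftedGaussSum ψ (residueSymbol ω (G * D ^ 2)) (G * D) W) * hcube

/-- The nonzero polynomials of degree less than `L`. -/
def nonzeroDegreeLT (K : Type*) [Field K] [Fintype K] (L : ℕ) : Finset K[X] :=
  (degreeLTFinset K L).erase 0

lemma mem_nonzeroDegreeLT {L : ℕ} {W : K[X]} :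
    W ∈ nonzeroDegreeLT K L ↔ W ≠ 0 ∧ W.natDegree < L := by
  rw [nonzeroDegreeLT, Finset.mem_erase, mem_degreeLTFinset]
  refine and_congr_right fun h ↦ ?_
  rw [degree_eq_natDegree h, Nat.cast_lt]

lemma card_nonzeroDegreeLT_filter_dvd_le {E : K[X]} (hE : E.Monic) (L : ℕ) :
    (#{F ∈ nonzeroDegreeLT K L | E ∣ F} : ℝ) ≤
      (Fintype.card K : ℝ) ^ ((L : ℝ) - E.natDegree) := by
  by_cases hd : E.natDegree ≤ L
  · have hsub : {F ∈ nonzeroDegreeLT K L | E ∣ F} ⊆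
        (degreeLTFinset K (L - E.natDegree)).image (E * ·) := by
      intro F hF
      obtain ⟨hF, G, rfl⟩ := Finset.mem_filter.1 hF
      obtain ⟨h0, hdeg⟩ := mem_nonzeroDegreeLT.1 hF
      have hG0 : G ≠ 0 := right_ne_zero_of_mul h0
      refine Finset.mem_image.2 ⟨G, ?_, rfl⟩
      rw [natDegree_mul hE.ne_zero hG0] at hdeg
      rw [mem_degreeLTFinset, degree_eq_natDegree hG0]
      exact_mod_cast (by omega : G.natDegree < L - E.natDegree)
    have hle := (Finset.card_le_card hsub).trans Finset.card_image_le
    rw [card_degreeLTFinset] at hle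
    rw [← Nat.cast_sub hd, Real.rpow_natCast]
    exact_mod_cast hle
  · rw [Finset.card_eq_zero.2 (Finset.filter_eq_empty_iff.2 fun F hF hd' ↦ hd ?_), Nat.cast_zero]
    · positivity
    · obtain ⟨h0, hdeg⟩ := mem_nonzeroDegreeLT.1 hF
      exact (natDegree_le_of_dvd hd' h0).trans hdeg.le

lemma normPow_half_mul_card_nonzeroDegreeLT_le {E : K[X]} (hE : E.Monic) (L : ℕ) :
    normPow (1 / 2) E * #{F ∈ nonzeroDegreeLT K L | E ∣ F} ≤
      (Fintype.card K : ℝ) ^ L * normPow (-(1 / 2)) E := by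
  refine (mul_le_mul_of_nonneg_left (card_nonzeroDegreeLT_filter_dvd_le hE L)
    (normPow_pos _ _).le).trans (le_of_eq ?_)
  rw [normPow, normPow, ← Real.rpow_natCast, ← Real.rpow_add card_pos_real,
    ← Real.rpow_add card_pos_real]
  ring_nf

end Poisson

section TwistedSum
variable {K : Type} [Field K]

lemma natDegree_mul_primeProd_sq {s : Finset (MonicIrred K)} {F : K[X]} (hF : F.Monic) :
    (F * primeProd s ^ 2).natDegree = F.natDegree + 2 * (primeProd s).natDegree := by
  rw [hF.natDegree_mul ((monic_primeProd s).pow 2), (monic_primeProd s).natDegree_pow]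

lemma IsSupportedOn.mul_primeProd {s : Finset (MonicIrred K)} {G : K[X]}
    (hG : IsSupportedOn s G) : IsSupportedOn s (G * primeProd s) :=
  ⟨hG.1.mul (monic_primeProd s), fun P hP ↦
    (P.2.2.prime.dvd_mul.1 hP).elim (hG.2 P) dvd_primeProd_iff.1⟩

variable [Fintype K] {ψ : AddChar K ℂ} {ω : MulChar K ℂ}

lemma sum_shiftedGaussSum_mul_primeProd_sq (hω : ω ^ 3 = 1) (s : Finset (MonicIrred K)) (n : ℕ)
    (W : K[X]) :
    ∑ F ∈ monicsOfDegree K n,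
        shiftedGaussSum ψ (residueSymbol ω (F * primeProd s ^ 2)) (F * primeProd s) W =
      ∑ G ∈ monicsSupportedOn s n,
        shiftedGaussSum ψ (residueSymbol ω (G * primeProd s ^ 2)) (G * primeProd s) W *
          cubicGaussSumPrimeTo ψ ω s (G * W) (n - G.natDegree) := by
  rw [sum_monicsOfDegree_eq_sum_supportedOn_primeTo s]
  refine Finset.sum_congr rfl fun G hG ↦ ?_
  rw [cubicGaussSumPrimeTo, Finset.mul_sum]
  refine Finset.sum_congr rfl fun H hH ↦ ?_
  obtain ⟨⟨hH, _⟩, hHs⟩ := mem_monicsPrimeTo.1 hH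
  have hG := (mem_monicsSupportedOn.1 hG).1
  exact shiftedGaussSum_mul_mul_sq hω hH hG.1 (monic_primeProd s)
    (IsSupportedOn.isCoprime hH.ne_zero hHs hG) (isCoprime_primeProd_iff.2 hHs) W

/-- The sum of `|E|^(1/2)` over the common monic divisors `E` of `R` and `W`. -/
def sqrtNormGcdSum (R W : K[X]) : ℝ :=
  ∑ E ∈ monicDivisors R, if E ∣ R ∧ E ∣ W then normPow (1 / 2) E else 0

lemma sqrtNormGcdSum_nonneg (R W : K[X]) : 0 ≤ sqrtNormGcdSum R W :=
  Finset.sum_nonneg fun E _ ↦ by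
    split_ifs
    exacts [(normPow_pos _ _).le, le_rfl]

lemma norm_shiftedGaussSum_le (hψ : ψ ≠ 1) {F : K[X]} (hF : F.Monic) {φ : K[X] → ℂ}
    (hφ : IsUnitChar F φ) (V : K[X]) :
    ‖shiftedGaussSum ψ φ F V‖ ≤ normPow (1 / 2) F * sqrtNormGcdSum F V :=
  norm_shiftedGaussSum_le_sum hψ hF hφ fun _ hE h _ ↦ (mem_monicDivisors hF.ne_zero).2 ⟨hE, h⟩

lemma sum_sqrtNormGcdSum_le (hcard : 4 ≤ Fintype.card K) {s : Finset (MonicIrred K)} {R : K[X]}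
    (hR : IsSupportedOn s R) (L : ℕ) :
    ∑ W ∈ nonzeroDegreeLT K L, sqrtNormGcdSum R W ≤
      (Fintype.card K : ℝ) ^ L * 2 ^ s.card := by
  have hR0 := hR.1.ne_zero
  calc _ = ∑ E ∈ monicDivisors R, normPow (1 / 2) E * #{F ∈ nonzeroDegreeLT K L | E ∣ F} := by
        simp only [sqrtNormGcdSum]
        rw [Finset.sum_comm]
        refine Finset.sum_congr rfl fun E hE ↦ ?_
        simp only [((mem_monicDivisors hR0).1 hE).2, true_and]
        rw [← Finset.sum_filter, Finset.sum_const, nsmul_eq_mul, mul_comm]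
    _ ≤ ∑ E ∈ monicDivisors R, (Fintype.card K : ℝ) ^ L * normPow (-(1 / 2)) E :=
        Finset.sum_le_sum fun E hE ↦
          normPow_half_mul_card_nonzeroDegreeLT_le ((mem_monicDivisors hR0).1 hE).1 L
    _ ≤ _ := by
        rw [← Finset.mul_sum]
        refine mul_le_mul_of_nonneg_left (sum_normPow_neg_half_le hcard s _ fun E hE ↦ ?_)
          (by positivity)
        obtain ⟨hE, hd⟩ := (mem_monicDivisors hR0).1 hE
        exact ⟨hE, fun P hP ↦ hR.2 P (hP.trans hd)⟩

/-- The double sum of `χ_{F D²}(f)` over monic `F`, `f` of degrees `m`, `n`, where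
`D = primeProd s`. -/
def twistedSum (ω : MulChar K ℂ) (s : Finset (MonicIrred K)) (m n : ℕ) : ℂ :=
  ∑ F ∈ monicsOfDegree K m, ∑ f ∈ monicsOfDegree K n, residueSymbol ω (F * primeProd s ^ 2) f

lemma twistedSum_eq_zero (hω : ω ^ 3 = 1) (hω1 : ω ≠ 1) {s : Finset (MonicIrred K)} {m n : ℕ}
    (h3 : ¬ 3 ∣ m + 2 * (primeProd s).natDegree) (hn : m + (primeProd s).natDegree ≤ n) :
    twistedSum ω s m n = 0 := by
  refine Finset.sum_eq_zero fun F hF ↦ ?_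
  obtain ⟨hF, hd⟩ := mem_monicsOfDegree.1 hF
  have hs := monic_primeProd s
  rw [sum_monicsOfDegree_of_periodicMod (hF.mul hs)
      (isUnitChar_residueSymbol_mul_sq hω hF hs).periodic,
    sum_residues_residueSymbol_mul_sq_eq_zero hω hω1 hF hs, smul_zero]
  · rwa [natDegree_mul_primeProd_sq hF, hd]
  · rwa [hF.natDegree_mul hs, hd]

lemma card_pow_mul_twistedSum (hψ : ψ ≠ 1) (hω : ω ^ 3 = 1) (hω1 : ω ≠ 1)
    {s : Finset (MonicIrred K)} {m n L : ℕ} (h3 : ¬ 3 ∣ m + 2 * (primeProd s).natDegree)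
    (hL : 1 ≤ L) (hn : m + (primeProd s).natDegree = n + L) :
    (Fintype.card K : ℂ) ^ L * twistedSum ω s m n =
      ∑ W ∈ nonzeroDegreeLT K L, ψ ((-(W * X ^ n)).coeff (n + L - 1)) *
        ∑ G ∈ monicsSupportedOn s m,
          shiftedGaussSum ψ (residueSymbol ω (G * primeProd s ^ 2)) (G * primeProd s) W *
            cubicGaussSumPrimeTo ψ ω s (G * W) (m - G.natDegree) := by
  have hs := monic_primeProd s
  have hpoisson : ∀ F ∈ monicsOfDegree K m, (Fintype.card K : ℂ) ^ L *
      ∑ f ∈ monicsOfDegree K n, residueSymbol ω (F * primeProd s ^ 2) f =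
        ∑ W ∈ nonzeroDegreeLT K L, ψ ((-(W * X ^ n)).coeff (n + L - 1)) *
          shiftedGaussSum ψ (residueSymbol ω (F * primeProd s ^ 2)) (F * primeProd s) W := by
    intro F hF
    obtain ⟨hF, hd⟩ := mem_monicsOfDegree.1 hF
    have hzero :
        shiftedGaussSum ψ (residueSymbol ω (F * primeProd s ^ 2)) (F * primeProd s) 0 = 0 := by
      simp only [shiftedGaussSum, mul_zero, AddChar.map_zero_eq_one, mul_one]
      refine sum_residues_residueSymbol_mul_sq_eq_zero hω hω1 hF hs ?_
      rwa [natDegree_mul_primeProd_sq hF, hd]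
    rw [card_pow_mul_sum_monicsOfDegree hψ (hF.mul hs) hL (by rw [hF.natDegree_mul hs, hd, hn]),
      nonzeroDegreeLT]
    exact (Finset.sum_erase _ (by rw [hzero, mul_zero])).symm
  rw [twistedSum, Finset.mul_sum, Finset.sum_congr rfl hpoisson, Finset.sum_comm]
  refine Finset.sum_congr rfl fun W _ ↦ ?_
  rw [← Finset.mul_sum, sum_shiftedGaussSum_mul_primeProd_sq hω]

lemma norm_shiftedGaussSum_mul_cubicGaussSumPrimeTo_le (hψ : ψ ≠ 1) (hω : ω ^ 3 = 1)
    {s : Finset (MonicIrred K)} {m L : ℕ} {G W : K[X]} (hG : G ∈ monicsSupportedOn s m)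
    (hW : W ∈ nonzeroDegreeLT K L) {A : ℝ} (hA : 0 ≤ A)
    (hbound : ‖cubicGaussSumPrimeTo ψ ω s (G * W) (m - G.natDegree)‖ ≤
      A * (Fintype.card K : ℝ) ^ (4 / 3 * ((m - G.natDegree : ℕ) : ℝ)) *
        normPow (1 / 3) (G * W)) :
    ‖shiftedGaussSum ψ (residueSymbol ω (G * primeProd s ^ 2)) (G * primeProd s) W *
        cubicGaussSumPrimeTo ψ ω s (G * W) (m - G.natDegree)‖ ≤
      A * (Fintype.card K : ℝ) ^ (4 / 3 * (m : ℝ) + 1 / 3 * (L : ℝ)) *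
        normPow (1 / 2) (primeProd s) * normPow (-(1 / 2)) G *
          sqrtNormGcdSum (G * primeProd s) W := by
  obtain ⟨hW0, hWd⟩ := mem_nonzeroDegreeLT.1 hW
  obtain ⟨hG, hGd⟩ := mem_monicsSupportedOn.1 hG
  have hG0 := hG.1.ne_zero
  have hs := monic_primeProd s
  have hT0 := sqrtNormGcdSum_nonneg (G * primeProd s) W
  have hW3 : normPow (1 / 3) W ≤ (Fintype.card K : ℝ) ^ (1 / 3 * (L : ℝ)) := by
    refine Real.rpow_le_rpow_of_exponent_le one_lt_card_real.le ?_
    gcongr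
  have hG3 : normPow (1 / 2) G * (Fintype.card K : ℝ) ^ (4 / 3 * ((m - G.natDegree : ℕ) : ℝ)) *
      normPow (1 / 3) G = (Fintype.card K : ℝ) ^ (4 / 3 * (m : ℝ)) * normPow (-(1 / 2)) G := by
    simp only [normPow]
    rw [← Real.rpow_add card_pos_real, ← Real.rpow_add card_pos_real,
      ← Real.rpow_add card_pos_real, Nat.cast_sub hGd]
    ring_nf
  have hD0 := normPow_pos (1 / 2) (primeProd s)
  have hGpos := normPow_pos (-(1 / 2)) G
  rw [norm_mul]
  refine (mul_le_mul (norm_shiftedGaussSum_le hψ (hG.1.mul hs)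
    (isUnitChar_residueSymbol_mul_sq hω hG.1 hs) W) hbound (norm_nonneg _)
    (mul_nonneg (normPow_pos _ _).le hT0)).trans ?_
  rw [normPow_mul _ hG0 hs.ne_zero, normPow_mul _ hG0 hW0, Real.rpow_add card_pos_real]
  calc _ = A * normPow (1 / 2) (primeProd s) * sqrtNormGcdSum (G * primeProd s) W *
        ((Fintype.card K : ℝ) ^ (4 / 3 * (m : ℝ)) * normPow (-(1 / 2)) G) *
          normPow (1 / 3) W := by
        rw [← hG3]
        ring
    _ ≤ A * normPow (1 / 2) (primeProd s) * sqrtNormGcdSum (G * primeProd s) W *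
        ((Fintype.card K : ℝ) ^ (4 / 3 * (m : ℝ)) * normPow (-(1 / 2)) G) *
          (Fintype.card K : ℝ) ^ (1 / 3 * (L : ℝ)) := by gcongr
    _ = _ := by ring

lemma sum_sum_normPow_mul_sqrtNormGcdSum_le (hcard : 4 ≤ Fintype.card K)
    (s : Finset (MonicIrred K)) (m L : ℕ) :
    ∑ W ∈ nonzeroDegreeLT K L, ∑ G ∈ monicsSupportedOn s m,
        normPow (-(1 / 2)) G * sqrtNormGcdSum (G * primeProd s) W ≤
      2 ^ s.card * ((Fintype.card K : ℝ) ^ L * 2 ^ s.card) := by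
  rw [Finset.sum_comm]
  simp only [← Finset.mul_sum]
  calc _ ≤ ∑ G ∈ monicsSupportedOn s m,
        normPow (-(1 / 2)) G * ((Fintype.card K : ℝ) ^ L * 2 ^ s.card) :=
        Finset.sum_le_sum fun G hG ↦ mul_le_mul_of_nonneg_left
          (sum_sqrtNormGcdSum_le hcard (mem_monicsSupportedOn.1 hG).1.mul_primeProd L)
          (normPow_pos _ _).le
    _ ≤ _ := by
        rw [← Finset.sum_mul]
        exact mul_le_mul_of_nonneg_right (sum_normPow_neg_half_le hcard s _ fun E hE ↦
          (mem_monicsSupportedOn.1 hE).1) (by positivity)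

lemma exists_norm_twistedSum_le (hcard : 4 ≤ Fintype.card K) (hω : ω ^ 3 = 1) (hω1 : ω ≠ 1)
    (hψ : ψ ≠ 1) : ∃ A : ℝ, 0 < A ∧ ∀ (s : Finset (MonicIrred K)) (m n L : ℕ),
      ¬ 3 ∣ m + 2 * (primeProd s).natDegree → 1 ≤ L → m + (primeProd s).natDegree = n + L →
      ‖twistedSum ω s m n‖ ≤ A * 8 ^ s.card *
        (Fintype.card K : ℝ) ^ (4 / 3 * (m : ℝ) + 1 / 3 * (L : ℝ)) *
          normPow (1 / 2) (primeProd s) := by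
  obtain ⟨A, hA, hbound⟩ := exists_norm_cubicGaussSumPrimeTo_le hcard hψ hω hω1
  refine ⟨A, hA, fun s m n L h3 hL hn ↦ ?_⟩
  set B := A * 2 ^ s.card * (Fintype.card K : ℝ) ^ (4 / 3 * (m : ℝ) + 1 / 3 * (L : ℝ)) *
    normPow (1 / 2) (primeProd s) with hB
  have hB0 : 0 ≤ B := by
    have := normPow_pos (1 / 2) (primeProd s)
    positivity
  have hq0 : (0 : ℝ) < Fintype.card K := card_pos_real
  have hmain := congrArg norm (card_pow_mul_twistedSum hψ hω hω1 h3 hL hn)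
  rw [norm_mul, norm_pow, Complex.norm_natCast] at hmain
  refine le_of_mul_le_mul_left (hmain.trans_le ?_) (pow_pos hq0 L)
  calc _ ≤ ∑ W ∈ nonzeroDegreeLT K L, ∑ G ∈ monicsSupportedOn s m,
        B * normPow (-(1 / 2)) G * sqrtNormGcdSum (G * primeProd s) W := by
        refine (norm_sum_le _ _).trans (Finset.sum_le_sum fun W hW ↦ ?_)
        rw [norm_mul, AddChar.norm_apply, one_mul]
        refine (norm_sum_le _ _).trans (Finset.sum_le_sum fun G hG ↦ ?_)
        refine norm_shiftedGaussSum_mul_cubicGaussSumPrimeTo_le hψ hω hG hW (by positivity) ?_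
        exact hbound s _ _ (mul_ne_zero (mem_monicsSupportedOn.1 hG).1.1.ne_zero
          (mem_nonzeroDegreeLT.1 hW).1)
    _ ≤ B * (2 ^ s.card * ((Fintype.card K : ℝ) ^ L * 2 ^ s.card)) := by
        simp only [mul_assoc B, ← Finset.mul_sum]
        exact mul_le_mul_of_nonneg_left (sum_sum_normPow_mul_sqrtNormGcdSum_le hcard s m L) hB0
    _ = _ := by
        rw [hB, show (8 : ℝ) = 2 * 2 * 2 by norm_num, mul_pow, mul_pow]
        ring

end TwistedSum

/-! ### The contribution of the cubes -/

section
variable {K : Type*} [Field K]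

open UniqueFactorizationMonoid in
lemma exists_eq_pow_of_forall_dvd {f : K[X]} (hf : f.Monic) {n : ℕ}
    (h : ∀ (P R : K[X]) (i : ℕ), P.Monic → Irreducible P → f = P ^ i * R → ¬ P ∣ R → n ∣ i) :
    ∃ k : K[X], k.Monic ∧ f = k ^ n := by
  have hmem {P : K[X]} (hP : P ∈ (normalizedFactors f).toFinset) :
      Irreducible P ∧ P.Monic ∧ P ∣ f :=
    (Polynomial.mem_normalizedFactors_iff hf.ne_zero).1 (Multiset.mem_toFinset.1 hP)
  have hcount {P : K[X]} (hP : P ∈ (normalizedFactors f).toFinset) :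
      n ∣ (normalizedFactors f).count P := by
    obtain ⟨hi, hm, -⟩ := hmem hP
    obtain ⟨R, hR, hd⟩ :=
      (FiniteMultiplicity.of_not_isUnit hi.not_isUnit hf.ne_zero).exists_eq_pow_mul_and_not_dvd
    rw [count_normalizedFactors_eq hi hm.normalize_eq_self ⟨R, hR⟩]
    · exact h P R _ hm hi hR hd
    · intro hdvd
      rw [pow_succ] at hdvd
      nth_rw 2 [hR] at hdvd
      exact hd ((mul_dvd_mul_iff_left (pow_ne_zero _ hi.ne_zero)).1 hdvd)
  refine ⟨∏ P ∈ (normalizedFactors f).toFinset, P ^ ((normalizedFactors f).count P / n),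
    monic_prod_of_monic _ _ fun P hP ↦ (hmem hP).2.1.pow _, ?_⟩
  rw [← Finset.prod_pow]
  calc f = (normalizedFactors f).prod := by
        rw [prod_normalizedFactors_eq hf.ne_zero, hf.normalize_eq_self]
    _ = ∏ P ∈ (normalizedFactors f).toFinset, P ^ (normalizedFactors f).count P :=
        Finset.prod_multiset_count _
    _ = _ := Finset.prod_congr rfl fun P hP ↦ by rw [← pow_mul, Nat.div_mul_cancel (hcount hP)]

lemma eq_of_monic_of_pow_eq {k l : K[X]} (hk : k.Monic) (hl : l.Monic) {n : ℕ} (hn : n ≠ 0)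
    (h : k ^ n = l ^ n) : k = l :=
  eq_of_monic_of_associated hk hl (associated_of_dvd_dvd
    ((UniqueFactorizationMonoid.pow_dvd_pow_iff_dvd hn).1 h.dvd)
    ((UniqueFactorizationMonoid.pow_dvd_pow_iff_dvd hn).1 h.symm.dvd))

variable {ω : MulChar K ℂ}

lemma exists_residueSymbol_ne_one_of_ne_pow_three [Finite K] (hω : ω ^ 3 = 1) (hω1 : ω ≠ 1)
    {f : K[X]} (hf : f.Monic) (h : ∀ k : K[X], k.Monic → f ≠ k ^ 3) :
    ∃ a, IsCoprime f a ∧ residueSymbol ω f a ≠ 1 := by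
  by_contra! hcon
  suffices ∃ k : K[X], k.Monic ∧ f = k ^ 3 by
    obtain ⟨k, hk, hfk⟩ := this
    exact h k hk hfk
  refine exists_eq_pow_of_forall_dvd hf fun P R i hP hi hR hd ↦ ?_
  by_contra h3
  have hRm : R.Monic := (hP.pow i).of_mul_monic_left (hR ▸ hf)
  obtain ⟨a, ha, ha1⟩ := exists_residueSymbol_ne_one hω1 hP hi
  -- Chinese remainder theorem: `b ≡ a` modulo `P` and `b ≡ 1` modulo `R`.
  obtain ⟨u, v, huv⟩ := hi.coprime_iff_not_dvd.2 hd
  set b := a * (v * R) + u * P with hb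
  have hbP : P ∣ b - a := ⟨u - a * u, by rw [hb]; linear_combination a * huv⟩
  have hbR : R ∣ b - 1 := ⟨a * v - v, by rw [hb]; linear_combination huv⟩
  have hcop : IsCoprime f b := by
    rw [hR]
    refine IsCoprime.mul_left (IsCoprime.pow_left ((isCoprime_congr hbP).2 ha)) ?_
    exact (isCoprime_congr hbR).2 isCoprime_one_right
  refine pow_ne_one_of_pow_prime_eq_one (residueSymbol_pow_three hω hP ha) ha1 h3 ?_
  rw [← hcon b hcop, hR, residueSymbol_mul_left (hP.pow i) hRm, residueSymbol_pow_left hP,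
    residueSymbol_periodicMod hP b a hbP, residueSymbol_periodicMod hRm b 1 hbR,
    residueSymbol_one_right, mul_one]

lemma residueSymbol_pow_three_left (hω : ω ^ 3 = 1) {k : K[X]} (hk : k.Monic) (x : K[X]) :
    residueSymbol ω (k ^ 3) x = if IsCoprime k x then 1 else 0 := by
  rw [residueSymbol_pow_left hk]
  split_ifs with h
  · exact residueSymbol_pow_three hω hk h
  · rw [(residueSymbol_eq_zero_iff hk x).2 h, zero_pow three_ne_zero]

variable [Fintype K]

/-- The Euler function of `K[X]`: the number of residue classes modulo `k` coprime to `k`. -/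
def polyTotient (k : K[X]) : ℕ := #{x ∈ degreeLTFinset K k.natDegree | IsCoprime k x}

lemma sum_monicsOfDegree_residueSymbol_pow_three (hω : ω ^ 3 = 1) {k : K[X]} (hk : k.Monic)
    {m : ℕ} (hm : k.natDegree ≤ m) :
    ∑ F ∈ monicsOfDegree K m, residueSymbol ω (k ^ 3) F =
      (Fintype.card K : ℂ) ^ (m - k.natDegree) * polyTotient k := by
  have hper : PeriodicMod k (residueSymbol ω (k ^ 3)) := fun a b h ↦ by
    rw [residueSymbol_pow_left hk, residueSymbol_pow_left hk, residueSymbol_periodicMod hk a b h]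
  rw [sum_monicsOfDegree_of_periodicMod hk hper hm]
  simp only [residueSymbol_pow_three_left hω hk, nsmul_eq_mul, sum_boole, polyTotient,
    Nat.cast_pow]

lemma sum_monicsOfDegree_residueSymbol_eq_zero (hω : ω ^ 3 = 1) (hω1 : ω ≠ 1) {f : K[X]}
    (hf : f.Monic) (h : ∀ k : K[X], k.Monic → f ≠ k ^ 3) {m : ℕ} (hm : f.natDegree ≤ m) :
    ∑ F ∈ monicsOfDegree K m, residueSymbol ω f F = 0 := by
  obtain ⟨a, ha, ha1⟩ := exists_residueSymbol_ne_one_of_ne_pow_three hω hω1 hf h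
  rw [sum_monicsOfDegree_of_periodicMod hf (residueSymbol_periodicMod hf) hm,
    sum_eq_zero_of_apply_ne_one hf (isUnitChar_residueSymbol hω hf) ha ha1, smul_zero]
end

section
variable {K : Type} [Field K]

lemma primeProd_injective : Function.Injective (primeProd (K := K)) := fun s t h ↦ by
  ext P
  rw [← dvd_primeProd_iff, h, dvd_primeProd_iff]

lemma finite_setOf_natDegree_primeProd_le [Finite K] (d : ℕ) :
    {s : Finset (MonicIrred K) | (primeProd s).natDegree ≤ d}.Finite := by
  cases nonempty_fintype K
  refine Set.Finite.of_finite_image ?_ primeProd_injective.injOn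
  refine ((Finset.range (d + 1)).biUnion (monicsOfDegree K)).finite_toSet.subset ?_
  rintro _ ⟨s, hs, rfl⟩
  refine Finset.mem_coe.2 (Finset.mem_biUnion.2 ⟨_, Finset.mem_range.2 (Nat.lt_succ_of_le hs), ?_⟩)
  exact mem_monicsOfDegree.2 ⟨monic_primeProd s, rfl⟩

variable [Fintype K] {ω : MulChar K ℂ}

lemma twistedSum_eq_sum_mul_sum (hω : ω ^ 3 = 1) (s : Finset (MonicIrred K)) (m n : ℕ) :
    twistedSum ω s m n =
      ∑ f ∈ monicsOfDegree K n, residueSymbol ω (primeProd s ^ 2) f *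
        ∑ F ∈ monicsOfDegree K m, residueSymbol ω f F := by
  rw [twistedSum, Finset.sum_comm]
  refine Finset.sum_congr rfl fun f _ ↦ ?_
  rw [Finset.mul_sum]
  refine Finset.sum_congr rfl fun F hF ↦ ?_
  rw [residueSymbol_mul_left (mem_monicsOfDegree.1 hF).1 ((monic_primeProd s).pow 2), mul_comm,
    residueSymbol_comm hω F f]

lemma twistedSum_eq_zero_of_not_three_dvd (hω : ω ^ 3 = 1) (hω1 : ω ≠ 1)
    (s : Finset (MonicIrred K)) {m n : ℕ} (hn : n ≤ m) (h3 : ¬ 3 ∣ n) :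
    twistedSum ω s m n = 0 := by
  rw [twistedSum_eq_sum_mul_sum hω]
  refine Finset.sum_eq_zero fun f hf ↦ ?_
  obtain ⟨hf, hd⟩ := mem_monicsOfDegree.1 hf
  rw [sum_monicsOfDegree_residueSymbol_eq_zero hω hω1 hf _ (hd ▸ hn), mul_zero]
  rintro k hk rfl
  rw [hk.natDegree_pow] at hd
  exact h3 ⟨_, hd.symm⟩

lemma twistedSum_three_mul (hω : ω ^ 3 = 1) (hω1 : ω ≠ 1) (s : Finset (MonicIrred K))
    {m l : ℕ} (hn : 3 * l ≤ m) :
    twistedSum ω s m (3 * l) =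
      ∑ k ∈ monicsPrimeTo s l, (Fintype.card K : ℂ) ^ (m - l) * polyTotient k := by
  rw [twistedSum_eq_sum_mul_sum hω]
  have hsub : (monicsOfDegree K l).image (· ^ 3) ⊆ monicsOfDegree K (3 * l) := by
    intro f hf
    obtain ⟨k, hk, rfl⟩ := Finset.mem_image.1 hf
    obtain ⟨hkm, hd⟩ := mem_monicsOfDegree.1 hk
    exact mem_monicsOfDegree.2 ⟨hkm.pow 3, by rw [hkm.natDegree_pow, hd]⟩
  rw [← Finset.sum_subset hsub, Finset.sum_image, monicsPrimeTo, Finset.sum_filter]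
  · refine Finset.sum_congr rfl fun k hk ↦ ?_
    obtain ⟨hk, hd⟩ := mem_monicsOfDegree.1 hk
    rw [sum_monicsOfDegree_residueSymbol_pow_three hω hk (by omega), hd, residueSymbol_comm hω,
      residueSymbol_pow_three_left hω hk]
    have hcop : IsCoprime k (primeProd s ^ 2) ↔ ∀ P ∈ s, ¬ P.1 ∣ k := by
      rw [IsCoprime.pow_right_iff two_pos, isCoprime_primeProd_iff]
    simp only [hcop, ite_mul, one_mul, zero_mul]
  · intro k hk k' hk' h
    exact eq_of_monic_of_pow_eq (mem_monicsOfDegree.1 hk).1 (mem_monicsOfDegree.1 hk').1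
      three_ne_zero h
  · intro f hf hne
    obtain ⟨hf, hd⟩ := mem_monicsOfDegree.1 hf
    rw [sum_monicsOfDegree_residueSymbol_eq_zero hω hω1 hf _ (hd ▸ hn), mul_zero]
    rintro k hk rfl
    refine hne (Finset.mem_image.2 ⟨k, mem_monicsOfDegree.2 ⟨hk, ?_⟩, rfl⟩)
    rw [hk.natDegree_pow] at hd
    omega

/-- The finite sets of monic irreducibles whose product has degree at most `d`: they index the
squarefree monic polynomials of degree at most `d` through `primeProd`. -/
def primeSetsOfDegreeLE (K : Type) [Field K] [Fintype K] (d : ℕ) :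
    Finset (Finset (MonicIrred K)) :=
  (finite_setOf_natDegree_primeProd_le d).toFinset

lemma mem_primeSetsOfDegreeLE {d : ℕ} {s : Finset (MonicIrred K)} :
    s ∈ primeSetsOfDegreeLE K d ↔ (primeProd s).natDegree ≤ d := by
  simp [primeSetsOfDegreeLE]

lemma tendsto_primeSetsOfDegreeLE : Tendsto (primeSetsOfDegreeLE K) atTop atTop := by
  refine tendsto_atTop_finset_of_monotone (fun a b h s hs ↦ ?_) fun s ↦
    ⟨(primeProd s).natDegree, mem_primeSetsOfDegreeLE.2 le_rfl⟩
  exact mem_primeSetsOfDegreeLE.2 ((mem_primeSetsOfDegreeLE.1 hs).trans h)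

lemma card_primeSetsOfDegreeLE_filter_le (d i : ℕ) :
    #{s ∈ primeSetsOfDegreeLE K d | (primeProd s).natDegree = i} ≤ Fintype.card K ^ i := by
  rw [← card_monicsOfDegree (R := K) i]
  refine Finset.card_le_card_of_injOn primeProd (fun s hs ↦ ?_) primeProd_injective.injOn
  exact Finset.mem_coe.2 (mem_monicsOfDegree.2 ⟨monic_primeProd s, (Finset.mem_filter.1 hs).2⟩)

lemma sum_normPow_primeSetsOfDegreeLE_le {x : ℝ} (d : ℕ) :
    ∑ s ∈ primeSetsOfDegreeLE K d, normPow x (primeProd s) ≤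
      ∑ i ∈ range (d + 1), ((Fintype.card K : ℝ) ^ (x + 1)) ^ i := by
  have hq0 : (0 : ℝ) < Fintype.card K := card_pos_real
  have hmaps : ∀ s ∈ primeSetsOfDegreeLE K d, (primeProd s).natDegree ∈ range (d + 1) :=
    fun s hs ↦ Finset.mem_range.2 (Nat.lt_succ_of_le (mem_primeSetsOfDegreeLE.1 hs))
  rw [← Finset.sum_fiberwise_of_maps_to hmaps]
  refine Finset.sum_le_sum fun i _ ↦ ?_
  calc ∑ s ∈ primeSetsOfDegreeLE K d with (primeProd s).natDegree = i, normPow x (primeProd s)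
      = #{s ∈ primeSetsOfDegreeLE K d | (primeProd s).natDegree = i} *
          (Fintype.card K : ℝ) ^ (x * i) := by
        rw [Finset.sum_congr rfl fun s hs ↦ by rw [normPow, (Finset.mem_filter.1 hs).2],
          Finset.sum_const, nsmul_eq_mul]
    _ ≤ (Fintype.card K : ℝ) ^ i * (Fintype.card K : ℝ) ^ (x * i) := by
        gcongr
        exact_mod_cast card_primeSetsOfDegreeLE_filter_le d i
    _ = ((Fintype.card K : ℝ) ^ (x + 1)) ^ i := by
        rw [← Real.rpow_natCast, ← Real.rpow_natCast, ← Real.rpow_mul hq0.le, ← Real.rpow_add hq0]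
        ring_nf

lemma summable_normPow_primeProd {x : ℝ} (hx : x < -1) :
    Summable fun s : Finset (MonicIrred K) ↦ normPow x (primeProd s) := by
  have hr0 : 0 ≤ (Fintype.card K : ℝ) ^ (x + 1) := (Real.rpow_pos_of_pos card_pos_real _).le
  have hr1 : (Fintype.card K : ℝ) ^ (x + 1) < 1 :=
    Real.rpow_lt_one_of_one_lt_of_neg one_lt_card_real (by linarith)
  refine summable_of_sum_le (c := (1 - (Fintype.card K : ℝ) ^ (x + 1))⁻¹)
    (fun s ↦ (normPow_pos _ _).le) fun u ↦ ?_
  obtain ⟨d, hd⟩ := (tendsto_atTop.1 (tendsto_primeSetsOfDegreeLE (K := K)) u).exists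
  refine (Finset.sum_le_sum_of_subset_of_nonneg hd fun s _ _ ↦ (normPow_pos _ _).le).trans
    ((sum_normPow_primeSetsOfDegreeLE_le d).trans ?_)
  rw [← tsum_geometric_of_lt_one hr0 hr1]
  exact (summable_geometric_of_lt_one hr0 hr1).sum_le_tsum _ fun i _ ↦ pow_nonneg hr0 i

lemma sum_normPow_primeProd_le_tsum {x : ℝ} (hx : x < -1) (u : Finset (Finset (MonicIrred K))) :
    ∑ s ∈ u, normPow x (primeProd s) ≤ ∑' s : Finset (MonicIrred K), normPow x (primeProd s) :=
  (summable_normPow_primeProd hx).sum_le_tsum _ fun _ _ ↦ (normPow_pos _ _).le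
end

/-! ### The squarefree sieve -/

section
variable {K : Type} [Field K]

lemma primeProd_sq_dvd_iff {s : Finset (MonicIrred K)} {F : K[X]} :
    primeProd s ^ 2 ∣ F ↔ ∀ P ∈ s, P.1 ^ 2 ∣ F := by
  refine ⟨fun h P hP ↦ (pow_dvd_pow_of_dvd (dvd_primeProd_iff.2 hP) 2).trans h, fun h ↦ ?_⟩
  rw [primeProd, ← Finset.prod_pow]
  refine Finset.prod_dvd_of_coprime (fun P _ Q _ hPQ ↦ ?_) h
  exact ((P.isCoprime_iff _).2 fun hd ↦ hPQ (MonicIrred.eq_of_dvd hd)).pow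

lemma squarefree_iff_forall_monicIrred_sq_not_dvd {F : K[X]} (hF : F ≠ 0) :
    Squarefree F ↔ ∀ P : MonicIrred K, ¬ P.1 ^ 2 ∣ F := by
  rw [squarefree_iff_irreducible_sq_not_dvd_of_ne_zero hF]
  refine ⟨fun h P hd ↦ h P.1 P.2.2 (by rwa [← sq]), fun h P hP hd ↦ ?_⟩
  have ha : Associated (normalize P) P := normalize_associated P
  refine h ⟨normalize P, monic_normalize hP.ne_zero, ha.symm.irreducible hP⟩ ?_
  rw [sq]
  exact (ha.mul_mul ha).dvd.trans hd

lemma sum_powerset_neg_one_pow {R ι : Type*} [Ring R] (s : Finset ι) :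
    ∑ t ∈ s.powerset, (-1 : R) ^ t.card = if s = ∅ then 1 else 0 := by
  exact_mod_cast congrArg (Int.cast : ℤ → R) (Finset.sum_powerset_neg_one_pow_card (x := s))

variable [Fintype K]

lemma primeSetsOfDegreeLE_filter_sq_dvd {F : K[X]} (hF : F.Monic) :
    {s ∈ primeSetsOfDegreeLE K (F.natDegree / 2) | primeProd s ^ 2 ∣ F} =
      {P ∈ monicPrimeFactors F | P.1 ^ 2 ∣ F}.powerset := by
  ext s
  rw [Finset.mem_filter, Finset.mem_powerset, primeProd_sq_dvd_iff, mem_primeSetsOfDegreeLE]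
  constructor
  · rintro ⟨_, h⟩ P hP
    exact Finset.mem_filter.2 ⟨(mem_monicPrimeFactors hF.ne_zero).2
      ((dvd_pow_self _ two_ne_zero).trans (h P hP)), h P hP⟩
  · intro h
    have hsq : ∀ P ∈ s, P.1 ^ 2 ∣ F := fun P hP ↦ (Finset.mem_filter.1 (h hP)).2
    have hdeg := natDegree_le_of_dvd (primeProd_sq_dvd_iff.2 hsq) hF.ne_zero
    rw [(monic_primeProd s).natDegree_pow] at hdeg
    exact ⟨by omega, hsq⟩

lemma sum_neg_one_pow_card_of_sq_dvd {F : K[X]} (hF : F.Monic) :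
    ∑ s ∈ primeSetsOfDegreeLE K (F.natDegree / 2) with primeProd s ^ 2 ∣ F, (-1 : ℂ) ^ s.card =
      if Squarefree F then 1 else 0 := by
  rw [primeSetsOfDegreeLE_filter_sq_dvd hF, sum_powerset_neg_one_pow]
  congr 1
  rw [squarefree_iff_forall_monicIrred_sq_not_dvd hF.ne_zero, Finset.filter_eq_empty_iff,
    eq_iff_iff]
  exact ⟨fun h P hd ↦ h ((mem_monicPrimeFactors hF.ne_zero).2
    ((dvd_pow_self _ two_ne_zero).trans hd)) hd, fun h P _ ↦ h P⟩

lemma sum_monicsOfDegree_filter_dvd {M : Type*} [AddCommMonoid M] {E : K[X]} (hE : E.Monic)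
    {n : ℕ} (h : E.natDegree ≤ n) (φ : K[X] → M) :
    ∑ F ∈ monicsOfDegree K n with E ∣ F, φ F =
      ∑ F ∈ monicsOfDegree K (n - E.natDegree), φ (F * E) := by
  symm
  refine Finset.sum_bij (fun F _ ↦ F * E) (fun F hF ↦ ?_)
    (fun F _ G _ h ↦ mul_right_cancel₀ hE.ne_zero h) (fun F hF ↦ ?_) (fun _ _ ↦ rfl)
  · obtain ⟨hm, hd⟩ := mem_monicsOfDegree.1 hF
    refine Finset.mem_filter.2 ⟨mem_monicsOfDegree.2 ⟨hm.mul hE, ?_⟩, dvd_mul_left _ _⟩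
    rw [hm.natDegree_mul hE]
    omega
  · obtain ⟨hF, G, rfl⟩ := Finset.mem_filter.1 hF
    obtain ⟨hm, hd⟩ := mem_monicsOfDegree.1 hF
    have hG : G.Monic := hE.of_mul_monic_left hm
    refine ⟨G, mem_monicsOfDegree.2 ⟨hG, ?_⟩, mul_comm _ _⟩
    rw [hE.natDegree_mul hG] at hd
    omega

variable {ω : MulChar K ℂ}

/-- The double sum of `χ_F(f)` over squarefree monic `F` of degree `N` and monic `f` of
degree `n`. -/
def squarefreeSum (ω : MulChar K ℂ) (N n : ℕ) : ℂ :=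
  ∑ F ∈ monicsOfDegree K N with Squarefree F, ∑ f ∈ monicsOfDegree K n, residueSymbol ω F f

lemma squarefreeSum_eq_sum_twistedSum (N n : ℕ) :
    squarefreeSum ω N n = ∑ s ∈ primeSetsOfDegreeLE K (N / 2),
      (-1 : ℂ) ^ s.card * twistedSum ω s (N - 2 * (primeProd s).natDegree) n := by
  set φ : K[X] → ℂ := fun F ↦ ∑ f ∈ monicsOfDegree K n, residueSymbol ω F f
  calc squarefreeSum ω N n
      = ∑ F ∈ monicsOfDegree K N, (if Squarefree F then 1 else 0) * φ F := by
        simp only [squarefreeSum, Finset.sum_filter, ite_mul, one_mul, zero_mul, φ]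
    _ = ∑ F ∈ monicsOfDegree K N, ∑ s ∈ primeSetsOfDegreeLE K (N / 2),
          if primeProd s ^ 2 ∣ F then (-1 : ℂ) ^ s.card * φ F else 0 := by
        refine Finset.sum_congr rfl fun F hF ↦ ?_
        obtain ⟨hm, rfl⟩ := mem_monicsOfDegree.1 hF
        rw [← sum_neg_one_pow_card_of_sq_dvd hm, Finset.sum_mul, Finset.sum_filter]
    _ = ∑ s ∈ primeSetsOfDegreeLE K (N / 2),
          ∑ F ∈ monicsOfDegree K N with primeProd s ^ 2 ∣ F, (-1 : ℂ) ^ s.card * φ F := by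
        simp only [Finset.sum_filter]
        exact Finset.sum_comm
    _ = _ := by
        refine Finset.sum_congr rfl fun s hs ↦ ?_
        have hdeg : (primeProd s ^ 2).natDegree = 2 * (primeProd s).natDegree :=
          (monic_primeProd s).natDegree_pow 2
        have hs := mem_primeSetsOfDegreeLE.1 hs
        rw [sum_monicsOfDegree_filter_dvd ((monic_primeProd s).pow 2) (by omega), hdeg,
          twistedSum, Finset.mul_sum]

lemma exists_norm_twistedSum_le_of_lt_two_mul (hcard : 4 ≤ Fintype.card K) {ψ : AddChar K ℂ}
    (hω : ω ^ 3 = 1) (hω1 : ω ≠ 1) (hψ : ψ ≠ 1) :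
    ∃ C : ℝ, 0 < C ∧ ∀ (n j : ℕ) (s : Finset (MonicIrred K)), ¬ 3 ∣ n + j →
      2 * (primeProd s).natDegree ≤ n + j → j < 2 * (primeProd s).natDegree →
      ‖twistedSum ω s (n + j - 2 * (primeProd s).natDegree) n‖ ≤
        C * (Fintype.card K : ℝ) ^ ((n + j : ℝ) + n / 3 - j / 48) *
          normPow (-(25 / 24)) (primeProd s) := by
  obtain ⟨A, hA0, hA⟩ := exists_norm_twistedSum_le hcard hω hω1 hψ
  obtain ⟨B, hB1, hB⟩ := exists_pow_card_le_normPow (K := K) (c := 8) (ε := 1 / 12)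
    (by norm_num) (by norm_num)
  have hq0 : (0 : ℝ) < Fintype.card K := card_pos_real
  refine ⟨A * B, by positivity, fun n j s h3 hs hj ↦ ?_⟩
  have hsum : n + j - 2 * (primeProd s).natDegree + 2 * (primeProd s).natDegree = n + j := by omega
  have hD := normPow_pos (-(25 / 24)) (primeProd s)
  rcases le_or_gt j (primeProd s).natDegree with hjd | hjd
  · rw [twistedSum_eq_zero hω hω1 (by rwa [hsum]) (by omega), norm_zero]
    positivity
  refine (hA s _ n (j - (primeProd s).natDegree) (by rwa [hsum]) (by omega) (by omega)).trans ?_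
  rw [Nat.cast_sub hs, Nat.cast_sub hjd.le]
  push_cast
  set d : ℝ := ((primeProd s).natDegree : ℝ) with hd
  have hjd' : (j : ℝ) ≤ 2 * d := by rw [hd]; exact_mod_cast hj.le
  set X := (Fintype.card K : ℝ) ^ (4 / 3 * (n + j - 2 * d) + 1 / 3 * (j - d)) with hX
  set E := (Fintype.card K : ℝ) ^ ((n + j : ℝ) + n / 3 - j / 48) with hE
  have hp : 0 < normPow (1 / 2) (primeProd s) := normPow_pos _ _
  have hexp : X * normPow (1 / 2) (primeProd s) * normPow (1 / 12) (primeProd s) ≤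
      E * normPow (-(25 / 24)) (primeProd s) := by
    rw [hX, hE, normPow, normPow, normPow, ← hd, ← Real.rpow_add hq0, ← Real.rpow_add hq0,
      ← Real.rpow_add hq0]
    exact Real.rpow_le_rpow_of_exponent_le one_lt_card_real.le (by linarith)
  calc A * 8 ^ s.card * X * normPow (1 / 2) (primeProd s)
      ≤ A * (B * normPow (1 / 12) (primeProd s)) * X * normPow (1 / 2) (primeProd s) := by
        gcongr
        exact hB s
    _ = A * B * (X * normPow (1 / 2) (primeProd s) * normPow (1 / 12) (primeProd s)) := by ring
    _ ≤ A * B * (E * normPow (-(25 / 24)) (primeProd s)) := by gcongr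
    _ = _ := by ring

lemma exists_norm_sum_twistedSum_tail_le (hcard : 4 ≤ Fintype.card K) {ψ : AddChar K ℂ}
    (hω : ω ^ 3 = 1) (hω1 : ω ≠ 1) (hψ : ψ ≠ 1) :
    ∃ C : ℝ, 0 < C ∧ ∀ n j : ℕ, ¬ 3 ∣ n + j →
      ‖∑ s ∈ primeSetsOfDegreeLE K ((n + j) / 2) with ¬ 2 * (primeProd s).natDegree ≤ j,
        (-1 : ℂ) ^ s.card * twistedSum ω s (n + j - 2 * (primeProd s).natDegree) n‖ ≤
      C * (Fintype.card K : ℝ) ^ ((n + j : ℝ) + n / 3 - j / 48) := by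
  obtain ⟨A, hA0, hA⟩ := exists_norm_twistedSum_le_of_lt_two_mul hcard hω hω1 hψ
  set T := ∑' s : Finset (MonicIrred K), normPow (-(25 / 24)) (primeProd s)
  have hT0 : 0 ≤ T := tsum_nonneg fun s ↦ (normPow_pos _ _).le
  refine ⟨A * (T + 1), by positivity, fun n j h3 ↦ ?_⟩
  set E := (Fintype.card K : ℝ) ^ ((n + j : ℝ) + n / 3 - j / 48)
  calc _ ≤ ∑ s ∈ primeSetsOfDegreeLE K ((n + j) / 2) with ¬ 2 * (primeProd s).natDegree ≤ j,
        A * E * normPow (-(25 / 24)) (primeProd s) := by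
        refine norm_sum_le_of_le _ fun s hs ↦ ?_
        obtain ⟨hs, hj⟩ := Finset.mem_filter.1 hs
        have hs := mem_primeSetsOfDegreeLE.1 hs
        rw [norm_mul, norm_pow, norm_neg, norm_one, one_pow, one_mul]
        exact hA n j s h3 (by omega) (not_le.1 hj)
    _ ≤ A * E * T := by
        rw [← Finset.mul_sum]
        gcongr
        exact sum_normPow_primeProd_le_tsum (by norm_num) _
    _ ≤ A * E * (T + 1) := by gcongr; linarith
    _ = _ := by ring
end

/-! ### Euler products -/

section
variable {K : Type} [Field K] [Fintype K]

lemma prod_normPow_eq (x : ℝ) (s : Finset (MonicIrred K)) :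
    ∏ P ∈ s, normPow x P.1 = normPow x (primeProd s) :=
  (normPow_prod x s _ fun P _ ↦ P.2.1.ne_zero).symm

lemma normPow_lt_one {x : ℝ} (hx : x < 0) (P : MonicIrred K) : normPow x P.1 < 1 :=
  Real.rpow_lt_one_of_one_lt_of_neg one_lt_card_real
    (mul_neg_of_neg_of_pos hx (by exact_mod_cast P.natDegree_pos))

lemma card_pow_sub_natDegree {f : K[X]} {n : ℕ} (h : f.natDegree ≤ n) :
    (Fintype.card K : ℝ) ^ (n - f.natDegree) = (Fintype.card K : ℝ) ^ n * normPow (-1) f := by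
  rw [normPow, ← Real.rpow_natCast, ← Real.rpow_natCast, ← Real.rpow_add card_pos_real,
    Nat.cast_sub h]
  ring_nf

lemma mem_powerset_monicPrimeFactors {k : K[X]} (hk : k ≠ 0) {s : Finset (MonicIrred K)} :
    s ∈ (monicPrimeFactors k).powerset ↔ primeProd s ∣ k := by
  rw [Finset.mem_powerset]
  refine ⟨fun h ↦ primeProd_dvd fun P hP ↦ (mem_monicPrimeFactors hk).1 (h hP), fun h P hP ↦ ?_⟩
  exact (mem_monicPrimeFactors hk).2 ((dvd_primeProd_iff.2 hP).trans h)

lemma card_monicsOfDegree_filter_dvd {E : K[X]} (hE : E.Monic) {n : ℕ} (h : E.natDegree ≤ n) :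
    #{F ∈ monicsOfDegree K n | E ∣ F} = Fintype.card K ^ (n - E.natDegree) := by
  rw [Finset.card_eq_sum_ones, sum_monicsOfDegree_filter_dvd hE h, ← Finset.card_eq_sum_ones,
    card_monicsOfDegree]

lemma powerset_monicPrimeFactors {k : K[X]} (hk : k ≠ 0) :
    (monicPrimeFactors k).powerset =
      {s ∈ primeSetsOfDegreeLE K k.natDegree | primeProd s ∣ k} := by
  ext s
  rw [mem_powerset_monicPrimeFactors hk, Finset.mem_filter, mem_primeSetsOfDegreeLE]
  exact ⟨fun h ↦ ⟨natDegree_le_of_dvd h hk, h⟩, fun h ↦ h.2⟩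

lemma sum_monicsOfDegree_sum_powerset (l : ℕ) (c : Finset (MonicIrred K) → ℝ) :
    ∑ k ∈ monicsOfDegree K l, ∑ s ∈ (monicPrimeFactors k).powerset, c s =
      (Fintype.card K : ℝ) ^ l *
        ∑ s ∈ primeSetsOfDegreeLE K l, c s * normPow (-1) (primeProd s) := by
  calc _ = ∑ k ∈ monicsOfDegree K l, ∑ s ∈ primeSetsOfDegreeLE K l,
        if primeProd s ∣ k then c s else 0 := by
        refine Finset.sum_congr rfl fun k hk ↦ ?_
        obtain ⟨hm, rfl⟩ := mem_monicsOfDegree.1 hk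
        rw [powerset_monicPrimeFactors hm.ne_zero, Finset.sum_filter]
    _ = ∑ s ∈ primeSetsOfDegreeLE K l, ∑ k ∈ monicsOfDegree K l with primeProd s ∣ k, c s := by
        simp only [Finset.sum_filter]
        exact Finset.sum_comm
    _ = _ := by
        rw [Finset.mul_sum]
        refine Finset.sum_congr rfl fun s hs ↦ ?_
        have hs := mem_primeSetsOfDegreeLE.1 hs
        rw [Finset.sum_const, card_monicsOfDegree_filter_dvd (monic_primeProd s) hs, nsmul_eq_mul,
          Nat.cast_pow, card_pow_sub_natDegree hs]
        ring

lemma monicPrimeFactors_eq_empty_iff {k : K[X]} (hk : k.Monic) :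
    monicPrimeFactors k = ∅ ↔ k.natDegree = 0 := by
  rw [hk.natDegree_eq_zero]
  constructor
  · intro h
    by_contra h1
    obtain ⟨P, hP, hi, hd⟩ := exists_monic_irreducible_factor k
      (fun hu ↦ h1 (hk.eq_one_of_isUnit hu))
    have hmem : (⟨P, hP, hi⟩ : MonicIrred K) ∈ monicPrimeFactors k :=
      (mem_monicPrimeFactors hk.ne_zero).2 hd
    exact Finset.notMem_empty _ (h ▸ hmem)
  · rintro rfl
    refine Finset.eq_empty_of_forall_notMem fun P hP ↦ ?_
    exact P.2.2.not_isUnit (isUnit_of_dvd_one ((mem_monicPrimeFactors one_ne_zero).1 hP))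

lemma sum_neg_one_pow_mul_normPow_neg_one (n : ℕ) :
    ∑ s ∈ primeSetsOfDegreeLE K n, (-1 : ℝ) ^ s.card * normPow (-1) (primeProd s) =
      if n = 0 then 1 else 0 := by
  have hq : (Fintype.card K : ℝ) ^ n ≠ 0 := pow_ne_zero _ card_pos_real.ne'
  refine mul_left_cancel₀ hq ?_
  rw [← sum_monicsOfDegree_sum_powerset]
  calc _ = ∑ _k ∈ monicsOfDegree K n, if n = 0 then (1 : ℝ) else 0 := by
        refine Finset.sum_congr rfl fun k hk ↦ ?_
        obtain ⟨hm, hd⟩ := mem_monicsOfDegree.1 hk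
        rw [sum_powerset_neg_one_pow, if_congr (monicPrimeFactors_eq_empty_iff hm) rfl rfl, hd]
    _ = _ := by rw [Finset.sum_const, card_monicsOfDegree, nsmul_eq_mul, Nat.cast_pow]

lemma sum_primeSetsOfDegreeLE_succ (n : ℕ) (c : Finset (MonicIrred K) → ℝ) :
    ∑ s ∈ primeSetsOfDegreeLE K (n + 1), c s = ∑ s ∈ primeSetsOfDegreeLE K n, c s +
      ∑ s ∈ primeSetsOfDegreeLE K (n + 1) with (primeProd s).natDegree = n + 1, c s := by
  rw [← Finset.sum_filter_add_sum_filter_not (primeSetsOfDegreeLE K (n + 1))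
    (fun s ↦ (primeProd s).natDegree ≤ n)]
  congr 1 <;> refine Finset.sum_congr ?_ fun _ _ ↦ rfl <;> ext s <;>
    simp only [Finset.mem_filter, mem_primeSetsOfDegreeLE] <;> omega

lemma primeSetsOfDegreeLE_zero : primeSetsOfDegreeLE K 0 = {∅} := by
  ext s
  rw [mem_primeSetsOfDegreeLE, Nat.le_zero, (monic_primeProd s).natDegree_eq_zero,
    Finset.mem_singleton, ← primeProd_injective.eq_iff, primeProd, primeProd, Finset.prod_empty]

lemma sum_neg_one_pow_of_natDegree_eq_succ (n : ℕ) :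
    ∑ s ∈ primeSetsOfDegreeLE K (n + 1) with (primeProd s).natDegree = n + 1, (-1 : ℝ) ^ s.card =
      if n = 0 then -(Fintype.card K : ℝ) else 0 := by
  have h := sum_neg_one_pow_mul_normPow_neg_one (K := K) (n + 1)
  rw [sum_primeSetsOfDegreeLE_succ, sum_neg_one_pow_mul_normPow_neg_one, if_neg n.succ_ne_zero,
    Finset.sum_congr rfl fun s hs ↦ by rw [normPow, (Finset.mem_filter.1 hs).2],
    ← Finset.sum_mul, neg_one_mul, Real.rpow_neg card_pos_real.le, Real.rpow_natCast,
    add_eq_zero_iff_neg_eq, eq_mul_inv_iff_mul_eq₀ (pow_ne_zero _ card_pos_real.ne')] at h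
  rw [← h]
  split_ifs with hn <;> simp [hn]

-- For `n ≥ 1` the partial sums of `1 / ζ(-x) = 1 - q ^ (1 + x)` are already stationary.
lemma sum_neg_one_pow_mul_normPow_succ (x : ℝ) (n : ℕ) :
    ∑ s ∈ primeSetsOfDegreeLE K (n + 1), (-1 : ℝ) ^ s.card * normPow x (primeProd s) =
      1 - (Fintype.card K : ℝ) ^ (1 + x) := by
  have hstep (n : ℕ) : ∑ s ∈ primeSetsOfDegreeLE K (n + 1) with (primeProd s).natDegree = n + 1,
      (-1 : ℝ) ^ s.card * normPow x (primeProd s) =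
        (if n = 0 then -(Fintype.card K : ℝ) else 0) *
          (Fintype.card K : ℝ) ^ (x * (n + 1 : ℕ)) := by
    rw [← sum_neg_one_pow_of_natDegree_eq_succ, Finset.sum_mul]
    exact Finset.sum_congr rfl fun s hs ↦ by rw [normPow, (Finset.mem_filter.1 hs).2]
  induction n with
  | zero =>
    rw [sum_primeSetsOfDegreeLE_succ, hstep, primeSetsOfDegreeLE_zero, Finset.sum_singleton,
      primeProd, Finset.prod_empty, normPow_one, Real.rpow_add card_pos_real]
    simp [sub_eq_add_neg]
  | succ n ih => rw [sum_primeSetsOfDegreeLE_succ, ih, hstep]; simp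

/-- The local factor at `P` of `D ↦ μ(D) / |D| ^ 2` restricted to the squarefree `D` prime
to `k`. -/
def localFactor (k : K[X]) (P : MonicIrred K) : ℝ := if P.1 ∣ k then 0 else -normPow (-2) P.1

lemma prod_localFactor (k : K[X]) (s : Finset (MonicIrred K)) :
    ∏ P ∈ s, localFactor k P =
      if ∀ P ∈ s, ¬ P.1 ∣ k then (-1) ^ s.card * normPow (-2) (primeProd s) else 0 := by
  split_ifs with h
  · rw [← prod_normPow_eq, ← Finset.prod_neg]
    exact Finset.prod_congr rfl fun P hP ↦ if_neg (h P hP)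
  · push Not at h
    obtain ⟨P, hP, hd⟩ := h
    exact Finset.prod_eq_zero hP (if_pos hd)

lemma norm_prod_localFactor_le (k : K[X]) (s : Finset (MonicIrred K)) :
    ‖∏ P ∈ s, localFactor k P‖ ≤ normPow (-2) (primeProd s) := by
  rw [prod_localFactor]
  split_ifs
  · rw [norm_mul, norm_pow, norm_neg, norm_one, one_pow, one_mul,
      Real.norm_of_nonneg (normPow_pos _ _).le]
  · rw [norm_zero]
    exact (normPow_pos _ _).le

lemma summable_prod_localFactor (k : K[X]) :
    Summable fun s : Finset (MonicIrred K) ↦ ∏ P ∈ s, localFactor k P :=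
  .of_norm_bounded (summable_normPow_primeProd (by norm_num)) (norm_prod_localFactor_le k)

lemma tprod_one_add_localFactor_one :
    ∏' P : MonicIrred K, (1 + localFactor 1 P) = 1 - (Fintype.card K : ℝ)⁻¹ := by
  rw [tprod_one_add (summable_prod_localFactor 1)]
  have h := ((summable_prod_localFactor (1 : K[X])).hasSum.comp
    tendsto_primeSetsOfDegreeLE).comp (tendsto_add_atTop_nat 1)
  refine tendsto_nhds_unique h (tendsto_const_nhds.congr fun n ↦ ?_)
  rw [Function.comp_apply, Function.comp_apply, ← Real.rpow_neg_one,
    show (-1 : ℝ) = 1 + -2 by norm_num, ← sum_neg_one_pow_mul_normPow_succ (K := K) _ n]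
  refine Finset.sum_congr rfl fun s _ ↦ ?_
  refine ((prod_localFactor 1 s).trans (if_pos ?_)).symm
  exact fun P _ hd ↦ P.2.2.not_isUnit (isUnit_of_dvd_one hd)

lemma prod_mul_tprod_one_add_localFactor {k : K[X]} (hk : k ≠ 0) :
    (∏ P ∈ monicPrimeFactors k, (1 - normPow (-2) P.1)) *
      ∏' P : MonicIrred K, (1 + localFactor k P) = 1 - (Fintype.card K : ℝ)⁻¹ := by
  set f : MonicIrred K → ℝ := fun P ↦ if P ∈ monicPrimeFactors k then 1 - normPow (-2) P.1 else 1
  have hone : ∀ P : MonicIrred K, P ∉ monicPrimeFactors k → f P = 1 := fun P hP ↦ if_neg hP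
  have hprod : ∏ P ∈ monicPrimeFactors k, (1 - normPow (-2) P.1) = ∏' P : MonicIrred K, f P := by
    rw [tprod_eq_prod hone]
    exact Finset.prod_congr rfl fun P hP ↦ (if_pos hP).symm
  rw [← tprod_one_add_localFactor_one, hprod,
    ← Multipliable.tprod_mul (multipliable_of_ne_finset_one hone)
      (multipliable_one_add_of_summable_prod (summable_prod_localFactor k))]
  refine tprod_congr fun P ↦ ?_
  have hP1 : ¬ P.1 ∣ 1 := fun hd ↦ P.2.2.not_isUnit (isUnit_of_dvd_one hd)
  simp only [f, mem_monicPrimeFactors hk, localFactor, if_neg hP1]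
  split_ifs <;> ring

lemma abs_sum_prod_localFactor_sub_le (k : K[X]) (J : ℕ) :
    |∑ s ∈ primeSetsOfDegreeLE K J, ∏ P ∈ s, localFactor k P -
        ∏' P : MonicIrred K, (1 + localFactor k P)| ≤
      (∑' s : Finset (MonicIrred K), normPow (-(3 / 2)) (primeProd s)) *
        (Fintype.card K : ℝ) ^ (-((J : ℝ) + 1) / 2) := by
  have hq0 : (0 : ℝ) < Fintype.card K := card_pos_real
  have hs := summable_prod_localFactor k
  rw [tprod_one_add hs, ← hs.sum_add_tsum_subtype_compl (primeSetsOfDegreeLE K J), abs_sub_comm,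
    add_sub_cancel_left, ← Real.norm_eq_abs]
  have hsum := summable_normPow_primeProd (K := K) (x := -(3 / 2)) (by norm_num)
  set c := (Fintype.card K : ℝ) ^ (-((J : ℝ) + 1) / 2) with hc
  have hbound : ∀ s : {s // s ∉ primeSetsOfDegreeLE K J},
      ‖∏ P ∈ s.1, localFactor k P‖ ≤ normPow (-(3 / 2)) (primeProd s.1) * c := by
    rintro ⟨s, hs⟩
    refine (norm_prod_localFactor_le k s).trans ?_
    rw [mem_primeSetsOfDegreeLE, not_le] at hs
    rw [normPow, normPow, hc, ← Real.rpow_add hq0]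
    refine Real.rpow_le_rpow_of_exponent_le one_lt_card_real.le ?_
    have hJ : (J : ℝ) + 1 ≤ (primeProd s).natDegree := by exact_mod_cast hs
    linarith
  have hsub := (hsum.subtype (fun s ↦ s ∉ primeSetsOfDegreeLE K J)).mul_right c
  refine (tsum_of_norm_bounded hsub.hasSum hbound).trans ?_
  rw [tsum_mul_right]
  refine mul_le_mul_of_nonneg_right ?_ (Real.rpow_pos_of_pos hq0 _).le
  exact hsum.tsum_subtype_le _ _ (fun s ↦ (normPow_pos _ _).le)
end

section
variable {K : Type} [Field K] [Fintype K]

lemma card_degreeLTFinset_filter_dvd {E : K[X]} (hE : E.Monic) {n : ℕ} (h : E.natDegree ≤ n) :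
    #{F ∈ degreeLTFinset K n | E ∣ F} = Fintype.card K ^ (n - E.natDegree) := by
  rw [← card_degreeLTFinset (R := K) (n - E.natDegree)]
  have hdeg (G : K[X]) : G.degree < (n - E.natDegree : ℕ) ↔ (E * G).degree < n := by
    by_cases hG : G = 0
    · simp [hG]
    rw [degree_mul, degree_eq_natDegree hE.ne_zero, degree_eq_natDegree hG]
    norm_cast
    omega
  refine (Finset.card_bij (fun G _ ↦ E * G) (fun G hG ↦ ?_)
    (fun F _ G _ h ↦ mul_left_cancel₀ hE.ne_zero h) fun F hF ↦ ?_).symm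
  · exact Finset.mem_filter.2
      ⟨mem_degreeLTFinset.2 ((hdeg G).1 (mem_degreeLTFinset.1 hG)), dvd_mul_right _ _⟩
  · obtain ⟨hF, G, rfl⟩ := Finset.mem_filter.1 hF
    exact ⟨G, mem_degreeLTFinset.2 ((hdeg G).2 (mem_degreeLTFinset.1 hF)), rfl⟩

lemma isCoprime_iff_monicPrimeFactors_filter_dvd_eq_empty {k : K[X]} (hk : k ≠ 0) (a : K[X]) :
    IsCoprime k a ↔ {P ∈ monicPrimeFactors k | P.1 ∣ a} = (∅ : Finset (MonicIrred K)) := by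
  rw [Finset.filter_eq_empty_iff]
  refine ⟨fun h P hP hd ↦ ?_, fun h ↦ ?_⟩
  · exact P.2.2.not_isUnit (h.isUnit_of_dvd' ((mem_monicPrimeFactors hk).1 hP) hd)
  · exact isCoprime_of_forall_not_dvd hk fun P hP ↦ h ((mem_monicPrimeFactors hk).2 hP)

lemma ite_isCoprime_eq_sum_powerset {k : K[X]} (hk : k ≠ 0) (a : K[X]) :
    (if IsCoprime k a then (1 : ℝ) else 0) =
      ∑ s ∈ (monicPrimeFactors k).powerset with primeProd s ∣ a, (-1) ^ s.card := by
  have hset : {s ∈ (monicPrimeFactors k).powerset | primeProd s ∣ a} =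
      ({P ∈ monicPrimeFactors k | P.1 ∣ a} : Finset (MonicIrred K)).powerset := by
    ext s
    rw [Finset.mem_filter, Finset.mem_powerset, Finset.mem_powerset]
    refine ⟨fun h P hP ↦ ?_, fun h ↦ ⟨h.trans (Finset.filter_subset _ _), ?_⟩⟩
    · exact Finset.mem_filter.2 ⟨h.1 hP, (dvd_primeProd_iff.2 hP).trans h.2⟩
    · exact primeProd_dvd fun P hP ↦ (Finset.mem_filter.1 (h hP)).2
  rw [hset, sum_powerset_neg_one_pow]
  exact if_congr (isCoprime_iff_monicPrimeFactors_filter_dvd_eq_empty hk a) rfl rfl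

lemma polyTotient_eq {k : K[X]} (hk : k ≠ 0) :
    (polyTotient k : ℝ) =
      (Fintype.card K : ℝ) ^ k.natDegree * ∏ P ∈ monicPrimeFactors k, (1 - normPow (-1) P.1) := by
  calc (polyTotient k : ℝ)
      = ∑ a ∈ degreeLTFinset K k.natDegree, ∑ s ∈ (monicPrimeFactors k).powerset,
          if primeProd s ∣ a then (-1 : ℝ) ^ s.card else 0 := by
        rw [polyTotient, ← Finset.sum_boole]
        refine Finset.sum_congr rfl fun a _ ↦ ?_
        rw [ite_isCoprime_eq_sum_powerset hk, Finset.sum_filter]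
    _ = ∑ s ∈ (monicPrimeFactors k).powerset,
          (Fintype.card K : ℝ) ^ k.natDegree * ((-1) ^ s.card * normPow (-1) (primeProd s)) := by
        rw [Finset.sum_comm]
        refine Finset.sum_congr rfl fun s hs ↦ ?_
        have hd : (primeProd s).natDegree ≤ k.natDegree :=
          natDegree_le_of_dvd ((mem_powerset_monicPrimeFactors hk).1 hs) hk
        rw [← Finset.sum_filter, Finset.sum_const,
          card_degreeLTFinset_filter_dvd (monic_primeProd s) hd, nsmul_eq_mul, Nat.cast_pow,
          card_pow_sub_natDegree hd]
        ring
    _ = _ := by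
        simp_rw [← Finset.mul_sum, ← prod_normPow_eq, ← Finset.prod_neg, sub_eq_add_neg,
          Finset.prod_one_add]

/-- The number `-1 / (|P| + 1)`. It is the value at primes of the multiplicative function supported
on squarefree polynomials whose sum over the divisors of `k` is `∏_{P ∣ k} (1 + 1 / |P|)⁻¹`. -/
def eulerWeight (P : MonicIrred K) : ℝ := -(normPow 1 P.1 + 1)⁻¹

lemma normPow_neg_one (f : K[X]) : normPow (-1) f = (normPow 1 f)⁻¹ := by
  rw [normPow, normPow, ← Real.rpow_neg card_pos_real.le, neg_mul]

lemma normPow_neg_two (f : K[X]) : normPow (-2) f = (normPow 1 f * normPow 1 f)⁻¹ := by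
  rw [mul_inv, ← normPow_neg_one, ← normPow_add]
  norm_num

lemma one_sub_normPow_neg_one (P : MonicIrred K) :
    1 - normPow (-1) P.1 = (1 + eulerWeight P) * (1 - normPow (-2) P.1) := by
  have hp : 0 < normPow 1 P.1 := normPow_pos _ _
  rw [eulerWeight, normPow_neg_one, normPow_neg_two]
  field_simp
  ring

lemma prod_one_sub_normPow_mul_tprod {k : K[X]} (hk : k ≠ 0) :
    (∏ P ∈ monicPrimeFactors k, (1 - normPow (-1) P.1)) *
        ∏' P : MonicIrred K, (1 + localFactor k P) =
      (1 - (Fintype.card K : ℝ)⁻¹) * ∏ P ∈ monicPrimeFactors k, (1 + eulerWeight P) := by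
  rw [← prod_mul_tprod_one_add_localFactor hk,
    Finset.prod_congr rfl fun P _ ↦ one_sub_normPow_neg_one P, Finset.prod_mul_distrib]
  ring

/-- The mean over the monic `k` of degree `l` of `∏_{P ∣ k} (1 + 1 / |P|)⁻¹`. -/
def meanEulerWeight (K : Type) [Field K] [Fintype K] (l : ℕ) : ℝ :=
  ((Fintype.card K : ℝ) ^ l)⁻¹ *
    ∑ k ∈ monicsOfDegree K l, ∏ P ∈ monicPrimeFactors k, (1 + eulerWeight P)

lemma meanEulerWeight_eq_sum (l : ℕ) :
    meanEulerWeight K l =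
      ∑ s ∈ primeSetsOfDegreeLE K l, ∏ P ∈ s, eulerWeight P * normPow (-1) P.1 := by
  have hq : (Fintype.card K : ℝ) ^ l ≠ 0 := pow_ne_zero _ card_pos_real.ne'
  simp_rw [meanEulerWeight, Finset.prod_one_add, sum_monicsOfDegree_sum_powerset,
    Finset.prod_mul_distrib, prod_normPow_eq]
  rw [inv_mul_cancel_left₀ hq]

lemma eulerWeight_mul_normPow (P : MonicIrred K) :
    eulerWeight P * normPow (-1) P.1 = -(normPow 1 P.1 * (normPow 1 P.1 + 1))⁻¹ := by
  rw [eulerWeight, normPow_neg_one, mul_inv]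
  ring

lemma abs_eulerWeight_mul_normPow_le (P : MonicIrred K) :
    |eulerWeight P * normPow (-1) P.1| ≤ normPow (-2) P.1 := by
  have hp : 0 < normPow 1 P.1 := normPow_pos _ _
  rw [eulerWeight_mul_normPow, abs_neg, abs_of_pos (by positivity), normPow_neg_two]
  exact inv_anti₀ (by positivity) (by nlinarith)

lemma summable_prod_eulerWeight :
    Summable fun s : Finset (MonicIrred K) ↦ ∏ P ∈ s, eulerWeight P * normPow (-1) P.1 := by
  refine .of_norm_bounded (summable_normPow_primeProd (x := -2) (by norm_num)) fun s ↦ ?_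
  rw [Real.norm_eq_abs, Finset.abs_prod, ← prod_normPow_eq]
  exact Finset.prod_le_prod (fun P _ ↦ abs_nonneg _) fun P _ ↦ abs_eulerWeight_mul_normPow_le P

lemma summable_abs_eulerWeight_mul_normPow :
    Summable fun P : MonicIrred K ↦ |eulerWeight P * normPow (-1) P.1| := by
  have h := (summable_prod_eulerWeight (K := K)).comp_injective Finset.singleton_injective
  simpa only [Function.comp_def, Finset.prod_singleton] using h.abs

lemma Cq_eq_tprod :
    Cq (Fintype.card K) K = ∏' P : MonicIrred K, (1 + eulerWeight P * normPow (-1) P.1) := by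
  refine tprod_congr fun P ↦ ?_
  rw [normP, eulerWeight_mul_normPow, normPow, one_mul, Real.rpow_natCast, sub_eq_add_neg]

lemma tendsto_meanEulerWeight :
    Tendsto (meanEulerWeight K) atTop (nhds (Cq (Fintype.card K) K)) := by
  rw [Cq_eq_tprod, tprod_one_add summable_prod_eulerWeight]
  exact (summable_prod_eulerWeight.hasSum.comp tendsto_primeSetsOfDegreeLE).congr
    fun l ↦ (meanEulerWeight_eq_sum l).symm

lemma Cq_ne_zero : Cq (Fintype.card K) K ≠ 0 := by
  rw [Cq_eq_tprod]
  refine tprod_one_add_ne_zero_of_summable (fun P ↦ ?_) summable_abs_eulerWeight_mul_normPow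
  have h := (abs_eulerWeight_mul_normPow_le P).trans_lt (normPow_lt_one (by norm_num) P)
  linarith [(abs_lt.1 h).1]

lemma prod_one_sub_normPow_nonneg (k : K[X]) :
    0 ≤ ∏ P ∈ monicPrimeFactors k, (1 - normPow (-1) P.1) :=
  Finset.prod_nonneg fun P _ ↦ sub_nonneg.2 (normPow_lt_one (by norm_num) P).le

lemma prod_one_sub_normPow_le_one (k : K[X]) :
    ∏ P ∈ monicPrimeFactors k, (1 - normPow (-1) P.1) ≤ 1 :=
  Finset.prod_le_one (fun P _ ↦ sub_nonneg.2 (normPow_lt_one (by norm_num) P).le)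
    fun P _ ↦ sub_le_self _ (normPow_pos _ _).le

lemma primeSetsOfDegreeLE_filter_two_mul_le (n j : ℕ) :
    {s ∈ primeSetsOfDegreeLE K ((n + j) / 2) | 2 * (primeProd s).natDegree ≤ j} =
      primeSetsOfDegreeLE K (j / 2) := by
  ext s
  simp only [Finset.mem_filter, mem_primeSetsOfDegreeLE]
  omega

variable {ω : MulChar K ℂ}

lemma sum_primeSetsOfDegreeLE_twistedSum_eq_zero (hω : ω ^ 3 = 1) (hω1 : ω ≠ 1) {n : ℕ} (j : ℕ)
    (h3 : ¬ 3 ∣ n) :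
    ∑ s ∈ primeSetsOfDegreeLE K (j / 2),
      (-1 : ℂ) ^ s.card * twistedSum ω s (n + j - 2 * (primeProd s).natDegree) n = 0 := by
  refine Finset.sum_eq_zero fun s hs ↦ ?_
  have := mem_primeSetsOfDegreeLE.1 hs
  rw [twistedSum_eq_zero_of_not_three_dvd hω hω1 s (by omega) h3, mul_zero]

lemma card_pow_mul_polyTotient {k f : K[X]} (hk : k ≠ 0) {n : ℕ}
    (h : 2 * f.natDegree + k.natDegree ≤ n) :
    (Fintype.card K : ℝ) ^ (n - 2 * f.natDegree - k.natDegree) * polyTotient k =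
      (Fintype.card K : ℝ) ^ n *
        ((∏ P ∈ monicPrimeFactors k, (1 - normPow (-1) P.1)) * normPow (-2) f) := by
  have hpow : (Fintype.card K : ℝ) ^ (n - 2 * f.natDegree - k.natDegree) *
      (Fintype.card K : ℝ) ^ k.natDegree = (Fintype.card K : ℝ) ^ n * normPow (-2) f := by
    rw [← pow_add, Nat.sub_add_cancel (by omega), normPow, ← Real.rpow_natCast,
      ← Real.rpow_natCast _ n, ← Real.rpow_add card_pos_real, Nat.cast_sub (by omega)]
    push_cast
    ring_nf
  rw [polyTotient_eq hk]
  linear_combination (∏ P ∈ monicPrimeFactors k, (1 - normPow (-1) P.1)) * hpow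

lemma neg_one_pow_mul_twistedSum_three_mul (hω : ω ^ 3 = 1) (hω1 : ω ≠ 1) {l j : ℕ}
    {s : Finset (MonicIrred K)} (hs : 2 * (primeProd s).natDegree ≤ j) :
    (-1 : ℂ) ^ s.card * twistedSum ω s (3 * l + j - 2 * (primeProd s).natDegree) (3 * l) =
      ((∑ k ∈ monicsOfDegree K l, (Fintype.card K : ℝ) ^ (3 * l + j) *
        ((∏ P ∈ monicPrimeFactors k, (1 - normPow (-1) P.1)) *
          ∏ P ∈ s, localFactor k P) : ℝ) : ℂ) := by
  rw [twistedSum_three_mul hω hω1 s (by omega), monicsPrimeTo, Finset.sum_filter, Finset.mul_sum,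
    Complex.ofReal_sum]
  refine Finset.sum_congr rfl fun k hk ↦ ?_
  obtain ⟨hm, rfl⟩ := mem_monicsOfDegree.1 hk
  rw [prod_localFactor]
  split_ifs
  · rw [mul_left_comm (∏ P ∈ monicPrimeFactors k, _), mul_left_comm _ ((-1 : ℝ) ^ s.card),
      ← card_pow_mul_polyTotient hm.ne_zero (by omega)]
    push_cast
    rfl
  · simp

lemma sum_primeSetsOfDegreeLE_twistedSum_three_mul (hω : ω ^ 3 = 1) (hω1 : ω ≠ 1) (l j : ℕ) :
    ∑ s ∈ primeSetsOfDegreeLE K (j / 2),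
      (-1 : ℂ) ^ s.card * twistedSum ω s (3 * l + j - 2 * (primeProd s).natDegree) (3 * l) =
    (((Fintype.card K : ℝ) ^ (3 * l + j) * ∑ k ∈ monicsOfDegree K l,
      (∏ P ∈ monicPrimeFactors k, (1 - normPow (-1) P.1)) *
        ∑ s ∈ primeSetsOfDegreeLE K (j / 2), ∏ P ∈ s, localFactor k P : ℝ) : ℂ) := by
  rw [Finset.sum_congr rfl fun s hs ↦ neg_one_pow_mul_twistedSum_three_mul hω hω1
    (by have := mem_primeSetsOfDegreeLE.1 hs; omega), ← Complex.ofReal_sum, Finset.sum_comm,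
    Finset.mul_sum]
  simp_rw [← Finset.mul_sum]
end

/-! ### The mean value at `1 / 3` -/

section
variable {K : Type} [Field K] [Fintype K]

lemma abs_sum_monicsOfDegree_sub_meanEulerWeight_le (l J : ℕ) :
    |((Fintype.card K : ℝ) ^ l)⁻¹ * (∑ k ∈ monicsOfDegree K l,
        (∏ P ∈ monicPrimeFactors k, (1 - normPow (-1) P.1)) *
          ∑ s ∈ primeSetsOfDegreeLE K J, ∏ P ∈ s, localFactor k P) -
        (1 - (Fintype.card K : ℝ)⁻¹) * meanEulerWeight K l| ≤
      (∑' s : Finset (MonicIrred K), normPow (-(3 / 2)) (primeProd s)) *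
        (Fintype.card K : ℝ) ^ (-((J : ℝ) + 1) / 2) := by
  set B := (∑' s : Finset (MonicIrred K), normPow (-(3 / 2)) (primeProd s)) *
    (Fintype.card K : ℝ) ^ (-((J : ℝ) + 1) / 2)
  have hmean : (1 - (Fintype.card K : ℝ)⁻¹) * meanEulerWeight K l = ((Fintype.card K : ℝ) ^ l)⁻¹ *
      ∑ k ∈ monicsOfDegree K l, (∏ P ∈ monicPrimeFactors k, (1 - normPow (-1) P.1)) *
        ∏' P : MonicIrred K, (1 + localFactor k P) := by
    rw [meanEulerWeight, mul_left_comm, Finset.mul_sum]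
    congr 1
    exact Finset.sum_congr rfl fun k hk ↦
      (prod_one_sub_normPow_mul_tprod (mem_monicsOfDegree.1 hk).1.ne_zero).symm
  have hterm : ∀ k ∈ monicsOfDegree K l, |(∏ P ∈ monicPrimeFactors k, (1 - normPow (-1) P.1)) *
      ∑ s ∈ primeSetsOfDegreeLE K J, ∏ P ∈ s, localFactor k P -
        (∏ P ∈ monicPrimeFactors k, (1 - normPow (-1) P.1)) *
          ∏' P : MonicIrred K, (1 + localFactor k P)| ≤ B := fun k _ ↦ by
    rw [← mul_sub, abs_mul, abs_of_nonneg (prod_one_sub_normPow_nonneg k)]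
    exact (mul_le_of_le_one_left (abs_nonneg _) (prod_one_sub_normPow_le_one k)).trans
      (abs_sum_prod_localFactor_sub_le k J)
  have hq : (0 : ℝ) < (Fintype.card K : ℝ) ^ l := pow_pos card_pos_real _
  rw [hmean, ← mul_sub, ← Finset.sum_sub_distrib, abs_mul, abs_of_pos (inv_pos.2 hq),
    inv_mul_le_iff₀ hq]
  refine (Finset.abs_sum_le_sum_abs _ _).trans ((Finset.sum_le_card_nsmul _ _ _ hterm).trans ?_)
  rw [card_monicsOfDegree, nsmul_eq_mul, Nat.cast_pow]

/-- The main term of the `n`-th coefficient `q ^ (-(N + n / 3)) * squarefreeSum ω N n`, up to the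
factor `1 - 1 / q`: only the cubes `f = k ^ 3` contribute. -/
def mainTerm (K : Type) [Field K] [Fintype K] (n : ℕ) : ℝ :=
  if 3 ∣ n then meanEulerWeight K (n / 3) else 0

variable {ψ : AddChar K ℂ} {ω : MulChar K ℂ}

lemma norm_sum_twistedSum_sub_mainTerm_le (hω : ω ^ 3 = 1) (hω1 : ω ≠ 1) (n j : ℕ) :
    ‖(((Fintype.card K : ℝ) ^ (-((n + j : ℝ) + n / 3)) : ℝ) : ℂ) *
        ∑ s ∈ primeSetsOfDegreeLE K (j / 2),
          (-1 : ℂ) ^ s.card * twistedSum ω s (n + j - 2 * (primeProd s).natDegree) n -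
        (((1 - (Fintype.card K : ℝ)⁻¹) * mainTerm K n : ℝ) : ℂ)‖ ≤
      (∑' s : Finset (MonicIrred K), normPow (-(3 / 2)) (primeProd s)) *
        (Fintype.card K : ℝ) ^ (-(j : ℝ) / 48) := by
  have hq0 : (0 : ℝ) < Fintype.card K := card_pos_real
  have hT : 0 ≤ ∑' s : Finset (MonicIrred K), normPow (-(3 / 2)) (primeProd s) :=
    tsum_nonneg fun s ↦ (normPow_pos _ _).le
  by_cases hn : 3 ∣ n
  · obtain ⟨l, rfl⟩ := hn
    have hscale : (Fintype.card K : ℝ) ^ (-(((3 * l : ℕ) + j : ℝ) + (3 * l : ℕ) / 3)) *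
        (Fintype.card K : ℝ) ^ (3 * l + j) = ((Fintype.card K : ℝ) ^ l)⁻¹ := by
      rw [← Real.rpow_natCast, ← Real.rpow_natCast, ← Real.rpow_neg hq0.le, ← Real.rpow_add hq0]
      push_cast
      ring_nf
    rw [sum_primeSetsOfDegreeLE_twistedSum_three_mul hω hω1, ← Complex.ofReal_mul,
      ← Complex.ofReal_sub, Complex.norm_real, Real.norm_eq_abs, ← mul_assoc, hscale, mainTerm,
      if_pos (dvd_mul_right 3 l), Nat.mul_div_cancel_left l (by norm_num)]
    refine (abs_sum_monicsOfDegree_sub_meanEulerWeight_le l (j / 2)).trans ?_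
    refine mul_le_mul_of_nonneg_left ?_ hT
    refine Real.rpow_le_rpow_of_exponent_le one_lt_card_real.le ?_
    have hfloor : (j : ℝ) ≤ 2 * ((j / 2 : ℕ) + 1) := by
      exact_mod_cast (by omega : j ≤ 2 * (j / 2 + 1))
    linarith [Nat.cast_nonneg (α := ℝ) j]
  · rw [sum_primeSetsOfDegreeLE_twistedSum_eq_zero hω hω1 j hn, mainTerm, if_neg hn, mul_zero,
      mul_zero, Complex.ofReal_zero, sub_zero, norm_zero]
    exact mul_nonneg hT (Real.rpow_pos_of_pos hq0 _).le

lemma exists_norm_squarefreeSum_sub_mainTerm_le (hcard : 4 ≤ Fintype.card K) (hω : ω ^ 3 = 1)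
    (hω1 : ω ≠ 1) (hψ : ψ ≠ 1) : ∃ C : ℝ, 0 < C ∧ ∀ n j : ℕ, ¬ 3 ∣ n + j →
      ‖(((Fintype.card K : ℝ) ^ (-((n + j : ℝ) + n / 3)) : ℝ) : ℂ) * squarefreeSum ω (n + j) n -
        (((1 - (Fintype.card K : ℝ)⁻¹) * mainTerm K n : ℝ) : ℂ)‖ ≤
      C * (Fintype.card K : ℝ) ^ (-(j : ℝ) / 48) := by
  obtain ⟨C, hC0, hC⟩ := exists_norm_sum_twistedSum_tail_le hcard hω hω1 hψ
  have hq0 : (0 : ℝ) < Fintype.card K := card_pos_real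
  set T := ∑' s : Finset (MonicIrred K), normPow (-(3 / 2)) (primeProd s)
  have hT0 : 0 ≤ T := tsum_nonneg fun s ↦ (normPow_pos _ _).le
  refine ⟨T + C, by positivity, fun n j h3 ↦ ?_⟩
  have hR0 : 0 < (Fintype.card K : ℝ) ^ (-((n + j : ℝ) + n / 3)) := Real.rpow_pos_of_pos hq0 _
  rw [squarefreeSum_eq_sum_twistedSum, ← Finset.sum_filter_add_sum_filter_not _
    (fun s ↦ 2 * (primeProd s).natDegree ≤ j), primeSetsOfDegreeLE_filter_two_mul_le, mul_add,
    add_sub_right_comm, add_mul]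
  refine norm_add_le_of_le (norm_sum_twistedSum_sub_mainTerm_le hω hω1 n j) ?_
  rw [norm_mul, Complex.norm_real, Real.norm_of_nonneg hR0.le]
  refine (mul_le_mul_of_nonneg_left (hC n j h3) hR0.le).trans (le_of_eq ?_)
  rw [mul_left_comm, ← Real.rpow_add hq0]
  ring_nf

lemma Lval_residueSymbol_eq_sum (hω : ω ^ 3 = 1) (hω1 : ω ≠ 1) {F : K[X]} (hF : F.Monic)
    (h3 : ¬ 3 ∣ F.natDegree) (q : ℕ) (s : ℝ) :
    Lval q s (residueSymbol ω F) = ∑ n ∈ range F.natDegree,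
      (∑ f ∈ monicsOfDegree K n, residueSymbol ω F f) * ((q : ℝ) ^ (-s * (n : ℝ)) : ℝ) := by
  have hzero : ∑ x ∈ degreeLTFinset K F.natDegree, residueSymbol ω F x = 0 := by
    simpa using sum_residues_residueSymbol_mul_sq_eq_zero hω hω1 hF monic_one (by simpa using h3)
  simp only [Lval, sumMonic_eq_sum_monicsOfDegree]
  refine tsum_eq_sum fun n hn ↦ ?_
  rw [sum_monicsOfDegree_of_periodicMod hF (residueSymbol_periodicMod hF) (by simpa using hn),
    hzero, smul_zero, zero_mul]

lemma sumSqfree_Lval_eq_sum_squarefreeSum (hω : ω ^ 3 = 1) (hω1 : ω ≠ 1)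
    {chi : K[X] → K[X] → ℂ} (hchi : ∀ F : K[X], F.Monic → chi F = residueSymbol ω F) {N : ℕ}
    (h3 : ¬ 3 ∣ N) (q : ℕ) (s : ℝ) :
    sumSqfree N (fun F ↦ Lval q s (chi F)) =
      ∑ n ∈ range N, ((q : ℝ) ^ (-s * (n : ℝ)) : ℝ) * squarefreeSum ω N n := by
  have hL : ∀ F ∈ {F ∈ monicsOfDegree K N | Squarefree F}, Lval q s (chi F) = ∑ n ∈ range N,
      (∑ f ∈ monicsOfDegree K n, residueSymbol ω F f) * ((q : ℝ) ^ (-s * (n : ℝ)) : ℝ) := by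
    intro F hF
    obtain ⟨hm, rfl⟩ := mem_monicsOfDegree.1 (Finset.mem_filter.1 hF).1
    rw [hchi F hm, Lval_residueSymbol_eq_sum hω hω1 hm h3]
  rw [sumSqfree_eq_sum_monicsOfDegree, Finset.sum_congr rfl hL, Finset.sum_comm]
  refine Finset.sum_congr rfl fun n _ ↦ ?_
  rw [← Finset.sum_mul, mul_comm, squarefreeSum]

lemma sum_range_mainTerm (g : ℕ) :
    ∑ n ∈ range (3 * g + 1), mainTerm K n = ∑ l ∈ range (g + 1), meanEulerWeight K l := by
  induction g with
  | zero => simp [mainTerm]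
  | succ g ih =>
    rw [show 3 * (g + 1) + 1 = 3 * g + 1 + 1 + 1 + 1 by ring, sum_range_succ, sum_range_succ,
      sum_range_succ, ih, sum_range_succ _ (g + 1), mainTerm, mainTerm, mainTerm,
      if_neg (by omega), if_neg (by omega), if_pos (by omega), add_zero, add_zero,
      show (3 * g + 1 + 1 + 1) / 3 = g + 1 by omega]

lemma one_sub_inv_card_pos : 0 < 1 - (Fintype.card K : ℝ)⁻¹ :=
  sub_pos.2 (inv_lt_one_of_one_lt₀ one_lt_card_real)

lemma mean_Lval_one_third_sub_eq (hω : ω ^ 3 = 1) (hω1 : ω ≠ 1) {chi : K[X] → K[X] → ℂ}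
    (hchi : ∀ F : K[X], F.Monic → chi F = residueSymbol ω F) (g : ℕ) :
    ((Fintype.card K : ℂ) ^ (3 * g + 1) - (Fintype.card K : ℂ) ^ (3 * g))⁻¹ *
        sumSqfree (3 * g + 1) (fun F ↦ Lval (Fintype.card K) (1 / 3) (chi F)) -
      ((∑ l ∈ range (g + 1), meanEulerWeight K l : ℝ) : ℂ) =
    (((1 - (Fintype.card K : ℝ)⁻¹)⁻¹ : ℝ) : ℂ) * ∑ n ∈ range (3 * g + 1),
      ((((Fintype.card K : ℝ) ^ (-(((3 * g + 1 : ℕ) : ℝ) + n / 3)) : ℝ) : ℂ) *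
        squarefreeSum ω (3 * g + 1) n -
          (((1 - (Fintype.card K : ℝ)⁻¹) * mainTerm K n : ℝ) : ℂ)) := by
  have hq0 : (0 : ℝ) < Fintype.card K := card_pos_real
  set c : ℝ := 1 - (Fintype.card K : ℝ)⁻¹ with hc
  have hc0 : 0 < c := one_sub_inv_card_pos
  have hfamily : (Fintype.card K : ℂ) ^ (3 * g + 1) - (Fintype.card K : ℂ) ^ (3 * g) =
      ((c * (Fintype.card K : ℝ) ^ (3 * g + 1) : ℝ) : ℂ) := by
    rw [show c * (Fintype.card K : ℝ) ^ (3 * g + 1) =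
      (Fintype.card K : ℝ) ^ (3 * g + 1) - (Fintype.card K : ℝ) ^ (3 * g) by
        rw [hc, pow_succ]; field_simp]
    push_cast
    rfl
  have hmain : ((∑ l ∈ range (g + 1), meanEulerWeight K l : ℝ) : ℂ) =
      ((c⁻¹ : ℝ) : ℂ) * ∑ n ∈ range (3 * g + 1), ((c * mainTerm K n : ℝ) : ℂ) := by
    rw [← Complex.ofReal_sum, ← Complex.ofReal_mul, ← Finset.mul_sum,
      inv_mul_cancel_left₀ hc0.ne', sum_range_mainTerm]
  rw [hmain, sumSqfree_Lval_eq_sum_squarefreeSum hω hω1 hchi (by omega), hfamily,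
    Finset.sum_sub_distrib, mul_sub]
  congr 1
  rw [Finset.mul_sum, Finset.mul_sum]
  refine Finset.sum_congr rfl fun n _ ↦ ?_
  have hexp : (c * (Fintype.card K : ℝ) ^ (3 * g + 1))⁻¹ *
      (Fintype.card K : ℝ) ^ (-(1 / 3) * (n : ℝ)) =
      c⁻¹ * (Fintype.card K : ℝ) ^ (-(((3 * g + 1 : ℕ) : ℝ) + n / 3)) := by
    rw [mul_inv, mul_assoc, ← Real.rpow_natCast, ← Real.rpow_neg hq0.le, ← Real.rpow_add hq0]
    ring_nf
  rw [← mul_assoc, ← mul_assoc, ← Complex.ofReal_inv, ← Complex.ofReal_mul, ← Complex.ofReal_mul,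
    hexp]

lemma exists_norm_mean_Lval_one_third_sub_le (hcard : 4 ≤ Fintype.card K) (hω : ω ^ 3 = 1)
    (hω1 : ω ≠ 1) {chi : K[X] → K[X] → ℂ}
    (hchi : ∀ F : K[X], F.Monic → chi F = residueSymbol ω F) : ∃ C : ℝ, ∀ g : ℕ,
      ‖((Fintype.card K : ℂ) ^ (3 * g + 1) - (Fintype.card K : ℂ) ^ (3 * g))⁻¹ *
        sumSqfree (3 * g + 1) (fun F ↦ Lval (Fintype.card K) (1 / 3) (chi F)) -
          ((∑ l ∈ range (g + 1), meanEulerWeight K l : ℝ) : ℂ)‖ ≤ C := by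
  obtain ⟨ψ, hψ⟩ := AddChar.exists_apply_ne_zero.2 (one_ne_zero (α := K))
  obtain ⟨C, hC0, hC⟩ := exists_norm_squarefreeSum_sub_mainTerm_le hcard hω hω1
    (AddChar.ne_one_iff.2 ⟨1, hψ⟩)
  set r := (Fintype.card K : ℝ) ^ (-(1 : ℝ) / 48) with hr
  have hr0 : 0 ≤ r := (Real.rpow_pos_of_pos card_pos_real _).le
  have hr1 : r < 1 := Real.rpow_lt_one_of_one_lt_of_neg one_lt_card_real (by norm_num)
  have hc0 : 0 < 1 - (Fintype.card K : ℝ)⁻¹ := one_sub_inv_card_pos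
  refine ⟨(1 - (Fintype.card K : ℝ)⁻¹)⁻¹ * (C * (1 - r)⁻¹), fun g ↦ ?_⟩
  have hterm : ∀ n ∈ range (3 * g + 1),
      ‖(((Fintype.card K : ℝ) ^ (-(((3 * g + 1 : ℕ) : ℝ) + n / 3)) : ℝ) : ℂ) *
        squarefreeSum ω (3 * g + 1) n - (((1 - (Fintype.card K : ℝ)⁻¹) * mainTerm K n : ℝ) : ℂ)‖ ≤
          C * r ^ (3 * g + 1 - 1 - n) := by
    intro n hn
    obtain ⟨j, hj⟩ := Nat.exists_eq_add_of_le (Finset.mem_range.1 hn).le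
    have hbound := hC n j (by omega)
    rw [← Nat.cast_add, ← hj] at hbound
    refine hbound.trans (mul_le_mul_of_nonneg_left ?_ hC0.le)
    rw [hr, ← Real.rpow_natCast, ← Real.rpow_mul card_pos_real.le]
    refine Real.rpow_le_rpow_of_exponent_le one_lt_card_real.le ?_
    have hle : ((3 * g + 1 - 1 - n : ℕ) : ℝ) ≤ j := by exact_mod_cast (by omega)
    linarith
  rw [mean_Lval_one_third_sub_eq hω hω1 hchi, norm_mul, Complex.norm_real,
    Real.norm_of_nonneg (inv_pos.2 hc0).le]
  refine mul_le_mul_of_nonneg_left ?_ (inv_pos.2 hc0).le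
  refine (norm_sum_le_of_le _ hterm).trans ?_
  rw [← Finset.mul_sum, sum_range_reflect (fun i ↦ r ^ i), ← tsum_geometric_of_lt_one hr0 hr1]
  refine mul_le_mul_of_nonneg_left ?_ hC0.le
  exact (summable_geometric_of_lt_one hr0 hr1).sum_le_tsum _ fun i _ ↦ pow_nonneg hr0 i

lemma const_isLittleO_natCast {E : Type*} [NormedAddCommGroup E] (c : E) :
    (fun _ : ℕ ↦ c) =o[atTop] fun g : ℕ ↦ (g : ℝ) :=
  Asymptotics.isLittleO_const_left.2
    (Or.inr (tendsto_norm_atTop_atTop.comp tendsto_natCast_atTop_atTop))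

lemma sum_meanEulerWeight_sub_isLittleO :
    (fun g : ℕ ↦ ∑ l ∈ range (g + 1), meanEulerWeight K l - Cq (Fintype.card K) K * g)
      =o[atTop] fun g : ℕ ↦ (g : ℝ) := by
  have htendsto : Tendsto (fun l ↦ meanEulerWeight K l - Cq (Fintype.card K) K) atTop (nhds 0) := by
    simpa using (tendsto_meanEulerWeight (K := K)).sub_const (Cq (Fintype.card K) K)
  have hlast : meanEulerWeight K =o[atTop] fun g : ℕ ↦ (g : ℝ) :=
    (tendsto_meanEulerWeight.isBigO_one ℝ).trans_isLittleO (const_isLittleO_natCast _)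
  refine ((Asymptotics.isLittleO_sum_range_of_tendsto_zero htendsto).add hlast).congr_left
    fun g ↦ ?_
  rw [Finset.sum_sub_distrib, sum_const, card_range, nsmul_eq_mul, sum_range_succ]
  ring
end

theorem expected_value_cubic_L_at_one_third_asymptotic_general
    (q : ℕ) (Fq : Type) [Field Fq] [Fintype Fq] (hcard : Fintype.card Fq = q)
    (Ω : Fq → ℂ) (chi : Polynomial Fq → Polynomial Fq → ℂ)
    (hchi : IsCubicSymbol q Ω chi) :
    Asymptotics.IsEquivalent Filter.atTop
      (fun g : ℕ ↦
        ((q : ℂ) ^ (3 * g + 1) - (q : ℂ) ^ (3 * g))⁻¹ *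
          sumSqfree (3 * g + 1) (fun F ↦ Lval q (1 / 3) (chi F)))
      (fun g : ℕ ↦ ((Cq q Fq * (g : ℝ) : ℝ) : ℂ)) := by
  subst hcard
  obtain ⟨C, hC⟩ := exists_norm_mean_Lval_one_third_sub_le hchi.four_le_card
    hchi.mulChar_pow_three hchi.mulChar_ne_one fun F hF ↦ funext (hchi.chi_eq_residueSymbol hF)
  have hbounded := (Asymptotics.isBigO_of_le' (g := fun _ ↦ (1 : ℝ)) (c := C) atTop fun g ↦ by
    simpa only [norm_one, mul_one] using hC g).trans_isLittleO (const_isLittleO_natCast 1)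
  have hmain := Complex.isLittleO_ofReal_left.2 (sum_meanEulerWeight_sub_isLittleO (K := Fq))
  have hdiff := (hbounded.add hmain).trans_isBigO (Complex.isBigO_ofReal_right.2
    (Asymptotics.isBigO_self_const_mul (Cq_ne_zero (K := Fq)) _ _))
  refine hdiff.congr_left fun g ↦ ?_
  rw [Pi.sub_apply, Complex.ofReal_sub]
  ring

/-- **Corollary 1.2 (second part).** For fixed `q ≡ 1 (mod 6)` a prime power, the expected
value of `L(1/3,χ)` over the family `𝔥(3g)` is asymptotic to `C_q · g` as `g → ∞`. -/
theorem expected_value_cubic_L_at_one_third_asymptotic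
    (q : ℕ) (Fq : Type) [Field Fq] [Fintype Fq]
    (hq : IsPrimePow q) (hq6 : q % 6 = 1) (hcard : Fintype.card Fq = q)
    (Ω : Fq → ℂ) (chi : Polynomial Fq → Polynomial Fq → ℂ)
    (hchi : IsCubicSymbol q Ω chi) :
    Asymptotics.IsEquivalent Filter.atTop
      (fun g : ℕ =>
        ((q : ℂ) ^ (3 * g + 1) - (q : ℂ) ^ (3 * g))⁻¹ *
          sumSqfree (3 * g + 1) (fun F => Lval q (1 / 3) (chi F)))
      (fun g : ℕ => ((Cq q Fq * (g : ℝ) : ℝ) : ℂ)) :=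
  expected_value_cubic_L_at_one_third_asymptotic_general q Fq hcard Ω chi hchi
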